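/- arXiv:1508.04521 — 4 statements merged into one kernel-verified Lean document; each statement's English description precedes it below -/
import Mathlib

section
/- For every exponent k ≥ 1 there exist a constant c₁ > 0 and N ∈ ℕ such that for all n ≥ N divisible by 12, for every M ≤ n^k and every sequence of inverse temperatures 0 ≤ β₀ ≤ β₁ ≤ … ≤ β_M = 4·ln 2/n, the simulated tempering chain for the 3-state mean-field Potts model on n vertices with the distributions π_{β₀},…,π_{β_M} has mixing time τ(ε) ≥ e^{c₁ n}·ln(1/ε) for every ε ∈ (0, 1/4). -/
/-!
Why the tempering chain is torpid. At the critical inverse temperature `4 ln 2 / n` two phases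
coexist: the disordered one with colour proportions `(1/3, 1/3, 1/3)` and the ordered ones with
proportions `(2/3, 1/6, 1/6)`. Up to polynomial factors a class of colourings with given
proportions has weight `exp (n F)`, where `F` is entropy plus interaction energy, and `F` attains
its maximum in both phases. Configurations where one colour occupies exactly half of the vertices
have strictly smaller `F`: their total weight is smaller by a factor `(2^27 / 108^4)^(n/12)`, up to
polynomials (`F_le`, `F_half`, `sum_W_le`, `sum_W_half_le`, `disordered_lower`, `ordered_lower`).

Let `A` be the set of states, over all levels, with at least `n / 2` vertices of colour `0`. The
chain leaves `A` only from states with exactly `n / 2` such vertices (`flow_le`). These are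
exponentially unlikely at *every* level: relative to the disordered class, which minimises the
Hamiltonian, their weight increases with the inverse temperature, so the estimate at the critical
level carries over to all smaller inverse temperatures (`bottleneck`). On the other hand the coldest
level alone gives `A` (through the ordered class) and its complement (through the disordered class)
inverse polynomial stationary mass, because there are only polynomially many levels
(`st_mass_lower`).

A reversible chain with such a bottleneck mixes slowly (`mixing_lower`): the centred indicator of
`A` has autocorrelations that are log-convex in time, hence decay at most geometrically with the
rate given by the bottleneck ratio, while mixing to accuracy `ε` forces decay. Since the mixing time
is an infimum of a set of naturals, which would be `0` for the empty set, convergence of the chain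
is also needed; it follows from irreducibility and a positive diagonal.
-/

open Finset

noncomputable section

/-- The mixing time of a Markov chain with transition matrix `P` and target
distribution `π`: the least `t` such that for all `t' ≥ t` the total variation
distance of the `t'`-step distribution from `π` is at most `ε`, from every start. -/
noncomputable def mixingTime {S : Type} [Fintype S] [DecidableEq S]
    (P : Matrix S S ℝ) (π : S → ℝ) (ε : ℝ) : ℕ :=
  sInf {t : ℕ | ∀ t' : ℕ, t ≤ t' → ∀ x : S,
    (1/2) * ∑ y : S, |(P ^ t') x y - π y| ≤ ε}

/-- The Metropolis chain with proposal kernel `Q` and target distribution `π`. -/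
noncomputable def metropolis {S : Type} [Fintype S] [DecidableEq S]
    (Q : S → S → ℝ) (π : S → ℝ) : Matrix S S ℝ :=
  Matrix.of fun x y =>
    if y = x then 1 - ∑ z ∈ Finset.univ.erase x, Q x z * min 1 (π z / π x)
    else Q x y * min 1 (π y / π x)

/-- Off-diagonal transition rates of the simulated tempering chain. -/
noncomputable def temperingOff {S : Type} [Fintype S] [DecidableEq S] {M : ℕ}
    (Mk : Fin (M+1) → Matrix S S ℝ) (π : Fin (M+1) → S → ℝ)
    (p q : S × Fin (M+1)) : ℝ :=
  (if q.2 = p.2 then (1/2) * Mk p.2 p.1 q.1 else 0) +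
  (if q.1 = p.1 ∧ ((q.2 : ℕ) = (p.2 : ℕ) + 1 ∨ (q.2 : ℕ) + 1 = (p.2 : ℕ)) then
    (1/4) * min 1 (π q.2 p.1 / π p.2 p.1) else 0)

/-- The simulated tempering chain built from level Metropolis kernels `Mk` and
the tempering distributions `π`. -/
noncomputable def temperingChain {S : Type} [Fintype S] [DecidableEq S] {M : ℕ}
    (Mk : Fin (M+1) → Matrix S S ℝ) (π : Fin (M+1) → S → ℝ) :
    Matrix (S × Fin (M+1)) (S × Fin (M+1)) ℝ :=
  Matrix.of fun p q =>
    if q = p then 1 - ∑ r ∈ Finset.univ.erase p, temperingOff Mk π p r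
    else temperingOff Mk π p q

/-- Conductance of a chain `(P, π)`. -/
noncomputable def conductance {S : Type} [Fintype S] [DecidableEq S]
    (P : Matrix S S ℝ) (π : S → ℝ) : ℝ :=
  sInf {r : ℝ | ∃ A : Finset S, 0 < ∑ x ∈ A, π x ∧ (∑ x ∈ A, π x) ≤ 1/2 ∧
    r = (∑ x ∈ A, ∑ y ∈ Aᶜ, π x * P x y) / ∑ x ∈ A, π x}

/-- Potts Hamiltonian. -/
def pottsH (n : ℕ) (x : Fin n → Fin 3) : ℕ :=
  (Finset.univ.filter (fun p : Fin n × Fin n => p.1 < p.2 ∧ x p.1 = x p.2)).card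

/-- Gibbs distribution of the mean-field 3-state Potts model. -/
noncomputable def pottsGibbs (n : ℕ) (β : ℝ) (x : Fin n → Fin 3) : ℝ :=
  Real.exp (β * pottsH n x) / ∑ y : Fin n → Fin 3, Real.exp (β * pottsH n y)

/-- Proposal: recolor a uniformly random vertex with a uniformly random color. -/
noncomputable def pottsProp (n : ℕ) (x y : Fin n → Fin 3) : ℝ :=
  ((Finset.univ.filter
    (fun vc : Fin n × Fin 3 => Function.update x vc.1 vc.2 = y)).card : ℝ) / (n * 3)

end

namespace PottsTorpid

/-! ### Finite reversible chains: convergence and the bottleneck bound -/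

section Chain

set_option linter.unusedSectionVars false

variable {S : Type} [Fintype S] [DecidableEq S] {P : Matrix S S ℝ} {π : S → ℝ}

lemma matpow_nonneg (hP : ∀ x y, 0 ≤ P x y) (t : ℕ) (x y : S) : 0 ≤ (P ^ t) x y := by
  induction t generalizing x y with
  | zero =>
    rw [pow_zero, Matrix.one_apply]
    split_ifs <;> norm_num
  | succ t ih =>
    rw [pow_succ, Matrix.mul_apply]
    exact Finset.sum_nonneg fun z _ => mul_nonneg (ih x z) (hP z y)

lemma matpow_rowsum (h1 : ∀ x, ∑ y, P x y = 1) (t : ℕ) (x : S) : ∑ y, (P ^ t) x y = 1 := by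
  induction t generalizing x with
  | zero => simp [Matrix.one_apply]
  | succ t ih =>
    simp_rw [pow_succ, Matrix.mul_apply]
    rw [Finset.sum_comm]
    simp_rw [← Finset.mul_sum, h1, mul_one, ih]

lemma matpow_reversible (hr : ∀ x y, π x * P x y = π y * P y x) (t : ℕ) (x y : S) :
    π x * (P ^ t) x y = π y * (P ^ t) y x := by
  induction t generalizing x y with
  | zero =>
    simp only [pow_zero, Matrix.one_apply]
    by_cases h : x = y
    · simp [h]
    · simp [h, Ne.symm h]
  | succ t ih =>
    have e : (P ^ (t + 1)) y x = ∑ z, P y z * (P ^ t) z x := by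
      rw [pow_succ', Matrix.mul_apply]
    rw [e, pow_succ, Matrix.mul_apply, Finset.mul_sum, Finset.mul_sum]
    refine Finset.sum_congr rfl fun z _ => ?_
    rw [← mul_assoc, ih, mul_right_comm, hr]
    ring

lemma matpow_stationary (h1 : ∀ x, ∑ y, P x y = 1) (hr : ∀ x y, π x * P x y = π y * P y x)
    (t : ℕ) (y : S) : ∑ x, π x * (P ^ t) x y = π y := by
  simp_rw [matpow_reversible hr t _ y, ← Finset.mul_sum, matpow_rowsum h1, mul_one]

/-- With nonnegative entries and positive diagonal, positivity of an entry persists in all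
higher powers. -/
lemma matpow_pos_mono (hP : ∀ x y, 0 ≤ P x y) (hd : ∀ x, 0 < P x x) {s t : ℕ} (hst : s ≤ t)
    {x y : S} (h : 0 < (P ^ s) x y) : 0 < (P ^ t) x y := by
  induction t, hst using Nat.le_induction with
  | base => exact h
  | succ t _ ih =>
    rw [pow_succ, Matrix.mul_apply]
    exact Finset.sum_pos' (fun z _ => mul_nonneg (matpow_nonneg hP t x z) (hP z y))
      ⟨y, Finset.mem_univ y, mul_pos ih (hd y)⟩

lemma exists_matpow_pos (hP : ∀ x y, 0 ≤ P x y) (hd : ∀ x, 0 < P x x)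
    (hirr : ∀ x y, Relation.ReflTransGen (fun a b => 0 < P a b) x y) :
    ∃ t : ℕ, ∀ x y, 0 < (P ^ t) x y := by
  have h : ∀ p : S × S, ∃ t : ℕ, 0 < (P ^ t) p.1 p.2 := by
    rintro ⟨x, y⟩
    induction hirr x y with
    | refl => exact ⟨0, by simp⟩
    | @tail b c _ hbc ih =>
      obtain ⟨t, ht⟩ := ih
      refine ⟨t + 1, ?_⟩
      rw [pow_succ, Matrix.mul_apply]
      exact Finset.sum_pos' (fun z _ => mul_nonneg (matpow_nonneg hP t x z) (hP z c))
        ⟨b, Finset.mem_univ b, mul_pos ht hbc⟩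
  choose T hT using h
  exact ⟨Finset.univ.sup T, fun x y =>
    matpow_pos_mono hP hd (Finset.le_sup (Finset.mem_univ (x, y))) (hT (x, y))⟩

/-- Doeblin contraction: if the stochastic matrix `K` dominates `δ π` in every row, it shrinks
the `ℓ¹` norm of mean-zero row vectors by the factor `1 - δ`. -/
lemma doeblin {K : Matrix S S ℝ} (h1 : ∀ x, ∑ y, K x y = 1) (hs : ∑ x, π x = 1) {δ : ℝ}
    (hδ : ∀ x y, δ * π y ≤ K x y) (v : S → ℝ) (hv : ∑ x, v x = 0) :
    ∑ y, |∑ x, v x * K x y| ≤ (1 - δ) * ∑ x, |v x| := by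
  have e : ∀ y, ∑ x, v x * K x y = ∑ x, v x * (K x y - δ * π y) := by
    intro y
    simp_rw [mul_sub, Finset.sum_sub_distrib, ← Finset.sum_mul, hv]
    ring
  calc ∑ y, |∑ x, v x * K x y| ≤ ∑ y, ∑ x, |v x| * (K x y - δ * π y) := by
        refine Finset.sum_le_sum fun y _ => ?_
        rw [e]
        refine (Finset.abs_sum_le_sum_abs _ _).trans (Finset.sum_le_sum fun x _ => ?_)
        rw [abs_mul, abs_of_nonneg (sub_nonneg.2 (hδ x y))]
    _ = (1 - δ) * ∑ x, |v x| := by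
        rw [Finset.sum_comm, Finset.mul_sum]
        refine Finset.sum_congr rfl fun x _ => ?_
        rw [← Finset.mul_sum, Finset.sum_sub_distrib, ← Finset.mul_sum, h1, hs]
        ring

/-- Convergence theorem for ergodic reversible chains: the set whose infimum is the mixing
time is nonempty. -/
lemma mixing_set_nonempty (hπ : ∀ x, 0 < π x) (hs : ∑ x, π x = 1) (hP : ∀ x y, 0 ≤ P x y)
    (h1 : ∀ x, ∑ y, P x y = 1) (hr : ∀ x y, π x * P x y = π y * P y x) (hd : ∀ x, 0 < P x x)
    (hirr : ∀ x y, Relation.ReflTransGen (fun a b => 0 < P a b) x y) {ε : ℝ} (hε : 0 < ε) :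
    {t : ℕ | ∀ t' : ℕ, t ≤ t' → ∀ x : S,
      (1/2) * ∑ y : S, |(P ^ t') x y - π y| ≤ ε}.Nonempty := by
  obtain ⟨T, hT⟩ := exists_matpow_pos hP hd hirr
  have hle1 : ∀ y, π y ≤ 1 := fun y => hs ▸
    Finset.single_le_sum (fun x _ => (hπ x).le) (Finset.mem_univ y)
  -- a uniform Doeblin constant for `P ^ T`
  obtain ⟨δ, hδ0, hδ1, hδ⟩ : ∃ δ : ℝ, 0 < δ ∧ δ ≤ 1 ∧ ∀ x y, δ * π y ≤ (P ^ T) x y := by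
    obtain ⟨δ, hδ0, hδ⟩ : ∃ δ : ℝ, 0 < δ ∧ ∀ p : S × S, δ ≤ (P ^ T) p.1 p.2 := by
      by_cases hne : Nonempty (S × S)
      · obtain ⟨p, hp⟩ := Finite.exists_min (fun p : S × S => (P ^ T) p.1 p.2)
        exact ⟨_, hT p.1 p.2, hp⟩
      · exact ⟨1, one_pos, fun p => (hne ⟨p⟩).elim⟩
    refine ⟨min δ 1, lt_min hδ0 one_pos, min_le_right _ _, fun x y => ?_⟩
    calc min δ 1 * π y ≤ δ * 1 :=
          mul_le_mul (min_le_left _ _) (hle1 y) (hπ y).le hδ0.le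
      _ ≤ _ := by simpa using hδ (x, y)
  set D : S → ℕ → ℝ := fun x t => ∑ y, |(P ^ t) x y - π y| with hD
  have step : ∀ x t s, ∀ y, (P ^ (t + s)) x y - π y
      = ∑ z, ((P ^ t) x z - π z) * (P ^ s) z y := by
    intro x t s y
    simp_rw [sub_mul, Finset.sum_sub_distrib]
    rw [matpow_stationary h1 hr, pow_add, Matrix.mul_apply]
  have zero : ∀ x t, ∑ z, ((P ^ t) x z - π z) = 0 := by
    intro x t
    rw [Finset.sum_sub_distrib, matpow_rowsum h1, hs, sub_self]
  have mono : ∀ x t s, D x (t + s) ≤ D x t := by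
    intro x t s
    have := doeblin (K := P ^ s) (matpow_rowsum h1 s) hs (δ := 0)
      (fun x y => by simpa using matpow_nonneg hP s x y) _ (zero x t)
    simpa only [hD, step, sub_zero, one_mul] using this
  have contr : ∀ x t, D x (t + T) ≤ (1 - δ) * D x t := by
    intro x t
    have := doeblin (K := P ^ T) (matpow_rowsum h1 T) hs hδ _ (zero x t)
    simpa only [hD, step] using this
  have D0 : ∀ x, D x 0 ≤ 2 := by
    intro x
    calc D x 0 ≤ ∑ y, ((P ^ 0) x y + π y) := by
          refine Finset.sum_le_sum fun y _ => ?_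
          have := matpow_nonneg hP 0 x y
          rw [abs_le]
          constructor <;> linarith [hπ y]
      _ = 2 := by
          rw [Finset.sum_add_distrib, matpow_rowsum h1, hs]
          norm_num
  have geo : ∀ x j, D x (T * j) ≤ 2 * (1 - δ) ^ j := by
    intro x j
    induction j with
    | zero => simpa using D0 x
    | succ j ih =>
      rw [Nat.mul_succ, pow_succ]
      calc _ ≤ (1 - δ) * D x (T * j) := contr x _
        _ ≤ (1 - δ) * (2 * (1 - δ) ^ j) := by
          exact mul_le_mul_of_nonneg_left ih (by linarith)
        _ = _ := by ring
  obtain ⟨j, hj⟩ := exists_pow_lt_of_lt_one hε (show 1 - δ < 1 by linarith)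
  refine ⟨T * j, fun t' ht' x => ?_⟩
  obtain ⟨s, rfl⟩ := Nat.exists_eq_add_of_le ht'
  have := (mono x (T * j) s).trans (geo x j)
  change 1 / 2 * D x (T * j + s) ≤ ε
  linarith

/-- The weighted inner product `⟨u, v⟩_π`. -/
def ip (π : S → ℝ) (u v : S → ℝ) : ℝ := ∑ x, π x * (u x * v x)

lemma ip_selfadjoint (hr : ∀ x y, π x * P x y = π y * P y x) (u v : S → ℝ) :
    ip π (P.mulVec u) v = ip π u (P.mulVec v) := by
  simp only [ip, Matrix.mulVec, dotProduct, Finset.sum_mul, Finset.mul_sum]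
  rw [Finset.sum_comm]
  refine Finset.sum_congr rfl fun x _ => Finset.sum_congr rfl fun y _ => ?_
  linear_combination (u x * v y) * hr y x

lemma ip_cauchy (hπ : ∀ x, 0 < π x) (u v : S → ℝ) :
    ip π u v ^ 2 ≤ ip π u u * ip π v v := by
  refine Finset.sum_sq_le_sum_mul_sum_of_sq_le_mul _ (fun x _ => ?_) (fun x _ => ?_)
    (fun x _ => ?_)
  · exact mul_nonneg (hπ x).le (mul_self_nonneg _)
  · exact mul_nonneg (hπ x).le (mul_self_nonneg _)
  · exact le_of_eq (by ring)

lemma ip_self_nonneg (hπ : ∀ x, 0 < π x) (u : S → ℝ) : 0 ≤ ip π u u :=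
  Finset.sum_nonneg fun x _ => mul_nonneg (hπ x).le (mul_self_nonneg _)

lemma ip_pow_pow (hr : ∀ x y, π x * P x y = π y * P y x) (f : S → ℝ) (t : ℕ) :
    ∀ s : ℕ, ip π ((P ^ t).mulVec f) ((P ^ s).mulVec f) = ip π f ((P ^ (t + s)).mulVec f) := by
  induction t with
  | zero => intro s; simp
  | succ t ih =>
    intro s
    have e1 : (P ^ (t + 1)).mulVec f = P.mulVec ((P ^ t).mulVec f) := by
      rw [Matrix.mulVec_mulVec, pow_succ']
    rw [e1, ip_selfadjoint hr, Matrix.mulVec_mulVec, ← pow_succ', ih]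
    congr 3
    omega

/-- Log-convexity of `t ↦ ‖P ^ t f‖²` for a reversible chain: the decay is never faster than
the first step allows. -/
lemma pow_lower (hπ : ∀ x, 0 < π x) (hr : ∀ x y, π x * P x y = π y * P y x) (f : S → ℝ)
    {r : ℝ} (hr0 : 0 ≤ r) (hf : 0 < ip π f f) (h : r * ip π f f ≤ ip π f (P.mulVec f)) (t : ℕ) :
    r ^ (2 * t) * ip π f f ≤ ip π f ((P ^ (2 * t)).mulVec f) := by
  set a : ℕ → ℝ := fun t => ip π ((P ^ t).mulVec f) ((P ^ t).mulVec f) with ha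
  have ha0 : a 0 = ip π f f := by simp [ha]
  have hnn : ∀ t, 0 ≤ a t := fun t => ip_self_nonneg hπ _
  have hcs : ∀ t, a (t + 1) ^ 2 ≤ a t * a (t + 2) := by
    intro t
    have := ip_cauchy hπ ((P ^ t).mulVec f) ((P ^ (t + 2)).mulVec f)
    rw [ip_pow_pow hr] at this
    have e : a (t + 1) = ip π f ((P ^ (t + (t + 2))).mulVec f) := by
      rw [ha]
      simp only
      rw [ip_pow_pow hr]
      congr 3
      omega
    rw [e]
    exact this
  have hstep : ∀ t, r ^ 2 * a t ≤ a (t + 1) := by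
    intro t
    induction t with
    | zero =>
      have h2 := ip_cauchy hπ f (P.mulVec f)
      have e1 : a (0 + 1) = ip π (P.mulVec f) (P.mulVec f) := by simp [ha]
      rw [e1, ha0]
      have h3 : (r * ip π f f) ^ 2 ≤ ip π f (P.mulVec f) ^ 2 :=
        pow_le_pow_left₀ (mul_nonneg hr0 hf.le) h 2
      have h4 : ip π f f * (r ^ 2 * ip π f f) ≤ ip π f f * ip π (P.mulVec f) (P.mulVec f) := by
        nlinarith
      exact le_of_mul_le_mul_left h4 hf
    | succ t ih =>
      rcases (hnn (t + 1)).eq_or_lt with h0 | hpos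
      · rw [← h0]
        simpa using hnn _
      · have h4 : a (t + 1) * (r ^ 2 * a (t + 1)) ≤ a (t + 1) * a (t + 1 + 1) := by
          calc a (t + 1) * (r ^ 2 * a (t + 1)) = r ^ 2 * a (t + 1) ^ 2 := by ring
            _ ≤ r ^ 2 * (a t * a (t + 2)) := by gcongr; exact hcs t
            _ = (r ^ 2 * a t) * a (t + 2) := by ring
            _ ≤ _ := mul_le_mul_of_nonneg_right ih (hnn _)
        exact le_of_mul_le_mul_left h4 hpos
  have hall : ∀ t, r ^ (2 * t) * a 0 ≤ a t := by
    intro t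
    induction t with
    | zero => simp
    | succ t ih =>
      calc r ^ (2 * (t + 1)) * a 0 = r ^ 2 * (r ^ (2 * t) * a 0) := by ring
        _ ≤ r ^ 2 * a t := by gcongr
        _ ≤ _ := hstep t
  have := hall t
  rw [ha0] at this
  refine this.trans (le_of_eq ?_)
  rw [ha]
  simp only
  rw [ip_pow_pow hr, two_mul]

/-- Bottleneck bound: if the ergodic flow out of `A` is at most `κ π(A) π(Aᶜ)` with `κ ≤ 1/2`,
then the mixing time is at least `log (1/ε) / (8 κ)`. -/
lemma mixing_lower (hπ : ∀ x, 0 < π x) (hs : ∑ x, π x = 1) (hP : ∀ x y, 0 ≤ P x y)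
    (h1 : ∀ x, ∑ y, P x y = 1) (hr : ∀ x y, π x * P x y = π y * P y x) (hd : ∀ x, 0 < P x x)
    (hirr : ∀ x y, Relation.ReflTransGen (fun a b => 0 < P a b) x y)
    (A : Finset S) (hA : 0 < ∑ x ∈ A, π x) (hAc : 0 < ∑ x ∈ Aᶜ, π x) {κ : ℝ} (hκ : κ ≤ 1 / 2)
    (hQ : ∑ x ∈ A, ∑ y ∈ Aᶜ, π x * P x y ≤ κ * ((∑ x ∈ A, π x) * ∑ x ∈ Aᶜ, π x))
    {ε : ℝ} (hε : 0 < ε) (hε4 : ε < 1 / 4) :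
    Real.log (1 / ε) ≤ 8 * κ * mixingTime P π ε := by
  have hmem := Nat.sInf_mem (mixing_set_nonempty hπ hs hP h1 hr hd hirr hε)
  change mixingTime P π ε ∈ _ at hmem
  set τ := mixingTime P π ε
  set m := ∑ x ∈ A, π x with hm
  have hmc : ∑ x ∈ Aᶜ, π x = 1 - m := by
    rw [← hs, ← Finset.sum_add_sum_compl A π]
    ring
  rw [hmc] at hAc hQ
  set ind : S → ℝ := fun x => if x ∈ A then 1 else 0 with hind
  set f : S → ℝ := fun x => ind x - m with hf
  have hsumind : ∑ x, π x * ind x = m := by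
    simp [hind, hm, Finset.sum_ite_mem]
  have hPf : ∀ t x, (P ^ t).mulVec f x = ∑ y ∈ A, (P ^ t) x y - m := by
    intro t x
    simp only [Matrix.mulVec, dotProduct, hf, mul_sub, Finset.sum_sub_distrib, ← Finset.sum_mul,
      matpow_rowsum h1, one_mul]
    simp [hind]
  have hff : ip π f f = m * (1 - m) := by
    have : ∀ x, π x * (f x * f x) = (1 - 2 * m) * (π x * ind x) + m ^ 2 * π x := by
      intro x
      simp only [hf, hind]
      split_ifs <;> ring
    simp only [ip, this]
    rw [Finset.sum_add_distrib, ← Finset.mul_sum, ← Finset.mul_sum, hsumind, hs]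
    ring
  have hpos : 0 < ip π f f := hff ▸ mul_pos hA hAc
  have hflow : ip π f (P.mulVec f) = m * (1 - m) - ∑ x ∈ A, ∑ y ∈ Aᶜ, π x * P x y := by
    have e1 : P.mulVec f = fun x => ∑ y ∈ A, P x y - m := by
      funext x
      simpa using hPf 1 x
    have e2 : ∀ x, π x * (f x * (∑ y ∈ A, P x y - m))
        = (π x * ind x) * (∑ y ∈ A, P x y) - m * (∑ y ∈ A, π x * P x y)
          - m * (π x * ind x) + m ^ 2 * π x := by
      intro x
      simp only [hf]
      rw [← Finset.mul_sum]
      ring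
    have e3 : ∑ x, (π x * ind x) * (∑ y ∈ A, P x y) = m - ∑ x ∈ A, ∑ y ∈ Aᶜ, π x * P x y := by
      have : ∀ x, (π x * ind x) * (∑ y ∈ A, P x y)
          = if x ∈ A then (π x - ∑ y ∈ Aᶜ, π x * P x y) else 0 := by
        intro x
        have h := Finset.sum_add_sum_compl A (P x)
        rw [h1] at h
        rw [← Finset.mul_sum]
        simp only [hind]
        split_ifs
        · linear_combination π x * h
        · ring
      simp only [this]
      rw [Finset.sum_ite_mem, Finset.univ_inter, Finset.sum_sub_distrib]
    have e4 : ∑ x, ∑ y ∈ A, π x * P x y = m := by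
      rw [Finset.sum_comm]
      have := matpow_stationary h1 hr 1
      simp only [pow_one] at this
      simp only [this, hm]
    simp only [ip, e1, e2]
    rw [Finset.sum_add_distrib, Finset.sum_sub_distrib, Finset.sum_sub_distrib, e3,
      ← Finset.mul_sum, ← Finset.mul_sum, ← Finset.mul_sum, e4, hsumind, hs]
    ring
  have hlow := pow_lower hπ hr f (r := 1 - κ) (by linarith) hpos
    (by rw [hff, hflow]; linarith) τ
  have hup : ip π f ((P ^ (2 * τ)).mulVec f) ≤ 2 * ε * ip π f f := by
    have hb : ∀ x, |(P ^ (2 * τ)).mulVec f x| ≤ ε := by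
      intro x
      have hx := hmem (2 * τ) (by omega) x
      rw [hPf]
      have e : ∑ y ∈ A, (P ^ (2 * τ)) x y - m = ∑ y ∈ A, ((P ^ (2 * τ)) x y - π y) := by
        rw [Finset.sum_sub_distrib]
      have z : ∑ y ∈ A, ((P ^ (2 * τ)) x y - π y) + ∑ y ∈ Aᶜ, ((P ^ (2 * τ)) x y - π y) = 0 := by
        rw [Finset.sum_add_sum_compl, Finset.sum_sub_distrib, matpow_rowsum h1, hs, sub_self]
      have t1 := Finset.abs_sum_le_sum_abs (fun y => (P ^ (2 * τ)) x y - π y) A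
      have t2 := Finset.abs_sum_le_sum_abs (fun y => (P ^ (2 * τ)) x y - π y) Aᶜ
      rw [← Finset.sum_add_sum_compl A] at hx
      rw [← eq_neg_iff_add_eq_zero] at z
      rw [e]
      have t3 : |∑ y ∈ A, ((P ^ (2 * τ)) x y - π y)| = |∑ y ∈ Aᶜ, ((P ^ (2 * τ)) x y - π y)| := by
        rw [z, abs_neg]
      linarith
    have habs : ∑ x, π x * |f x| = 2 * (m * (1 - m)) := by
      have : ∀ x, π x * |f x| = (1 - 2 * m) * (π x * ind x) + m * π x := by
        intro x
        simp only [hf, hind]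
        split_ifs
        · rw [abs_of_pos hAc]; ring
        · rw [zero_sub, abs_neg, abs_of_pos hA]; ring
      simp only [this]
      rw [Finset.sum_add_distrib, ← Finset.mul_sum, ← Finset.mul_sum, hsumind, hs]
      ring
    calc ip π f ((P ^ (2 * τ)).mulVec f) ≤ ∑ x, (π x * |f x|) * ε := by
          refine Finset.sum_le_sum fun x _ => ?_
          rw [mul_assoc]
          refine mul_le_mul_of_nonneg_left ?_ (hπ x).le
          refine (le_abs_self _).trans ?_
          rw [abs_mul]
          exact mul_le_mul_of_nonneg_left (hb x) (abs_nonneg _)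
      _ = 2 * ε * ip π f f := by
          rw [← Finset.sum_mul, habs, hff]
          ring
  have hkey : (1 - κ) ^ (2 * τ) ≤ 2 * ε := le_of_mul_le_mul_right (hlow.trans hup) hpos
  have hκ0 : 0 ≤ κ := by
    have : 0 ≤ ∑ x ∈ A, ∑ y ∈ Aᶜ, π x * P x y :=
      Finset.sum_nonneg fun x _ => Finset.sum_nonneg fun y _ => mul_nonneg (hπ x).le (hP x y)
    exact nonneg_of_mul_nonneg_left (this.trans hQ) (mul_pos hA hAc)
  have hlog := Real.log_le_log (pow_pos (by linarith) _) hkey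
  rw [Real.log_pow] at hlog
  have hlk : -(2 * κ) ≤ Real.log (1 - κ) := by
    refine le_trans ?_ (Real.one_sub_inv_le_log_of_pos (by linarith))
    have h1k : 0 < 1 - κ := by linarith
    have : 1 - (1 - κ)⁻¹ = -κ / (1 - κ) := by field_simp; ring
    rw [this, le_div_iff₀ h1k]
    nlinarith
  have hle : Real.log (2 * ε) = Real.log 2 + Real.log ε :=
    Real.log_mul two_ne_zero hε.ne'
  have hl4 : Real.log ε ≤ -(2 * Real.log 2) := by
    have := Real.log_le_log hε hε4.le
    rw [show (1 / 4 : ℝ) = (2 ^ 2)⁻¹ by norm_num, Real.log_inv, Real.log_pow] at this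
    exact_mod_cast this
  rw [one_div, Real.log_inv]
  push_cast at hlog
  have hτ : (0 : ℝ) ≤ τ := Nat.cast_nonneg τ
  have : -(4 * κ * τ) ≤ 2 * (τ : ℝ) * Real.log (1 - κ) := by nlinarith
  linarith

end Chain

/-! ### Entropy inequalities -/

section Entropy

open Real

/-- Twice the inverse hyperbolic tangent. -/
noncomputable def L (q : ℝ) : ℝ := log (1 + q) - log (1 - q)

lemma hasDerivAt_L {q : ℝ} (h0 : 0 ≤ q) (h1 : q < 1) :
    HasDerivAt L (1 / (1 + q) + 1 / (1 - q)) q := by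
  have e1 : HasDerivAt (fun q : ℝ => log (1 + q)) (1 / (1 + q)) q :=
    ((hasDerivAt_id' q).const_add 1).log (by linarith)
  have e2 : HasDerivAt (fun q : ℝ => log (1 - q)) (-1 / (1 - q)) q :=
    ((hasDerivAt_id' q).const_sub 1).log (by linarith)
  exact (e1.sub e2).congr_deriv (by ring)

lemma L_zero : L 0 = 0 := by simp [L]

lemma L_third : L (1 / 3) = log 2 := by
  rw [L, ← log_div (by norm_num) (by norm_num)]
  norm_num

lemma convexOn_L : ConvexOn ℝ (Set.Ico 0 1) L := by
  have hd : ∀ q ∈ Set.Ico (0 : ℝ) 1, HasDerivAt L (1 / (1 + q) + 1 / (1 - q)) q :=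
    fun q hq => hasDerivAt_L hq.1 hq.2
  refine MonotoneOn.convexOn_of_deriv (convex_Ico 0 1)
    (fun q hq => (hd q hq).continuousAt.continuousWithinAt) ?_ ?_
  · intro q hq
    exact (hd q (interior_subset hq)).differentiableAt.differentiableWithinAt
  · intro p hp q hq hpq
    rw [(hd p (interior_subset hp)).deriv, (hd q (interior_subset hq)).deriv]
    have hp' := interior_subset hp
    have hq' := interior_subset hq
    have e : ∀ x ∈ Set.Ico (0 : ℝ) 1, 1 / (1 + x) + 1 / (1 - x) = 2 / (1 - x ^ 2) := by
      intro x hx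
      have h1 : (1 : ℝ) + x ≠ 0 := by linarith [hx.1]
      have h2 : (1 : ℝ) - x ≠ 0 := by linarith [hx.2]
      have h3 : (1 : ℝ) - x ^ 2 ≠ 0 := by
        rw [show 1 - x ^ 2 = (1 + x) * (1 - x) by ring]
        exact mul_ne_zero h1 h2
      field_simp
      ring
    rw [e p hp', e q hq']
    have h3 : 0 < 1 - q ^ 2 := by nlinarith [hq'.1, hq'.2]
    refine div_le_div_of_nonneg_left (by norm_num) h3 ?_
    nlinarith [hp'.1]

lemma L_le {q : ℝ} (h0 : 0 ≤ q) (h1 : q ≤ 1 / 3) : L q ≤ 3 * log 2 * q := by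
  have := convexOn_L.2 (show (0 : ℝ) ∈ Set.Ico (0 : ℝ) 1 by norm_num)
    (show (1 / 3 : ℝ) ∈ Set.Ico (0 : ℝ) 1 by norm_num)
    (show 0 ≤ 1 - 3 * q by linarith) (show 0 ≤ 3 * q by linarith) (by ring)
  simp only [smul_eq_mul, L_zero, L_third] at this
  rw [show (1 - 3 * q) * 0 + 3 * q * (1 / 3) = q by ring] at this
  linarith

lemma le_L {q : ℝ} (h0 : 1 / 3 ≤ q) (h1 : q < 1) : 3 * log 2 * q ≤ L q := by
  have hq : 0 < q := by linarith
  have := convexOn_L.2 (show (0 : ℝ) ∈ Set.Ico (0 : ℝ) 1 by norm_num)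
    (show q ∈ Set.Ico (0 : ℝ) 1 from ⟨hq.le, h1⟩)
    (show 0 ≤ 1 - 1 / (3 * q) by rw [sub_nonneg, div_le_one (by linarith)]; linarith)
    (show 0 ≤ 1 / (3 * q) by positivity) (by ring)
  simp only [smul_eq_mul, L_zero] at this
  rw [show (1 - 1 / (3 * q)) * 0 + 1 / (3 * q) * q = 1 / 3 by field_simp; ring, L_third] at this
  have h2 := mul_le_mul_of_nonneg_left this (show (0 : ℝ) ≤ 3 * q by linarith)
  have h3 : 3 * q * ((1 - 1 / (3 * q)) * 0 + 1 / (3 * q) * L q) = L q := by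
    field_simp
    ring
  linarith

lemma two_mul_le_L {q : ℝ} (h0 : 0 ≤ q) (h1 : q < 1) : 2 * q ≤ L q := by
  have e1 := log_le_sub_one_of_pos (show 0 < 1 - q by linarith)
  have hm : MonotoneOn (fun q => L q - 2 * q) (Set.Ico 0 1) := by
    have hd : ∀ q ∈ Set.Ico (0 : ℝ) 1,
        HasDerivAt (fun q => L q - 2 * q) (1 / (1 + q) + 1 / (1 - q) - 2 * 1) q :=
      fun q hq => (hasDerivAt_L hq.1 hq.2).sub ((hasDerivAt_id' q).const_mul 2)
    refine monotoneOn_of_deriv_nonneg (convex_Ico 0 1)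
      (fun q hq => (hd q hq).continuousAt.continuousWithinAt)
      (fun q hq => (hd q (interior_subset hq)).differentiableAt.differentiableWithinAt) ?_
    intro q hq
    have hq' := interior_subset hq
    rw [(hd q hq').deriv]
    have h2 : 0 < 1 + q := by linarith [hq'.1]
    have h3 : 0 < 1 - q := by linarith [hq'.2]
    have : 1 / (1 + q) + 1 / (1 - q) - 2 * 1 = 2 * q ^ 2 / ((1 + q) * (1 - q)) := by
      field_simp
      ring
    rw [this]
    positivity
  have := hm (show (0 : ℝ) ∈ Set.Ico (0 : ℝ) 1 by norm_num) ⟨h0, h1⟩ h0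
  simp only [L_zero] at this
  linarith

/-- Entropy of a two-point distribution with bias `q`. -/
noncomputable def E (q : ℝ) : ℝ := negMulLog ((1 + q) / 2) + negMulLog ((1 - q) / 2)

lemma E_neg (q : ℝ) : E (-q) = E q := by
  simp only [E, sub_neg_eq_add, ← sub_eq_add_neg]
  ring

lemma E_abs (q : ℝ) : E |q| = E q := by
  rcases abs_choice q with h | h <;> rw [h]
  exact E_neg q

lemma continuous_E : Continuous E := by
  unfold E
  exact (continuous_negMulLog.comp (by fun_prop)).add (continuous_negMulLog.comp (by fun_prop))

lemma hasDerivAt_E {q : ℝ} (h0 : -1 < q) (h1 : q < 1) : HasDerivAt E (-(L q / 2)) q := by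
  have a1 : HasDerivAt (fun q : ℝ => (1 + q) / 2) (1 / 2) q :=
    ((hasDerivAt_id' q).const_add 1).div_const 2
  have a2 : HasDerivAt (fun q : ℝ => (1 - q) / 2) (-1 / 2) q :=
    ((hasDerivAt_id' q).const_sub 1).div_const 2
  have b1 := (hasDerivAt_negMulLog (x := (1 + q) / 2) (by linarith)).comp q a1
  have b2 := (hasDerivAt_negMulLog (x := (1 - q) / 2) (by linarith)).comp q a2
  refine (b1.add b2).congr_deriv ?_
  rw [log_div (by linarith) (by norm_num), log_div (by linarith) (by norm_num), L]
  ring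

lemma E_zero : E 0 = log 2 := by
  simp only [E, negMulLog]
  rw [show ((1 : ℝ) + 0) / 2 = 2⁻¹ by norm_num, show ((1 : ℝ) - 0) / 2 = 2⁻¹ by norm_num, log_inv]
  ring

lemma E_third : E (1 / 3) = log 3 - 2 / 3 * log 2 := by
  simp only [E, negMulLog]
  rw [show ((1 : ℝ) + 1 / 3) / 2 = 2 / 3 by norm_num,
    show ((1 : ℝ) - 1 / 3) / 2 = 3⁻¹ by norm_num, log_inv, log_div (by norm_num) (by norm_num)]
  ring

/-- The binary Pinsker inequality. -/
lemma E_pinsker {q : ℝ} (h : |q| ≤ 1) : E q ≤ log 2 - q ^ 2 / 2 := by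
  have hm : AntitoneOn (fun q => E q + q ^ 2 / 2) (Set.Icc 0 1) := by
    have hd : ∀ q ∈ Set.Ioo (0 : ℝ) 1,
        HasDerivAt (fun q => E q + q ^ 2 / 2) (-(L q / 2) + q) q := by
      intro q hq
      have := (hasDerivAt_E (by linarith [hq.1]) hq.2).add (((hasDerivAt_id' q).pow 2).div_const 2)
      exact this.congr_deriv (by norm_num)
    refine antitoneOn_of_deriv_nonpos (convex_Icc 0 1)
      (continuous_E.add (by fun_prop)).continuousOn ?_ ?_
    · intro q hq
      rw [interior_Icc] at hq
      exact (hd q hq).differentiableAt.differentiableWithinAt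
    · intro q hq
      rw [interior_Icc] at hq
      rw [(hd q hq).deriv]
      linarith [two_mul_le_L hq.1.le hq.2]
  have := hm (show (0 : ℝ) ∈ Set.Icc (0 : ℝ) 1 by norm_num) ⟨abs_nonneg q, h⟩ (abs_nonneg q)
  simp only [E_zero, E_abs, sq_abs] at this
  linarith

/-- The one-dimensional free energy attains its maximum at bias `±1/3`: the disordered and the
ordered phase coexist at the critical temperature. -/
lemma E_coexist {q : ℝ} (h : |q| ≤ 1) :
    E q + 3 / 4 * log 2 * q ^ 2 ≤ log 3 - 7 / 12 * log 2 := by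
  set K : ℝ → ℝ := fun q => E q + 3 / 4 * log 2 * q ^ 2 with hK
  have hKc : Continuous K := continuous_E.add (by fun_prop)
  have hd : ∀ q ∈ Set.Ioo (0 : ℝ) 1, HasDerivAt K (-(L q / 2) + 3 / 2 * log 2 * q) q := by
    intro q hq
    have := (hasDerivAt_E (by linarith [hq.1]) hq.2).add
      (((hasDerivAt_id' q).pow 2).const_mul (3 / 4 * log 2))
    exact this.congr_deriv (by norm_num; ring)
  have m1 : MonotoneOn K (Set.Icc 0 (1 / 3)) := by
    refine monotoneOn_of_deriv_nonneg (convex_Icc _ _) hKc.continuousOn ?_ ?_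
    · intro q hq
      rw [interior_Icc] at hq
      exact (hd q ⟨hq.1, by linarith [hq.2]⟩).differentiableAt.differentiableWithinAt
    · intro q hq
      rw [interior_Icc] at hq
      rw [(hd q ⟨hq.1, by linarith [hq.2]⟩).deriv]
      linarith [L_le hq.1.le hq.2.le]
  have m2 : AntitoneOn K (Set.Icc (1 / 3) 1) := by
    refine antitoneOn_of_deriv_nonpos (convex_Icc _ _) hKc.continuousOn ?_ ?_
    · intro q hq
      rw [interior_Icc] at hq
      exact (hd q ⟨by linarith [hq.1], hq.2⟩).differentiableAt.differentiableWithinAt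
    · intro q hq
      rw [interior_Icc] at hq
      rw [(hd q ⟨by linarith [hq.1], hq.2⟩).deriv]
      linarith [le_L hq.1.le hq.2]
  have hv : K (1 / 3) = log 3 - 7 / 12 * log 2 := by
    simp only [hK, E_third]
    ring
  have habs : K |q| = E q + 3 / 4 * log 2 * q ^ 2 := by simp only [hK, E_abs, sq_abs]
  rw [← habs, ← hv]
  rcases le_total |q| (1 / 3) with h3 | h3
  · exact m1 ⟨abs_nonneg q, h3⟩ ⟨by norm_num, le_refl _⟩ h3
  · exact m2 ⟨le_refl _, by norm_num⟩ ⟨h3, h⟩ h3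

/-- Entropy of two masses in terms of their total and their difference. -/
lemma pair_entropy {b c : ℝ} (hb : 0 ≤ b) (hc : 0 ≤ c) (hs : b + c ≤ 2 / 3) :
    negMulLog b + negMulLog c + 2 * log 2 * (b ^ 2 + c ^ 2)
      ≤ negMulLog (b + c) + (b + c) * log 2 + log 2 * (b + c) ^ 2 := by
  rcases (add_nonneg hb hc).eq_or_lt with h0 | hpos
  · have : b = 0 := by linarith
    have : c = 0 := by linarith
    subst b c
    simp
  set s := b + c with hsdef
  set q := (b - c) / s with hq
  have eb : b = s * ((1 + q) / 2) := by rw [hq]; field_simp; rw [hsdef]; ring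
  have ec : c = s * ((1 - q) / 2) := by rw [hq]; field_simp; rw [hsdef]; ring
  have hq1 : |q| ≤ 1 := by
    rw [hq, abs_div, abs_of_pos hpos, div_le_one hpos, abs_le]
    constructor <;> linarith
  have hE : negMulLog b + negMulLog c = negMulLog s + s * E q := by
    rw [eb, ec, negMulLog_mul, negMulLog_mul, E]
    ring
  have hsq : b ^ 2 + c ^ 2 = s ^ 2 * (1 + q ^ 2) / 2 := by rw [eb, ec]; ring
  have hp := mul_le_mul_of_nonneg_left (E_pinsker hq1) hpos.le
  have hl : log 2 ≤ 3 / 4 := by linarith [log_two_lt_d9]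
  have h3 : s * log 2 ≤ 1 / 2 := by nlinarith [log_pos one_lt_two]
  have h4 : s * q ^ 2 * (s * log 2) ≤ s * q ^ 2 * (1 / 2) :=
    mul_le_mul_of_nonneg_left h3 (by positivity)
  rw [hE, hsq]
  nlinarith

/-- Critical free energy of the colour densities `a, b, c`. -/
noncomputable def F (a b c : ℝ) : ℝ :=
  negMulLog a + negMulLog b + negMulLog c + 2 * log 2 * (a ^ 2 + b ^ 2 + c ^ 2)

lemma F_le_line {a b c : ℝ} (hb : 0 ≤ b) (hc : 0 ≤ c) (hs : a + b + c = 1) (ha : 1 / 3 ≤ a) :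
    F a b c ≤ E (2 * a - 1) + 3 / 4 * log 2 * (2 * a - 1) ^ 2 + 5 / 4 * log 2 := by
  have hp := pair_entropy hb hc (by linarith)
  have e : b + c = 1 - a := by linarith
  rw [e] at hp
  rw [E, show (1 + (2 * a - 1)) / 2 = a by ring, show (1 - (2 * a - 1)) / 2 = 1 - a by ring, F]
  linarith

lemma F_le_of_third {a b c : ℝ} (hb : 0 ≤ b) (hc : 0 ≤ c) (hs : a + b + c = 1)
    (ha : 1 / 3 ≤ a) : F a b c ≤ log 3 + 2 / 3 * log 2 := by
  have h1 := F_le_line hb hc hs ha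
  have h2 := E_coexist (q := 2 * a - 1) (by rw [abs_le]; constructor <;> linarith)
  linarith

/-- The critical free energy is at most its common value at the two phases. -/
lemma F_le {a b c : ℝ} (ha : 0 ≤ a) (hb : 0 ≤ b) (hc : 0 ≤ c) (hs : a + b + c = 1) :
    F a b c ≤ log 3 + 2 / 3 * log 2 := by
  by_cases h1 : 1 / 3 ≤ a
  · exact F_le_of_third hb hc hs h1
  by_cases h2 : 1 / 3 ≤ b
  · have := F_le_of_third ha hc (by linarith) h2
    unfold F at *
    linarith
  · have := F_le_of_third ha hb (by linarith : c + a + b = 1) (by linarith)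
    unfold F at *
    linarith

/-- On the line where one colour occupies half of the vertices the critical free energy is
bounded by its value at `(1/2, 1/4, 1/4)`. -/
lemma F_half {b c : ℝ} (hb : 0 ≤ b) (hc : 0 ≤ c) (hs : 1 / 2 + b + c = 1) :
    F (1 / 2) b c ≤ 9 / 4 * log 2 := by
  have h1 := F_le_line hb hc hs (by norm_num)
  rw [show (2 : ℝ) * (1 / 2) - 1 = 0 by norm_num, E_zero] at h1
  linarith

end Entropy

/-! ### Counting colourings and the critical weights -/

section Counting

open Real

/-- Number of vertices of colour `c`. -/
def cnt {n : ℕ} (x : Fin n → Fin 3) (c : Fin 3) : ℕ := #{v | x v = c}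

lemma sum_cnt {n : ℕ} (x : Fin n → Fin 3) : ∑ c, cnt x c = n := by
  have := Finset.card_eq_sum_card_fiberwise (f := x) (s := univ) (t := univ)
    (fun v _ => by simp)
  simp only [card_univ, Fintype.card_fin] at this
  exact this.symm

lemma pottsH_cnt {n : ℕ} (x : Fin n → Fin 3) : 2 * pottsH n x + n = ∑ c, cnt x c ^ 2 := by
  have h1 : #{p : Fin n × Fin n | x p.1 = x p.2} = ∑ c, cnt x c ^ 2 := by
    rw [Finset.card_eq_sum_card_fiberwise (f := fun p => x p.1) (t := univ) (fun v _ => by simp)]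
    refine Finset.sum_congr rfl fun c _ => ?_
    rw [cnt, sq, ← Finset.card_product]
    congr 1
    ext ⟨u, v⟩
    simp only [mem_filter, mem_univ, true_and, mem_product]
    constructor
    · rintro ⟨a, b⟩
      exact ⟨b, a ▸ b⟩
    · rintro ⟨a, b⟩
      exact ⟨a.trans b.symm, a⟩
  have h2 : #{p : Fin n × Fin n | x p.1 = x p.2}
      = pottsH n x + (#{p : Fin n × Fin n | p.2 < p.1 ∧ x p.1 = x p.2}
        + #{p : Fin n × Fin n | p.1 = p.2}) := by
    rw [pottsH, ← Finset.card_union_of_disjoint, ← Finset.card_union_of_disjoint]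
    · congr 1
      ext ⟨u, v⟩
      simp only [mem_filter, mem_univ, true_and, mem_union]
      constructor
      · intro h
        rcases lt_trichotomy u v with h' | h' | h'
        · exact Or.inl ⟨h', h⟩
        · exact Or.inr (Or.inr h')
        · exact Or.inr (Or.inl ⟨h', h⟩)
      · rintro (⟨_, h⟩ | ⟨_, h⟩ | rfl)
        · exact h
        · exact h
        · rfl
    · rw [Finset.disjoint_left]
      rintro ⟨u, v⟩ h h'
      simp only [mem_filter, mem_univ, true_and, mem_union] at h h'
      rcases h' with ⟨h', _⟩ | h'
      · exact lt_asymm h.1 h'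
      · exact h.1.ne h'
    · rw [Finset.disjoint_left]
      rintro ⟨u, v⟩ h h'
      simp only [mem_filter, mem_univ, true_and] at h h'
      exact h.1.ne h'.symm
  have h3 : #{p : Fin n × Fin n | p.2 < p.1 ∧ x p.1 = x p.2} = pottsH n x := by
    refine Finset.card_bij (fun p _ => (p.2, p.1)) ?_ ?_ ?_
    · rintro ⟨u, v⟩ h
      simp only [mem_filter, mem_univ, true_and] at h ⊢
      exact ⟨h.1, h.2.symm⟩
    · rintro ⟨u, v⟩ _ ⟨u', v'⟩ _ h
      simp only [Prod.mk.injEq] at h ⊢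
      exact ⟨h.2, h.1⟩
    · rintro ⟨u, v⟩ h
      simp only [mem_filter, mem_univ, true_and] at h
      exact ⟨(v, u), by simp only [mem_filter, mem_univ, true_and]; exact ⟨h.1, h.2.symm⟩, rfl⟩
  have h4 : #{p : Fin n × Fin n | p.1 = p.2} = n := by
    have : ({p : Fin n × Fin n | p.1 = p.2} : Finset _) = univ.image fun v => (v, v) := by
      ext ⟨u, v⟩
      simp
    rw [this, card_image_of_injective _ fun a b h => (Prod.mk.inj h).1, card_univ,
      Fintype.card_fin]
  omega

/-- Probability of `x` when the vertices are coloured independently according to the empirical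
colour distribution of `x` itself. -/
noncomputable def pr {n : ℕ} (x : Fin n → Fin 3) : ℝ := ∏ v, ((cnt x (x v) : ℝ) / n)

/-- The method of types: colourings sharing their colour counts contribute at most `1`. -/
lemma sum_pr_le {n : ℕ} (hn : 0 < n) : ∑ x : Fin n → Fin 3, pr x ≤ ((n : ℝ) + 1) ^ 3 := by
  have hlt : ∀ (x : Fin n → Fin 3) c, cnt x c < n + 1 := by
    intro x c
    have := Finset.single_le_sum (f := cnt x) (fun _ _ => Nat.zero_le _) (mem_univ c)
    rw [sum_cnt] at this
    omega
  let ty : (Fin n → Fin 3) → (Fin 3 → Fin (n + 1)) := fun x c => ⟨cnt x c, hlt x c⟩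
  rw [← Finset.sum_fiberwise univ ty]
  have hb : ∀ τ : Fin 3 → Fin (n + 1), ∑ x ∈ univ.filter (fun x => ty x = τ), pr x ≤ 1 := by
    intro τ
    rcases (univ.filter (fun x => ty x = τ)).eq_empty_or_nonempty with h | ⟨y, hy⟩
    · rw [h]
      simp
    · have hτ : ∑ c, (τ c : ℝ) / n = 1 := by
        rw [← Finset.sum_div]
        have := sum_cnt y
        have h2 : ∀ c, (τ c : ℕ) = cnt y c := by
          intro c
          rw [← (mem_filter.1 hy).2]
        have h3 : ∑ c, ((τ c : ℕ) : ℝ) = n := by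
          simp only [h2]
          exact_mod_cast this
        rw [h3, div_self]
        positivity
      calc ∑ x ∈ univ.filter (fun x => ty x = τ), pr x
          = ∑ x ∈ univ.filter (fun x => ty x = τ), ∏ v, ((τ (x v) : ℝ) / n) := by
            refine Finset.sum_congr rfl fun x hx => ?_
            rw [← (mem_filter.1 hx).2]
            rfl
        _ ≤ ∑ x : Fin n → Fin 3, ∏ v, ((τ (x v) : ℝ) / n) := by
            refine Finset.sum_le_univ_sum_of_nonneg fun x => ?_
            exact Finset.prod_nonneg fun v _ => by positivity
        _ = (∑ c, (τ c : ℝ) / n) ^ n := by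
            rw [Fintype.sum_pow]
        _ = 1 := by rw [hτ, one_pow]
  calc _ ≤ ∑ τ : Fin 3 → Fin (n + 1), (1 : ℝ) := Finset.sum_le_sum fun τ _ => hb τ
    _ = _ := by simp

lemma pr_eq_exp {n : ℕ} (hn : 0 < n) (x : Fin n → Fin 3) :
    pr x = exp (-(n * ∑ c, negMulLog ((cnt x c : ℝ) / n))) := by
  have hpos : ∀ v, 0 < (cnt x (x v) : ℝ) / n := by
    intro v
    have : 0 < cnt x (x v) := Finset.card_pos.2 ⟨v, by simp⟩
    positivity
  have hn' : (n : ℝ) ≠ 0 := by positivity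
  have hp : 0 < pr x := Finset.prod_pos fun v _ => hpos v
  rw [← exp_log hp, pr, log_prod fun v _ => (hpos v).ne']
  congr 1
  rw [← Finset.sum_fiberwise univ x, Finset.mul_sum, ← Finset.sum_neg_distrib]
  refine Finset.sum_congr rfl fun c _ => ?_
  have : ∑ v ∈ univ.filter (fun v => x v = c), log ((cnt x (x v) : ℝ) / n)
      = ∑ v ∈ univ.filter (fun v => x v = c), log ((cnt x c : ℝ) / n) :=
    Finset.sum_congr rfl fun v hv => by rw [(mem_filter.1 hv).2]
  rw [this, Finset.sum_const, nsmul_eq_mul, negMulLog]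
  change (cnt x c : ℝ) * _ = _
  field_simp

/-- Gibbs weight at the critical inverse temperature. -/
noncomputable def W (n : ℕ) (x : Fin n → Fin 3) : ℝ := exp (4 * log 2 / n * pottsH n x)

lemma pottsH_real {n : ℕ} (x : Fin n → Fin 3) :
    (pottsH n x : ℝ) = ((cnt x 0 : ℝ) ^ 2 + (cnt x 1 : ℝ) ^ 2 + (cnt x 2 : ℝ) ^ 2 - n) / 2 := by
  have := pottsH_cnt x
  rw [Fin.sum_univ_three] at this
  have h : (2 : ℝ) * pottsH n x + n = (cnt x 0 : ℝ) ^ 2 + (cnt x 1 : ℝ) ^ 2 + (cnt x 2 : ℝ) ^ 2 := by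
    exact_mod_cast this
  linarith

lemma W_eq {n : ℕ} (hn : 0 < n) (x : Fin n → Fin 3) :
    W n x = pr x * (exp (n * F ((cnt x 0 : ℝ) / n) ((cnt x 1 : ℝ) / n) ((cnt x 2 : ℝ) / n)) / 4) := by
  have h4 : (4 : ℝ) = exp (2 * log 2) := by
    rw [two_mul, exp_add, exp_log two_pos]
    norm_num
  have hn' : (n : ℝ) ≠ 0 := by positivity
  rw [pr_eq_exp hn, W]
  nth_rewrite 2 [h4]
  rw [← exp_sub, ← exp_add, pottsH_real, Fin.sum_univ_three, F]
  congr 1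
  field_simp
  ring

lemma pr_nonneg {n : ℕ} (x : Fin n → Fin 3) : 0 ≤ pr x :=
  Finset.prod_nonneg fun v _ => by positivity

lemma density_sum {n : ℕ} (hn : 0 < n) (x : Fin n → Fin 3) :
    (cnt x 0 : ℝ) / n + (cnt x 1 : ℝ) / n + (cnt x 2 : ℝ) / n = 1 := by
  have := sum_cnt x
  rw [Fin.sum_univ_three] at this
  have h : (cnt x 0 : ℝ) + cnt x 1 + cnt x 2 = n := by exact_mod_cast this
  rw [← add_div, ← add_div, h, div_self]
  positivity

/-- Upper bound for the critical partition function. -/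
lemma sum_W_le {l : ℕ} (hl : 0 < l) :
    ∑ x, W (12 * l) x ≤ ((12 * l : ℕ) + 1 : ℝ) ^ 3 * (108 ^ (4 * l) / 4) := by
  have hn : 0 < 12 * l := by omega
  have hT : exp ((12 * l : ℕ) * (log 3 + 2 / 3 * log 2)) = 108 ^ (4 * l) := by
    have h108 : log 108 = 3 * log 3 + 2 * log 2 := by
      rw [show (108 : ℝ) = 3 ^ 3 * 2 ^ 2 by norm_num, log_mul (by norm_num) (by norm_num), log_pow,
        log_pow]
      norm_num
    rw [← exp_log (show (0 : ℝ) < 108 ^ (4 * l) by positivity), log_pow, h108]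
    congr 1
    push_cast
    ring
  calc ∑ x, W (12 * l) x ≤ ∑ x : Fin (12 * l) → Fin 3, pr x * (108 ^ (4 * l) / 4) := by
        refine Finset.sum_le_sum fun x _ => ?_
        rw [W_eq hn, ← hT]
        refine mul_le_mul_of_nonneg_left ?_ (pr_nonneg x)
        gcongr
        exact F_le (by positivity) (by positivity) (by positivity) (density_sum hn x)
    _ ≤ _ := by
        rw [← Finset.sum_mul]
        exact mul_le_mul_of_nonneg_right (sum_pr_le hn) (by positivity)

/-- The critical weight of the bottleneck, where colour `0` occupies exactly half of the
vertices. -/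
lemma sum_W_half_le {l : ℕ} (hl : 0 < l) :
    ∑ x ∈ univ.filter (fun x : Fin (12 * l) → Fin 3 => 2 * cnt x 0 = 12 * l), W (12 * l) x
      ≤ ((12 * l : ℕ) + 1 : ℝ) ^ 3 * (2 ^ (27 * l) / 4) := by
  have hn : 0 < 12 * l := by omega
  have hT : exp ((12 * l : ℕ) * (9 / 4 * log 2)) = 2 ^ (27 * l) := by
    rw [← exp_log (show (0 : ℝ) < 2 ^ (27 * l) by positivity), log_pow]
    congr 1
    push_cast
    ring
  calc _ ≤ ∑ x ∈ univ.filter (fun x : Fin (12 * l) → Fin 3 => 2 * cnt x 0 = 12 * l),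
          pr x * (2 ^ (27 * l) / 4) := by
        refine Finset.sum_le_sum fun x hx => ?_
        have hx' := (mem_filter.1 hx).2
        have hh : (cnt x 0 : ℝ) / (12 * l : ℕ) = 1 / 2 := by
          have : (2 : ℝ) * cnt x 0 = (12 * l : ℕ) := by exact_mod_cast hx'
          rw [← this]
          have : (cnt x 0 : ℝ) ≠ 0 := by
            have : cnt x 0 ≠ 0 := by omega
            exact_mod_cast this
          field_simp
        rw [W_eq hn, ← hT]
        refine mul_le_mul_of_nonneg_left ?_ (pr_nonneg x)
        have hd := density_sum hn x
        rw [hh] at hd ⊢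
        gcongr
        exact F_half (by positivity) (by positivity) hd
    _ ≤ ∑ x : Fin (12 * l) → Fin 3, pr x * (2 ^ (27 * l) / 4) :=
        Finset.sum_le_univ_sum_of_nonneg fun x => mul_nonneg (pr_nonneg x) (by positivity)
    _ ≤ _ := by
        rw [← Finset.sum_mul]
        exact mul_le_mul_of_nonneg_right (sum_pr_le hn) (by positivity)

/-- The colourings with `a`, `b`, `c` vertices of colours `0`, `1`, `2`. -/
def cls (n a b c : ℕ) : Finset (Fin n → Fin 3) :=
  univ.filter fun x => cnt x 0 = a ∧ cnt x 1 = b ∧ cnt x 2 = c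

lemma le_card_cls (n a b c : ℕ) (h : a + b + c = n) :
    n.choose a * (n - a).choose b ≤ (cls n a b c).card := by
  let src : Finset (Σ _ : Finset (Fin n), Finset (Fin n)) :=
    (powersetCard a (univ : Finset (Fin n))).sigma fun S => powersetCard b (univ \ S)
  have hc : src.card = n.choose a * (n - a).choose b := by
    rw [card_sigma, Finset.sum_congr rfl (g := fun _ => (n - a).choose b), Finset.sum_const,
      card_powersetCard, card_univ, Fintype.card_fin, smul_eq_mul]
    intro S hS
    rw [card_powersetCard, ← compl_eq_univ_sdiff, card_compl, Fintype.card_fin,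
      (mem_powersetCard.1 hS).2]
  rw [← hc]
  have key : ∀ p ∈ src, p.2 ⊆ univ \ p.1 ∧ p.1.card = a ∧ p.2.card = b := by
    rintro ⟨S, T⟩ hp
    rw [mem_sigma, mem_powersetCard, mem_powersetCard] at hp
    exact ⟨hp.2.1, hp.1.2, hp.2.2⟩
  let φ : (Σ _ : Finset (Fin n), Finset (Fin n)) → (Fin n → Fin 3) :=
    fun p v => if v ∈ p.1 then 0 else if v ∈ p.2 then 1 else 2
  have f0 : ∀ p, univ.filter (fun v => φ p v = 0) = p.1 := by
    intro p
    ext v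
    simp only [φ, mem_filter, mem_univ, true_and]
    split_ifs with h1 h2 <;> simp [h1]
  have f1 : ∀ p ∈ src, univ.filter (fun v => φ p v = 1) = p.2 := by
    intro p hp
    have hd := (key p hp).1
    ext v
    simp only [φ, mem_filter, mem_univ, true_and]
    split_ifs with h1 h2
    · have : v ∉ p.2 := fun hv => (mem_sdiff.1 (hd hv)).2 h1
      simp [this]
    · simp [h2]
    · simp [h2]
  refine Finset.card_le_card_of_injOn φ ?_ ?_
  · intro p hp
    have h0 : cnt (φ p) 0 = a := by rw [cnt, f0, (key p hp).2.1]
    have h1 : cnt (φ p) 1 = b := by rw [cnt, f1 p hp, (key p hp).2.2]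
    have hs := sum_cnt (φ p)
    rw [Fin.sum_univ_three] at hs
    simp only [cls, coe_filter, mem_univ, true_and, Set.mem_ofPred_eq]
    exact ⟨h0, h1, by omega⟩
  · intro p hp q hq hpq
    have e1 : p.1 = q.1 := by rw [← f0 p, ← f0 q, hpq]
    have e2 : p.2 = q.2 := by rw [← f1 p hp, ← f1 q hq, hpq]
    cases p
    cases q
    simp only at e1 e2
    subst e1 e2
    rfl

lemma choose_three_rec (m : ℕ) :
    (3 * (m + 1)).choose (m + 1) * ((2 * m + 2) * (2 * m + 1))
      = (3 * m).choose m * (3 * ((3 * m + 2) * (3 * m + 1))) := by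
  have h1 := Nat.choose_mul_factorial_mul_factorial (show m ≤ 3 * m by omega)
  have h2 := Nat.choose_mul_factorial_mul_factorial (show m + 1 ≤ 3 * (m + 1) by omega)
  rw [show 3 * m - m = 2 * m by omega] at h1
  rw [show 3 * (m + 1) - (m + 1) = 2 * m + 1 + 1 by omega, Nat.factorial_succ m,
    Nat.factorial_succ (2 * m + 1), Nat.factorial_succ (2 * m)] at h2
  have h3 : (3 * (m + 1)).factorial
      = (3 * m + 3) * ((3 * m + 2) * ((3 * m + 1) * (3 * m).factorial)) := by
    rw [show 3 * (m + 1) = 3 * m + 1 + 1 + 1 by ring, Nat.factorial_succ, Nat.factorial_succ,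
      Nat.factorial_succ]
  rw [h3, ← h1] at h2
  have hpos : 0 < (m + 1) * (m.factorial * (2 * m).factorial) := by positivity
  refine Nat.eq_of_mul_eq_mul_right hpos ?_
  linear_combination h2

lemma choose_three_lower (m : ℕ) : 27 ^ m ≤ 4 ^ m * ((3 * m + 1) * (3 * m).choose m) := by
  induction m with
  | zero => simp
  | succ m ih =>
    have hrec := choose_three_rec m
    have hpos : 0 < (2 * m + 2) * (2 * m + 1) := by positivity
    refine Nat.le_of_mul_le_mul_right ?_ hpos
    calc 27 ^ (m + 1) * ((2 * m + 2) * (2 * m + 1))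
        = 27 ^ m * (27 * ((2 * m + 2) * (2 * m + 1))) := by ring
      _ ≤ 4 ^ m * ((3 * m + 1) * (3 * m).choose m) * (27 * ((2 * m + 2) * (2 * m + 1))) :=
          Nat.mul_le_mul_right _ ih
      _ = 4 ^ m * (3 * m).choose m * (3 * m + 1) * (27 * ((2 * m + 2) * (2 * m + 1))) := by ring
      _ ≤ 4 ^ m * (3 * m).choose m * (3 * m + 1) * (12 * ((3 * m + 4) * (3 * m + 2))) :=
          Nat.mul_le_mul_left _ (by nlinarith)
      _ = 4 ^ (m + 1) * (3 * (m + 1) + 1) * ((3 * m).choose m * (3 * ((3 * m + 2) * (3 * m + 1)))) := by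
          ring
      _ = 4 ^ (m + 1) * (3 * (m + 1) + 1)
            * ((3 * (m + 1)).choose (m + 1) * ((2 * m + 2) * (2 * m + 1))) := by rw [hrec]
      _ = _ := by ring

lemma W_cls {l a b c e : ℕ} (hl : 0 < l) (h : a ^ 2 + b ^ 2 + c ^ 2 = 6 * e * l)
    {x : Fin (12 * l) → Fin 3} (hx : x ∈ cls (12 * l) a b c) : W (12 * l) x = 2 ^ e / 4 := by
  obtain ⟨h0, h1, h2⟩ := (mem_filter.1 hx).2
  have h4 : (4 : ℝ) = exp (2 * log 2) := by
    rw [two_mul, exp_add, exp_log two_pos]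
    norm_num
  have hl' : (l : ℝ) ≠ 0 := by positivity
  have hr : (a : ℝ) ^ 2 + (b : ℝ) ^ 2 + (c : ℝ) ^ 2 = 6 * e * l := by exact_mod_cast h
  rw [W, pottsH_real, h0, h1, h2, hr, ← exp_log (show (0 : ℝ) < 2 ^ e by positivity), log_pow]
  nth_rewrite 2 [h4]
  rw [← exp_sub]
  congr 1
  push_cast
  field_simp
  ring

/-- The disordered phase carries a polynomial fraction of the maximal exponential weight. -/
lemma disordered_lower {l : ℕ} (hl : 0 < l) :
    (108 : ℝ) ^ (4 * l) / 4 ≤ ((12 * l : ℕ) + 1 : ℝ) ^ 2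
      * ∑ x ∈ cls (12 * l) (4 * l) (4 * l) (4 * l), W (12 * l) x := by
  rw [Finset.sum_congr rfl (g := fun _ => (2 : ℝ) ^ (8 * l) / 4)
    (fun x hx => W_cls hl (by ring) hx), Finset.sum_const, nsmul_eq_mul]
  have h1 := le_card_cls (12 * l) (4 * l) (4 * l) (4 * l) (by ring)
  have h2 := choose_three_lower (4 * l)
  have h3 := Nat.four_pow_le_two_mul_self_mul_centralBinom (4 * l) (by omega)
  rw [Nat.centralBinom] at h3
  rw [show 12 * l - 4 * l = 2 * (4 * l) by omega] at h1
  rw [show 3 * (4 * l) = 12 * l by ring] at h2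
  have h5 : 108 ^ (4 * l) ≤ (12 * l + 1) ^ 2
      * ((cls (12 * l) (4 * l) (4 * l) (4 * l)).card * 2 ^ (8 * l)) := by
    have e4 : 2 ^ (8 * l) = 4 ^ (4 * l) := by
      rw [show 8 * l = 2 * (4 * l) by ring, pow_mul]
      norm_num
    rw [e4]
    calc 108 ^ (4 * l) = 27 ^ (4 * l) * 4 ^ (4 * l) := by rw [← mul_pow]; norm_num
      _ ≤ (4 ^ (4 * l) * ((12 * l + 1) * (12 * l).choose (4 * l)))
          * (2 * (4 * l) * (2 * (4 * l)).choose (4 * l)) := Nat.mul_le_mul h2 h3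
      _ = (12 * l + 1) * (8 * l)
          * ((12 * l).choose (4 * l) * (2 * (4 * l)).choose (4 * l) * 4 ^ (4 * l)) := by ring
      _ ≤ (12 * l + 1) ^ 2
          * ((cls (12 * l) (4 * l) (4 * l) (4 * l)).card * 4 ^ (4 * l)) := by
          refine Nat.mul_le_mul ?_ (Nat.mul_le_mul_right _ h1)
          rw [sq]
          exact Nat.mul_le_mul_left _ (by omega)
  have h6 : (108 : ℝ) ^ (4 * l) ≤ ((12 * l : ℕ) + 1 : ℝ) ^ 2
      * ((cls (12 * l) (4 * l) (4 * l) (4 * l)).card * 2 ^ (8 * l)) := by exact_mod_cast h5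
  linarith

/-- The ordered phase carries a polynomial fraction of the maximal exponential weight. -/
lemma ordered_lower {l : ℕ} (hl : 0 < l) :
    (108 : ℝ) ^ (4 * l) / 4 ≤ ((12 * l : ℕ) + 1 : ℝ) ^ 2
      * ∑ x ∈ cls (12 * l) (8 * l) (2 * l) (2 * l), W (12 * l) x := by
  rw [Finset.sum_congr rfl (g := fun _ => (2 : ℝ) ^ (12 * l) / 4)
    (fun x hx => W_cls hl (by ring) hx), Finset.sum_const, nsmul_eq_mul]
  have h1 := le_card_cls (12 * l) (8 * l) (2 * l) (2 * l) (by ring)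
  have h2 := choose_three_lower (4 * l)
  have h3 := Nat.four_pow_le_two_mul_self_mul_centralBinom (2 * l) (by omega)
  rw [Nat.centralBinom] at h3
  rw [show 12 * l - 8 * l = 2 * (2 * l) by omega,
    Nat.choose_symm_of_eq_add (show 12 * l = 8 * l + 4 * l by ring)] at h1
  rw [show 3 * (4 * l) = 12 * l by ring] at h2
  have h5 : 108 ^ (4 * l) ≤ (12 * l + 1) ^ 2
      * ((cls (12 * l) (8 * l) (2 * l) (2 * l)).card * 2 ^ (12 * l)) := by
    have e2 : 4 ^ (2 * l) = 2 ^ (4 * l) := by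
      rw [show 4 * l = 2 * (2 * l) by ring, pow_mul 2 2]
      norm_num
    have e8 : 2 ^ (12 * l) = 8 ^ (4 * l) := by
      rw [show 12 * l = 3 * (4 * l) by ring, pow_mul]
      norm_num
    have e4 : 4 ^ (4 * l) * 2 ^ (4 * l) = 8 ^ (4 * l) := by rw [← mul_pow]; norm_num
    refine Nat.le_of_mul_le_mul_right ?_ (show 0 < 4 ^ (4 * l) by positivity)
    calc 108 ^ (4 * l) * 4 ^ (4 * l) = 27 ^ (4 * l) * 4 ^ (2 * l) * 2 ^ (12 * l) := by
          rw [e2, e8, ← mul_pow, ← mul_pow, ← mul_pow]; norm_num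
      _ ≤ (4 ^ (4 * l) * ((12 * l + 1) * (12 * l).choose (4 * l)))
          * (2 * (2 * l) * (2 * (2 * l)).choose (2 * l)) * 2 ^ (12 * l) :=
          Nat.mul_le_mul_right _ (Nat.mul_le_mul h2 h3)
      _ = (12 * l + 1) * (4 * l)
          * ((12 * l).choose (4 * l) * (2 * (2 * l)).choose (2 * l) * 2 ^ (12 * l))
          * 4 ^ (4 * l) := by ring
      _ ≤ (12 * l + 1) ^ 2
          * ((cls (12 * l) (8 * l) (2 * l) (2 * l)).card * 2 ^ (12 * l)) * 4 ^ (4 * l) := by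
          refine Nat.mul_le_mul_right _ (Nat.mul_le_mul ?_ (Nat.mul_le_mul_right _ h1))
          rw [sq]
          exact Nat.mul_le_mul_left _ (by omega)
  have h6 : (108 : ℝ) ^ (4 * l) ≤ ((12 * l : ℕ) + 1 : ℝ) ^ 2
      * ((cls (12 * l) (8 * l) (2 * l) (2 * l)).card * 2 ^ (12 * l)) := by exact_mod_cast h5
  linarith

end Counting

/-! ### The Potts tempering chain -/

section Tempering

variable {n : ℕ}

lemma gibbs_pos (β : ℝ) (x : Fin n → Fin 3) : 0 < pottsGibbs n β x :=
  div_pos (Real.exp_pos _) (Finset.sum_pos (fun _ _ => Real.exp_pos _) ⟨x, mem_univ x⟩)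

lemma gibbs_sum (β : ℝ) : ∑ x, pottsGibbs n β x = 1 := by
  have : 0 < ∑ y : Fin n → Fin 3, Real.exp (β * pottsH n y) :=
    Finset.sum_pos (fun _ _ => Real.exp_pos _) univ_nonempty
  simp only [pottsGibbs]
  rw [← Finset.sum_div, div_self this.ne']

lemma prop_nonneg (x y : Fin n → Fin 3) : 0 ≤ pottsProp n x y := by
  unfold pottsProp
  positivity

lemma prop_sum (hn : 0 < n) (x : Fin n → Fin 3) : ∑ y, pottsProp n x y = 1 := by
  simp only [pottsProp]
  rw [← Finset.sum_div]
  have h := Finset.card_eq_sum_card_fiberwise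
    (f := fun vc : Fin n × Fin 3 => Function.update x vc.1 vc.2) (s := univ) (t := univ)
    (fun v _ => by simp)
  rw [card_univ, Fintype.card_prod, Fintype.card_fin, Fintype.card_fin] at h
  have h' : ∑ y, ((#{vc : Fin n × Fin 3 | Function.update x vc.1 vc.2 = y} : ℕ) : ℝ) = n * 3 := by
    exact_mod_cast h.symm
  rw [h', div_self]
  positivity

lemma prop_update_pos (x : Fin n → Fin 3) (v : Fin n) (c : Fin 3) :
    0 < pottsProp n x (Function.update x v c) := by
  have hn : 0 < n := v.pos
  have : 0 < #{vc : Fin n × Fin 3 | Function.update x vc.1 vc.2 = Function.update x v c} :=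
    Finset.card_pos.2 ⟨(v, c), by simp⟩
  unfold pottsProp
  positivity

lemma prop_self_pos (hn : 0 < n) (x : Fin n → Fin 3) : 0 < pottsProp n x x := by
  have := prop_update_pos x ⟨0, hn⟩ (x ⟨0, hn⟩)
  rwa [Function.update_eq_self] at this

lemma exists_of_prop_ne {x y : Fin n → Fin 3} (h : pottsProp n x y ≠ 0) :
    ∃ v c, Function.update x v c = y := by
  by_contra! hc
  apply h
  have : univ.filter (fun vc : Fin n × Fin 3 => Function.update x vc.1 vc.2 = y) = ∅ :=
    Finset.filter_eq_empty_iff.2 fun vc _ => hc vc.1 vc.2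
  simp [pottsProp, this]

lemma prop_symm (x y : Fin n → Fin 3) : pottsProp n x y = pottsProp n y x := by
  by_cases hxy : x = y
  · rw [hxy]
  have key : ∀ x y : Fin n → Fin 3, x ≠ y →
      #{vc : Fin n × Fin 3 | Function.update x vc.1 vc.2 = y}
        ≤ #{vc : Fin n × Fin 3 | Function.update y vc.1 vc.2 = x} := by
    intro x y hxy
    refine Finset.card_le_card_of_injOn (fun vc => (vc.1, x vc.1)) ?_ ?_
    · rintro ⟨v, c⟩ h
      simp only [coe_filter, mem_univ, true_and, Set.mem_ofPred_eq] at h ⊢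
      rw [← h, Function.update_idem, Function.update_eq_self]
    · rintro ⟨v, c⟩ h ⟨w, d⟩ h' e
      simp only [coe_filter, mem_univ, true_and, Set.mem_ofPred_eq] at h h'
      have ev : v = w := (Prod.mk.inj e).1
      subst ev
      have ec : c = d := by
        have := congrFun (h.trans h'.symm) v
        simpa using this
      rw [ec]
  unfold pottsProp
  rw [le_antisymm (key x y hxy) (key y x (Ne.symm hxy))]

/-- The simulated tempering chain of the theorem. -/
noncomputable abbrev chain (n M : ℕ) (β : Fin (M + 1) → ℝ) :
    Matrix ((Fin n → Fin 3) × Fin (M + 1)) ((Fin n → Fin 3) × Fin (M + 1)) ℝ :=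
  temperingChain (fun i : Fin (M + 1) => metropolis (pottsProp n) (pottsGibbs n (β i)))
    (fun i => pottsGibbs n (β i))

/-- The stationary distribution of the tempering chain. -/
noncomputable abbrev st (n M : ℕ) (β : Fin (M + 1) → ℝ)
    (p : (Fin n → Fin 3) × Fin (M + 1)) : ℝ := pottsGibbs n (β p.2) p.1 / (M + 1)

variable {M : ℕ} (β : Fin (M + 1) → ℝ)

/-- The level part of the tempering rates between distinct states. -/
noncomputable def levelRate (p q : (Fin n → Fin 3) × Fin (M + 1)) : ℝ :=
  if q.2 = p.2 then
    1 / 2 * (pottsProp n p.1 q.1 * min 1 (pottsGibbs n (β p.2) q.1 / pottsGibbs n (β p.2) p.1))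
  else 0

/-- The temperature part of the tempering rates. -/
noncomputable def tempRate (p q : (Fin n → Fin 3) × Fin (M + 1)) : ℝ :=
  if q.1 = p.1 ∧ ((q.2 : ℕ) = (p.2 : ℕ) + 1 ∨ (q.2 : ℕ) + 1 = (p.2 : ℕ)) then
    1 / 4 * min 1 (pottsGibbs n (β q.2) p.1 / pottsGibbs n (β p.2) p.1) else 0

lemma off_eq {p q : (Fin n → Fin 3) × Fin (M + 1)} (h : q ≠ p) :
    temperingOff (fun i : Fin (M + 1) => metropolis (pottsProp n) (pottsGibbs n (β i)))
      (fun i => pottsGibbs n (β i)) p q = levelRate β p q + tempRate β p q := by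
  unfold temperingOff levelRate tempRate
  congr 1
  by_cases h2 : q.2 = p.2
  · have h1 : q.1 ≠ p.1 := fun h1 => h (Prod.ext h1 h2)
    simp [h2, metropolis, h1]
  · simp [h2]

lemma chain_ne {p q : (Fin n → Fin 3) × Fin (M + 1)} (h : q ≠ p) :
    chain n M β p q = levelRate β p q + tempRate β p q := by
  rw [← off_eq β h]
  simp [chain, temperingChain, h]

lemma chain_self (p : (Fin n → Fin 3) × Fin (M + 1)) :
    chain n M β p p = 1 - ∑ r ∈ univ.erase p, (levelRate β p r + tempRate β p r) := by
  rw [← Finset.sum_congr rfl fun r hr => off_eq β (Finset.ne_of_mem_erase hr)]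
  simp [chain, temperingChain]

lemma ratio_nonneg (a b : ℝ) (x y : Fin n → Fin 3) :
    0 ≤ min 1 (pottsGibbs n a x / pottsGibbs n b y) :=
  le_min zero_le_one (div_nonneg (gibbs_pos a x).le (gibbs_pos b y).le)

lemma level_nonneg (p q : (Fin n → Fin 3) × Fin (M + 1)) : 0 ≤ levelRate β p q := by
  unfold levelRate
  split_ifs
  · have := mul_nonneg (prop_nonneg p.1 q.1) (ratio_nonneg (β p.2) (β p.2) q.1 p.1)
    linarith
  · exact le_refl _

lemma temp_nonneg (p q : (Fin n → Fin 3) × Fin (M + 1)) : 0 ≤ tempRate β p q := by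
  unfold tempRate
  split_ifs
  · have := ratio_nonneg (β q.2) (β p.2) p.1 p.1
    linarith
  · exact le_refl _

lemma chain_rowsum (p : (Fin n → Fin 3) × Fin (M + 1)) : ∑ q, chain n M β p q = 1 := by
  rw [← Finset.add_sum_erase _ _ (mem_univ p), chain_self,
    Finset.sum_congr rfl fun r hr => chain_ne β (Finset.ne_of_mem_erase hr)]
  ring

lemma level_sum_lt (hn : 0 < n) (p : (Fin n → Fin 3) × Fin (M + 1)) :
    ∑ r ∈ univ.erase p, levelRate β p r < 1 / 2 := by
  have hle : ∑ r ∈ univ.erase p, levelRate β p r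
      ≤ ∑ r : (Fin n → Fin 3) × Fin (M + 1),
        if r.2 = p.2 then (if r.1 = p.1 then 0 else 1 / 2 * pottsProp n p.1 r.1) else 0 := by
    rw [← Finset.sum_erase univ (a := p) (by simp)]
    refine Finset.sum_le_sum fun r hr => ?_
    have hne := Finset.ne_of_mem_erase hr
    unfold levelRate
    by_cases h2 : r.2 = p.2
    · have h1 : r.1 ≠ p.1 := fun h1 => hne (Prod.ext h1 h2)
      simp only [h2, h1, if_true, if_false]
      have := mul_le_mul_of_nonneg_left (min_le_left 1
        (pottsGibbs n (β p.2) r.1 / pottsGibbs n (β p.2) p.1)) (prop_nonneg p.1 r.1)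
      linarith
    · simp [h2]
  refine hle.trans_lt ?_
  rw [Fintype.sum_prod_type]
  simp only [Finset.sum_ite_eq', mem_univ, if_true]
  have h1 := prop_sum hn p.1
  rw [← Finset.add_sum_erase _ _ (mem_univ p.1)] at h1
  rw [← Finset.sum_erase univ (a := p.1) (by simp),
    Finset.sum_congr rfl (g := fun y => 1 / 2 * pottsProp n p.1 y)
      (fun y hy => by simp [Finset.ne_of_mem_erase hy]), ← Finset.mul_sum]
  linarith [prop_self_pos hn p.1]

lemma temp_sum_le (p : (Fin n → Fin 3) × Fin (M + 1)) :
    ∑ r ∈ univ.erase p, tempRate β p r ≤ 1 / 2 := by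
  have hle : ∑ r ∈ univ.erase p, tempRate β p r
      ≤ ∑ r : (Fin n → Fin 3) × Fin (M + 1), if r.1 = p.1 then
        ((if (r.2 : ℕ) = (p.2 : ℕ) + 1 then 1 / 4 else 0)
          + (if (r.2 : ℕ) + 1 = (p.2 : ℕ) then 1 / 4 else 0) : ℝ) else 0 := by
    refine (Finset.sum_le_univ_sum_of_nonneg fun r => temp_nonneg β p r).trans
      (Finset.sum_le_sum fun r _ => ?_)
    have := min_le_left 1 (pottsGibbs n (β r.2) p.1 / pottsGibbs n (β p.2) p.1)
    unfold tempRate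
    by_cases h1 : r.1 = p.1
    · by_cases h2 : (r.2 : ℕ) = (p.2 : ℕ) + 1
      · have h3 : ¬ ((r.2 : ℕ) + 1 = (p.2 : ℕ)) := by omega
        simp only [h1, h2, true_and, true_or, if_true]
        rw [if_neg (by omega)]
        linarith
      · by_cases h3 : (r.2 : ℕ) + 1 = (p.2 : ℕ)
        · simp only [h1, h2, h3, true_and, or_true, if_true, if_false]
          linarith
        · simp [h1, h2, h3]
    · simp [h1]
  refine hle.trans ?_
  rw [Fintype.sum_prod_type, Finset.sum_comm]
  simp only [Finset.sum_ite_eq', mem_univ, if_true]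
  rw [Finset.sum_add_distrib]
  have b : ∀ (R : Fin (M + 1) → Prop) [DecidablePred R], (∀ i j, R i → R j → i = j) →
      ∑ i, (if R i then 1 / 4 else 0 : ℝ) ≤ 1 / 4 := by
    intro R _ hR
    rw [← Finset.sum_filter, Finset.sum_const, nsmul_eq_mul]
    have : #(univ.filter R) ≤ 1 := Finset.card_le_one.2 fun i hi j hj =>
      hR i j (mem_filter.1 hi).2 (mem_filter.1 hj).2
    have : (#(univ.filter R) : ℝ) ≤ 1 := by exact_mod_cast this
    linarith
  have b1 := b (fun i => (i : ℕ) = (p.2 : ℕ) + 1) fun i j hi hj => Fin.ext (by omega)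
  have b2 := b (fun i => (i : ℕ) + 1 = (p.2 : ℕ)) fun i j hi hj => Fin.ext (by omega)
  linarith

lemma chain_diag_pos (hn : 0 < n) (p : (Fin n → Fin 3) × Fin (M + 1)) :
    0 < chain n M β p p := by
  rw [chain_self, Finset.sum_add_distrib]
  linarith [level_sum_lt β hn p, temp_sum_le β p]

lemma chain_nonneg (hn : 0 < n) (p q : (Fin n → Fin 3) × Fin (M + 1)) :
    0 ≤ chain n M β p q := by
  by_cases h : q = p
  · rw [h]
    exact (chain_diag_pos β hn p).le
  · rw [chain_ne β h]
    exact add_nonneg (level_nonneg β p q) (temp_nonneg β p q)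

lemma mul_min_one_div {a b : ℝ} (ha : 0 < a) : a * min 1 (b / a) = min a b := by
  rw [mul_min_of_nonneg _ _ ha.le, mul_one, mul_div_cancel₀ _ ha.ne']

lemma chain_reversible (p q : (Fin n → Fin 3) × Fin (M + 1)) :
    st n M β p * chain n M β p q = st n M β q * chain n M β q p := by
  by_cases h : q = p
  · rw [h]
  rw [chain_ne β h, chain_ne β (Ne.symm h), mul_add, mul_add]
  obtain ⟨x, i⟩ := p
  obtain ⟨y, j⟩ := q
  congr 1
  · unfold levelRate st
    by_cases hij : j = i
    · subst hij
      simp only [if_true]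
      have e1 := mul_min_one_div (b := pottsGibbs n (β j) y) (gibbs_pos (β j) x)
      have e2 := mul_min_one_div (b := pottsGibbs n (β j) x) (gibbs_pos (β j) y)
      rw [min_comm (pottsGibbs n (β j) y) (pottsGibbs n (β j) x)] at e2
      rw [prop_symm y x]
      linear_combination (1 / 2 * pottsProp n x y / (M + 1)) * (e1 - e2)
    · simp [hij, Ne.symm hij]
  · unfold tempRate st
    by_cases hxy : y = x
    · subst hxy
      by_cases hij : (j : ℕ) = (i : ℕ) + 1 ∨ (j : ℕ) + 1 = (i : ℕ)
      · have hji : (i : ℕ) = (j : ℕ) + 1 ∨ (i : ℕ) + 1 = (j : ℕ) := by omega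
        simp only [true_and, hij, hji, if_true]
        have e1 := mul_min_one_div (b := pottsGibbs n (β j) y) (gibbs_pos (β i) y)
        have e2 := mul_min_one_div (b := pottsGibbs n (β i) y) (gibbs_pos (β j) y)
        rw [min_comm (pottsGibbs n (β j) y) (pottsGibbs n (β i) y)] at e2
        linear_combination (1 / 4 / (M + 1 : ℝ)) * (e1 - e2)
      · have hji : ¬((i : ℕ) = (j : ℕ) + 1 ∨ (i : ℕ) + 1 = (j : ℕ)) := by omega
        simp only [true_and, hij, hji, if_false, mul_zero]
    · simp [hxy, Ne.symm hxy]

lemma st_pos (p : (Fin n → Fin 3) × Fin (M + 1)) : 0 < st n M β p :=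
  div_pos (gibbs_pos _ _) (by positivity)

lemma st_sum : ∑ p, st n M β p = 1 := by
  unfold st
  rw [Fintype.sum_prod_type, Finset.sum_comm]
  simp_rw [← Finset.sum_div, gibbs_sum]
  have h : (M : ℝ) + 1 ≠ 0 := by positivity
  simp [h]

lemma step_update (hn : 0 < n) (x : Fin n → Fin 3) (i : Fin (M + 1)) (v : Fin n) (c : Fin 3) :
    0 < chain n M β (x, i) (Function.update x v c, i) := by
  by_cases h : (Function.update x v c, i) = (x, i)
  · rw [h]
    exact chain_diag_pos β hn _
  · rw [chain_ne β h]
    refine add_pos_of_pos_of_nonneg ?_ (temp_nonneg β _ _)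
    unfold levelRate
    simp only [if_true]
    have := mul_pos (prop_update_pos x v c)
      (lt_min one_pos (div_pos (gibbs_pos (β i) (Function.update x v c)) (gibbs_pos (β i) x)))
    linarith

lemma step_temp (x : Fin n → Fin 3) (i j : Fin (M + 1))
    (hij : (j : ℕ) = (i : ℕ) + 1 ∨ (j : ℕ) + 1 = (i : ℕ)) :
    0 < chain n M β (x, i) (x, j) := by
  have hne : ((x, j) : (Fin n → Fin 3) × Fin (M + 1)) ≠ (x, i) := by
    intro h
    have : j = i := (Prod.mk.inj h).2
    subst this
    omega
  rw [chain_ne β hne]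
  refine add_pos_of_nonneg_of_pos (level_nonneg β _ _) ?_
  unfold tempRate
  simp only [true_and, hij, if_true]
  have := lt_min one_pos (div_pos (gibbs_pos (β j) x) (gibbs_pos (β i) x))
  linarith

lemma chain_irreducible (hn : 0 < n) (p q : (Fin n → Fin 3) × Fin (M + 1)) :
    Relation.ReflTransGen (fun a b => 0 < chain n M β a b) p q := by
  obtain ⟨x, i⟩ := p
  obtain ⟨y, j⟩ := q
  have hcol : Relation.ReflTransGen (fun a b => 0 < chain n M β a b) (x, i) (y, i) := by
    have : ∀ s : Finset (Fin n), Relation.ReflTransGen (fun a b => 0 < chain n M β a b)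
        (x, i) (s.piecewise y x, i) := by
      intro s
      induction s using Finset.induction_on with
      | empty => simpa using Relation.ReflTransGen.refl
      | insert v s _ ih =>
        rw [Finset.piecewise_insert]
        exact ih.tail (step_update β hn _ i v (y v))
    simpa using this univ
  have hup : ∀ k : ℕ, ∀ hk : k < M + 1,
      Relation.ReflTransGen (fun a b => 0 < chain n M β a b) (y, 0) (y, ⟨k, hk⟩) ∧
      Relation.ReflTransGen (fun a b => 0 < chain n M β a b) (y, ⟨k, hk⟩) (y, 0) := by
    intro k
    induction k with
    | zero => intro hk; exact ⟨Relation.ReflTransGen.refl, Relation.ReflTransGen.refl⟩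
    | succ k ih =>
      intro hk
      obtain ⟨h1, h2⟩ := ih (by omega)
      exact ⟨h1.tail (step_temp β y _ _ (Or.inl rfl)),
        Relation.ReflTransGen.head (step_temp β y _ _ (Or.inr rfl)) h2⟩
  exact hcol.trans ((hup i i.2).2.trans (hup j j.2).1)

lemma cnt_update_le (x : Fin n → Fin 3) (v : Fin n) (c : Fin 3) :
    cnt x 0 ≤ cnt (Function.update x v c) 0 + 1 := by
  unfold cnt
  refine (Finset.card_le_card (t := insert v (univ.filter fun w => Function.update x v c w = 0))
    ?_).trans (Finset.card_insert_le _ _)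
  intro w hw
  rw [mem_insert]
  by_cases h : w = v
  · exact Or.inl h
  · right
    simpa [Function.update_of_ne h] using hw

/-- The bottleneck set: at least half of the vertices have colour `0`. -/
def cut (n M : ℕ) : Finset ((Fin n → Fin 3) × Fin (M + 1)) :=
  univ.filter fun p => n ≤ 2 * cnt p.1 0

/-- For even `n` the chain can leave `cut` only from states where colour `0` occupies exactly
half of the vertices. -/
lemma flow_le (hn : 0 < n) (he : Even n) :
    ∑ p ∈ cut n M, ∑ q ∈ (cut n M)ᶜ, st n M β p * chain n M β p q
      ≤ ∑ i, (∑ x ∈ univ.filter (fun x : Fin n → Fin 3 => 2 * cnt x 0 = n),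
          pottsGibbs n (β i) x) / (M + 1) := by
  have hzero : ∀ p ∈ cut n M, ∀ q ∈ (cut n M)ᶜ, 2 * cnt p.1 0 ≠ n → chain n M β p q = 0 := by
    intro p hp q hq hne
    simp only [cut, mem_compl, mem_filter, mem_univ, true_and, not_le] at hp hq
    have h1 : q.1 ≠ p.1 := by
      intro h
      rw [h] at hq
      omega
    have h2 : q ≠ p := fun h => h1 (by rw [h])
    rw [chain_ne β h2]
    have e1 : tempRate β p q = 0 := by simp [tempRate, h1]
    have e2 : pottsProp n p.1 q.1 = 0 := by
      by_contra hc
      obtain ⟨v, c, hvc⟩ := exists_of_prop_ne hc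
      have := cnt_update_le p.1 v c
      rw [hvc] at this
      obtain ⟨r, hr⟩ := he
      omega
    simp [e1, levelRate, e2]
  calc ∑ p ∈ cut n M, ∑ q ∈ (cut n M)ᶜ, st n M β p * chain n M β p q
      ≤ ∑ p ∈ cut n M, if 2 * cnt p.1 0 = n then st n M β p else 0 := by
        refine Finset.sum_le_sum fun p hp => ?_
        split_ifs with h
        · rw [← Finset.mul_sum]
          refine mul_le_of_le_one_right (st_pos β p).le ?_
          rw [← chain_rowsum β p]
          exact Finset.sum_le_univ_sum_of_nonneg fun q => chain_nonneg β hn p q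
        · refine le_of_eq (Finset.sum_eq_zero fun q hq => ?_)
          rw [hzero p hp q hq h, mul_zero]
    _ ≤ ∑ p : (Fin n → Fin 3) × Fin (M + 1), if 2 * cnt p.1 0 = n then st n M β p else 0 := by
        refine Finset.sum_le_univ_sum_of_nonneg fun p => ?_
        split_ifs
        · exact (st_pos β p).le
        · exact le_refl _
    _ = _ := by
        rw [Fintype.sum_prod_type, Finset.sum_comm]
        refine Finset.sum_congr rfl fun i _ => ?_
        rw [Finset.sum_filter, Finset.sum_div]
        refine Finset.sum_congr rfl fun x _ => ?_
        split_ifs <;> simp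

end Tempering

/-! ### The bottleneck ratio and the conclusion -/

section Conclusion

open Real

/-- The equidistributed colourings minimise the Hamiltonian. -/
lemma pottsH_min {l : ℕ} (x y : Fin (12 * l) → Fin 3)
    (hy : y ∈ cls (12 * l) (4 * l) (4 * l) (4 * l)) :
    (pottsH (12 * l) y : ℝ) ≤ pottsH (12 * l) x := by
  rw [pottsH_real, pottsH_real]
  simp only [cls, mem_filter, mem_univ, true_and] at hy
  obtain ⟨h0, h1, h2⟩ := hy
  have hs : ((cnt x 0 : ℕ) : ℝ) + cnt x 1 + cnt x 2 = 12 * l := by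
    have := sum_cnt x
    rw [Fin.sum_univ_three] at this
    exact_mod_cast this
  rw [h0, h1, h2]
  push_cast
  nlinarith [sq_nonneg ((cnt x 0 : ℝ) - 4 * l), sq_nonneg ((cnt x 1 : ℝ) - 4 * l),
    sq_nonneg ((cnt x 2 : ℝ) - 4 * l)]

/-- Ratio of the critical weight per twelve vertices at the bottleneck `σ₀ = n / 2` to that of
the two coexisting phases. -/
noncomputable def ratio : ℝ := 2 ^ 27 / 108 ^ 4

lemma ratio_pos : 0 < ratio := by norm_num [ratio]

lemma ratio_lt_one : ratio < 1 := by norm_num [ratio]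

/-- At every inverse temperature up to the critical one the bottleneck is exponentially unlikely.
Raising `b` to the critical value only increases the weight of the bottleneck relative to the
equidistributed colourings, since these minimise the Hamiltonian. -/
lemma bottleneck {l : ℕ} (hl : 0 < l) {b : ℝ} (hb : b ≤ 4 * log 2 / (12 * l : ℕ)) :
    ∑ x ∈ univ.filter (fun x : Fin (12 * l) → Fin 3 => 2 * cnt x 0 = 12 * l),
      pottsGibbs (12 * l) b x ≤ ((12 * l : ℕ) + 1 : ℝ) ^ 5 * ratio ^ l := by
  set R := univ.filter (fun x : Fin (12 * l) → Fin 3 => 2 * cnt x 0 = 12 * l)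
  set D := cls (12 * l) (4 * l) (4 * l) (4 * l)
  have hD := disordered_lower hl
  have hR := sum_W_half_le hl
  set B : ℝ := (12 * l : ℕ) + 1 with hB
  have hB0 : 0 < B := by positivity
  set T : ℝ := 108 ^ (4 * l) / 4 with hT
  have hT0 : 0 < T := by positivity
  have hR' : ∑ x ∈ R, W (12 * l) x ≤ B ^ 3 * (ratio ^ l * T) := by
    refine hR.trans_eq ?_
    have : (2 : ℝ) ^ (27 * l) = ratio ^ l * 108 ^ (4 * l) := by
      rw [pow_mul, pow_mul, ← mul_pow]
      norm_num [ratio]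
    rw [this, hT]
    ring
  have hDpos : 0 < ∑ x ∈ D, W (12 * l) x := by
    by_contra hc
    have := mul_nonpos_of_nonneg_of_nonpos (pow_nonneg hB0.le 2) (not_lt.1 hc)
    linarith
  have hcross : (∑ x ∈ R, exp (b * pottsH (12 * l) x)) * ∑ y ∈ D, W (12 * l) y
      ≤ (∑ x ∈ R, W (12 * l) x) * ∑ y ∈ D, exp (b * pottsH (12 * l) y) := by
    rw [Finset.sum_mul_sum, Finset.sum_mul_sum]
    refine Finset.sum_le_sum fun x _ => Finset.sum_le_sum fun y hy => ?_
    unfold W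
    rw [← exp_add, ← exp_add]
    refine exp_le_exp.2 ?_
    nlinarith [mul_nonneg (sub_nonneg.2 hb) (sub_nonneg.2 (pottsH_min x y hy))]
  have hZ : 0 < ∑ y : Fin (12 * l) → Fin 3, exp (b * pottsH (12 * l) y) :=
    Finset.sum_pos (fun _ _ => exp_pos _) univ_nonempty
  simp only [pottsGibbs]
  rw [← Finset.sum_div, div_le_iff₀ hZ]
  have hDZ : ∑ y ∈ D, exp (b * pottsH (12 * l) y)
      ≤ ∑ y : Fin (12 * l) → Fin 3, exp (b * pottsH (12 * l) y) :=
    Finset.sum_le_univ_sum_of_nonneg fun _ => (exp_pos _).le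
  have hr0 : 0 ≤ ratio ^ l := pow_nonneg ratio_pos.le l
  refine le_of_mul_le_mul_right ?_ hDpos
  calc _ ≤ _ := hcross
    _ ≤ (B ^ 3 * (ratio ^ l * (B ^ 2 * ∑ x ∈ D, W (12 * l) x)))
          * ∑ y : Fin (12 * l) → Fin 3, exp (b * pottsH (12 * l) y) := by
        have : ∑ x ∈ R, W (12 * l) x
            ≤ B ^ 3 * (ratio ^ l * (B ^ 2 * ∑ x ∈ D, W (12 * l) x)) :=
          hR'.trans (by gcongr)
        refine mul_le_mul this hDZ (Finset.sum_nonneg fun _ _ => (exp_pos _).le) ?_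
        have := hDpos.le
        positivity
    _ = _ := by ring

/-- A class of near-maximal critical weight has at least inverse polynomial probability. -/
lemma mass_lower {l : ℕ} (hl : 0 < l) {b : ℝ} (hb : b = 4 * log 2 / (12 * l : ℕ))
    (C : Finset (Fin (12 * l) → Fin 3))
    (hC : (108 : ℝ) ^ (4 * l) / 4 ≤ ((12 * l : ℕ) + 1 : ℝ) ^ 2 * ∑ x ∈ C, W (12 * l) x) :
    1 ≤ ((12 * l : ℕ) + 1 : ℝ) ^ 5 * ∑ x ∈ C, pottsGibbs (12 * l) b x := by
  have hZ := sum_W_le hl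
  have hZ0 : 0 < ∑ x, W (12 * l) x := Finset.sum_pos (fun _ _ => exp_pos _) univ_nonempty
  have e : ∑ x ∈ C, pottsGibbs (12 * l) b x
      = (∑ x ∈ C, W (12 * l) x) / ∑ x, W (12 * l) x := by
    rw [Finset.sum_div]
    subst hb
    rfl
  rw [e, ← mul_div_assoc, one_le_div hZ0]
  calc _ ≤ _ := hZ
    _ ≤ ((12 * l : ℕ) + 1 : ℝ) ^ 3 * (((12 * l : ℕ) + 1 : ℝ) ^ 2 * ∑ x ∈ C, W (12 * l) x) := by
        gcongr
    _ = _ := by ring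

/-- A set containing a class of near-maximal critical weight at the coldest level has at least
inverse polynomial mass in the tempering chain. -/
lemma st_mass_lower {l M : ℕ} (hl : 0 < l) (β : Fin (M + 1) → ℝ)
    (hβ : β (Fin.last M) = 4 * log 2 / (12 * l : ℕ)) (C : Finset (Fin (12 * l) → Fin 3))
    (hC : (108 : ℝ) ^ (4 * l) / 4 ≤ ((12 * l : ℕ) + 1 : ℝ) ^ 2 * ∑ x ∈ C, W (12 * l) x)
    (A : Finset ((Fin (12 * l) → Fin 3) × Fin (M + 1))) (hA : ∀ x ∈ C, (x, Fin.last M) ∈ A) :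
    1 ≤ ((12 * l : ℕ) + 1 : ℝ) ^ 5 * (M + 1) * ∑ p ∈ A, st (12 * l) M β p := by
  have h1 := mass_lower hl hβ C hC
  have h2 : (∑ x ∈ C, pottsGibbs (12 * l) (β (Fin.last M)) x) / (M + 1)
      ≤ ∑ p ∈ A, st (12 * l) M β p := by
    rw [Finset.sum_div]
    calc ∑ x ∈ C, pottsGibbs (12 * l) (β (Fin.last M)) x / (M + 1)
        = ∑ p ∈ C ×ˢ {Fin.last M}, st (12 * l) M β p := by
          rw [Finset.sum_product]
          simp
      _ ≤ _ := by
          refine Finset.sum_le_sum_of_subset_of_nonneg ?_ fun p _ _ => (st_pos β p).le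
          rintro ⟨x, i⟩ hp
          rw [mem_product, mem_singleton] at hp
          obtain ⟨hx, hi⟩ := hp
          simp only at hx hi
          rw [hi]
          exact hA x hx
  have hM : (0 : ℝ) < M + 1 := by positivity
  rw [div_le_iff₀ hM] at h2
  calc (1 : ℝ) ≤ _ := h1
    _ ≤ ((12 * l : ℕ) + 1 : ℝ) ^ 5 * ((∑ p ∈ A, st (12 * l) M β p) * (M + 1)) := by gcongr
    _ = _ := by ring

/-- The lower bound on the mixing time, before the polynomial factor is absorbed. -/
lemma mixing_poly {k l M : ℕ} (hk : 1 ≤ k) (hl : 0 < l) (hM : M ≤ (12 * l) ^ k)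
    (β : Fin (M + 1) → ℝ) (hmono : Monotone β)
    (hβ : β (Fin.last M) = 4 * log 2 / (12 * l : ℕ))
    (hκ : ((12 * l : ℕ) + 1 : ℝ) ^ (15 + 2 * k) * ratio ^ l ≤ 1 / 2)
    {ε : ℝ} (hε : 0 < ε) (hε4 : ε < 1 / 4) :
    log (1 / ε) ≤ 8 * (((12 * l : ℕ) + 1 : ℝ) ^ (15 + 2 * k) * ratio ^ l)
      * mixingTime (chain (12 * l) M β) (st (12 * l) M β) ε := by
  have hn : 0 < 12 * l := by omega
  have hA := st_mass_lower hl β hβ _ (ordered_lower hl) (cut (12 * l) M) (by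
    intro x hx
    simp only [cls, cut, mem_filter, mem_univ, true_and] at hx ⊢
    omega)
  have hAc := st_mass_lower hl β hβ _ (disordered_lower hl) (cut (12 * l) M)ᶜ (by
    intro x hx
    simp only [cls, cut, mem_compl, mem_filter, mem_univ, true_and] at hx ⊢
    omega)
  have hflow : ∑ p ∈ cut (12 * l) M, ∑ q ∈ (cut (12 * l) M)ᶜ,
      st (12 * l) M β p * chain (12 * l) M β p q ≤ ((12 * l : ℕ) + 1 : ℝ) ^ 5 * ratio ^ l := by
    refine (flow_le β hn ⟨6 * l, by ring⟩).trans ?_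
    have hM1 : (M : ℝ) + 1 ≠ 0 := by positivity
    calc _ ≤ ∑ _i : Fin (M + 1), ((12 * l : ℕ) + 1 : ℝ) ^ 5 * ratio ^ l / (M + 1) := by
          refine Finset.sum_le_sum fun i _ => ?_
          gcongr
          exact bottleneck hl (hβ ▸ hmono (Fin.le_last i))
      _ = _ := by
          rw [Finset.sum_const, card_univ, Fintype.card_fin, nsmul_eq_mul]
          push_cast
          field_simp
  have hMB : (M : ℝ) + 1 ≤ ((12 * l : ℕ) + 1 : ℝ) ^ k := by
    have h : M + 1 ≤ (12 * l + 1) ^ k := by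
      have := Nat.pow_lt_pow_left (Nat.lt_succ_self (12 * l)) (by omega : k ≠ 0)
      simp only [Nat.succ_eq_add_one] at this
      omega
    exact_mod_cast h
  set B : ℝ := (12 * l : ℕ) + 1 with hB
  have hB0 : 0 < B := by positivity
  have hr0 : 0 ≤ ratio ^ l := pow_nonneg ratio_pos.le l
  have up : ∀ s : ℝ, 1 ≤ B ^ 5 * (M + 1) * s → 0 < s ∧ 1 ≤ B ^ (5 + k) * s := by
    intro s hs
    have hs0 : 0 < s := by
      by_contra hc
      have : B ^ 5 * (M + 1) * s ≤ 0 :=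
        mul_nonpos_of_nonneg_of_nonpos (by positivity) (not_lt.1 hc)
      linarith
    refine ⟨hs0, hs.trans ?_⟩
    rw [pow_add]
    gcongr
  obtain ⟨hA0, hA1⟩ := up _ hA
  obtain ⟨hAc0, hAc1⟩ := up _ hAc
  refine mixing_lower (st_pos β) (st_sum β) (chain_nonneg β hn) (chain_rowsum β)
    (chain_reversible β) (chain_diag_pos β hn) (chain_irreducible β hn) (cut (12 * l) M)
    hA0 hAc0 hκ (hflow.trans ?_) hε hε4
  have h := one_le_mul_of_one_le_of_one_le hA1 hAc1
  calc B ^ 5 * ratio ^ l ≤ B ^ 5 * ratio ^ l * _ :=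
        le_mul_of_one_le_right (by positivity) h
    _ = _ := by ring

/-- The exponential decay of the bottleneck absorbs any polynomial factor. -/
lemma absorb (d : ℕ) {γ : ℝ} (hγ : 0 < γ) :
    ∃ N : ℕ, ∀ n : ℕ, N ≤ n → 8 * ((n : ℝ) + 1) ^ d ≤ exp (γ * n) := by
  have h := (isLittleO_pow_exp_pos_mul_atTop d hγ).bound
    (c := 1 / (8 * exp γ)) (by positivity)
  have h' := (tendsto_natCast_atTop_atTop (R := ℝ)).comp (Filter.tendsto_add_atTop_nat 1)
  obtain ⟨N, hN⟩ := Filter.eventually_atTop.1 (h'.eventually h)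
  refine ⟨N, fun n hn => ?_⟩
  have := hN n hn
  simp only [Function.comp_apply, norm_eq_abs, abs_exp] at this
  push_cast at this
  rw [abs_of_nonneg (by positivity), mul_add, exp_add, mul_one, div_mul_eq_mul_div,
    le_div_iff₀ (by positivity), one_mul] at this
  refine le_of_mul_le_mul_right ?_ (exp_pos γ)
  linarith

lemma ratio_pow (l : ℕ) : ratio ^ l = exp (-(-log ratio / 12 * (12 * l : ℕ))) := by
  rw [← exp_log (pow_pos ratio_pos l), log_pow]
  push_cast
  congr 1
  ring

end Conclusion

end PottsTorpid

/-- For every exponent `k ≥ 1` there are `c₁ > 0` and `N` such that for all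
`n ≥ N` divisible by 12, every `M ≤ n^k` and every nondecreasing sequence of inverse
temperatures `0 ≤ β₀ ≤ ⋯ ≤ β_M = 4·ln 2/n`, the simulated tempering chain for the
3-state mean-field Potts model on `n` vertices has mixing time at least
`e^(c₁ n)·ln(1/ε)` for every `ε ∈ (0, 1/4)`. -/
theorem potts_tempering_torpid :
    ∀ k : ℕ, 1 ≤ k → ∃ c₁ : ℝ, 0 < c₁ ∧ ∃ N : ℕ, ∀ n : ℕ, N ≤ n → 12 ∣ n →
      ∀ M : ℕ, M ≤ n ^ k → ∀ β : Fin (M+1) → ℝ,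
        0 ≤ β 0 → Monotone β → β (Fin.last M) = 4 * Real.log 2 / n →
        ∀ ε : ℝ, 0 < ε → ε < 1/4 →
          Real.exp (c₁ * n) * Real.log (1/ε) ≤
            (mixingTime
              (temperingChain
                (fun i : Fin (M+1) => metropolis (pottsProp n) (pottsGibbs n (β i)))
                (fun i => pottsGibbs n (β i)))
              (fun p : (Fin n → Fin 3) × Fin (M+1) =>
                pottsGibbs n (β p.2) p.1 / (M + 1)) ε : ℝ) := by
  intro k hk
  have hγ : 0 < -Real.log PottsTorpid.ratio / 12 :=
    div_pos (neg_pos.2 (Real.log_neg PottsTorpid.ratio_pos PottsTorpid.ratio_lt_one)) (by norm_num)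
  set γ := -Real.log PottsTorpid.ratio / 12 with hγdef
  obtain ⟨N, hN⟩ := PottsTorpid.absorb (15 + 2 * k) (half_pos hγ)
  refine ⟨γ / 2, half_pos hγ, N + 1, ?_⟩
  rintro n hn ⟨l, rfl⟩ M hM β _ hmono hβ ε hε hε4
  have hl : 0 < l := by omega
  have h8 := hN (12 * l) (by omega)
  -- Half of the decay rate `γ` pays for the polynomial factor, the other half remains.
  have h1 : Real.exp (γ / 2 * (12 * l : ℕ))
      * (8 * (((12 * l : ℕ) + 1 : ℝ) ^ (15 + 2 * k) * PottsTorpid.ratio ^ l)) ≤ 1 := by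
    calc _ = Real.exp (γ / 2 * (12 * l : ℕ)) * PottsTorpid.ratio ^ l
          * (8 * ((12 * l : ℕ) + 1 : ℝ) ^ (15 + 2 * k)) := by ring
      _ ≤ Real.exp (γ / 2 * (12 * l : ℕ)) * PottsTorpid.ratio ^ l
          * Real.exp (γ / 2 * (12 * l : ℕ)) := by
          have := pow_nonneg PottsTorpid.ratio_pos.le l
          gcongr
      _ = 1 := by
          rw [PottsTorpid.ratio_pow, ← hγdef, ← Real.exp_add, ← Real.exp_add, Real.exp_eq_one_iff]
          ring
  have hκ0 : 0 ≤ 8 * (((12 * l : ℕ) + 1 : ℝ) ^ (15 + 2 * k) * PottsTorpid.ratio ^ l) := by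
    have := pow_nonneg PottsTorpid.ratio_pos.le l
    positivity
  have he : 1 ≤ Real.exp (γ / 2 * (12 * l : ℕ)) := Real.one_le_exp (by positivity)
  have hκ : ((12 * l : ℕ) + 1 : ℝ) ^ (15 + 2 * k) * PottsTorpid.ratio ^ l ≤ 1 / 2 := by
    have := (le_mul_of_one_le_left hκ0 he).trans h1
    linarith
  have h2 := PottsTorpid.mixing_poly hk hl hM β hmono hβ hκ hε hε4
  calc _ ≤ Real.exp (γ / 2 * (12 * l : ℕ)) * _ :=
        mul_le_mul_of_nonneg_left h2 (Real.exp_pos _).le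
    _ = _ * _ := (mul_assoc _ _ _).symm
    _ ≤ 1 * _ := mul_le_mul_of_nonneg_right h1 (Nat.cast_nonneg _)
    _ = _ := one_mul _
end

section
/- For every exponent k ≥ 1 there exist a constant c₄ > 0 and N ∈ ℕ such that for all n ≥ N divisible by 12, for every M ≤ n^k and every sequence of inverse temperatures 0 ≤ β₀ ≤ β₁ ≤ … ≤ β_M = 4·ln 2/n, the conductance Φ of the simulated tempering chain for the 3-state mean-field Potts model on n vertices with the distributions π_{β₀},…,π_{β_M} satisfies Φ ≤ e^{−c₄ n}. -/
/-!
The cut `A = {σ₁ > n/2}`, taken at all temperatures simultaneously, has exponentially small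
conductance.

* Its mass is at most `1/2`, since majorities of different colours are exclusive and equally
  likely (`majority_mass_le`).
* Temperature moves do not change the configuration, and a level move can leave `A` only by
  landing on the slice `σ₁ = n/2`. As `π(x) min(1, π(y)/π(x)) ≤ π(y)` and the proposal is
  column-substochastic, the flow out of `A` is at most the average over the levels of the Gibbs
  mass of that slice (`flow_le`).
* At `β = 4 log 2 / n` the weight of a colour type with proportions `s` is
  `exp (n F(s))` up to polynomial factors, where `F(s) = -∑ sᵢ log sᵢ + 2 log 2 ∑ sᵢ²` is
  `freeEnergy`. Its maximum is attained both at `(1/3, 1/3, 1/3)` and at `(2/3, 1/6, 1/6)`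
  (`freeEnergy_le`), while on `s₁ = 1/2` it is at most `(9/4) log 2` (`freeEnergy_half_le`), lower
  by the gap `log 3 - (19/12) log 2 > 0`, as `2^19 < 3^12`.
* Every configuration has at least the energy `n²/6 - n/2` of the balanced one. Hence, relative to
  the lower bound `3^n exp (β (n²/6 - n/2))` on the partition function, the weight of a
  configuration increases with `β`, and the critical estimate bounds the mass of the slice at
  every lower `β` (`boundary_mass_le`).
* At the last level, the orbit of a configuration with counts `(2n/3, n/6, n/6)` shows that `A` has
  at least inverse polynomial mass (`ordered_mass_ge`); averaging over `M + 1 ≤ n^k + 1` levels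
  costs another polynomial factor.

To bound `F`, write one proportion `≥ 1/3` as `(1+v)/2` and split the rest. Pinsker's
inequality for the split shows that equal parts are optimal, and what remains is the tangent line
at `v² = 1/9` of `(1+v) log (1+v) + (1-v) log (1-v)`, a convex function of `v²`
(`tangent_le_coinDef`).
-/

open Finset

/-! ### Real inequalities behind the free energy -/

/-- Twice the relative entropy of the two-point law `((1+v)/2, (1-v)/2)` with respect to the
fair coin: `(1+v) log (1+v) + (1-v) log (1-v)`. -/
noncomputable def coinDef (v : ℝ) : ℝ := -Real.negMulLog (1 + v) - Real.negMulLog (1 - v)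

lemma coinDef_neg (v : ℝ) : coinDef (-v) = coinDef v := by
  unfold coinDef
  rw [sub_neg_eq_add, ← sub_eq_add_neg]
  ring

lemma coinDef_abs (v : ℝ) : coinDef |v| = coinDef v := by
  rcases abs_choice v with h | h <;> rw [h]
  exact coinDef_neg v

lemma continuous_coinDef : Continuous coinDef := by
  unfold coinDef
  fun_prop

lemma hasDerivAt_coinDef {v : ℝ} (h0 : -1 < v) (h1 : v < 1) :
    HasDerivAt coinDef (Real.log (1 + v) - Real.log (1 - v)) v := by
  have ha : HasDerivAt (fun v : ℝ => 1 + v) 1 v := by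
    simpa using (hasDerivAt_id v).const_add 1
  have hb : HasDerivAt (fun v : ℝ => 1 - v) (-1) v := by
    simpa using (hasDerivAt_id v).const_sub 1
  have h2 := (Real.hasDerivAt_negMulLog (x := 1 + v) (by linarith)).comp v ha
  have h3 := (Real.hasDerivAt_negMulLog (x := 1 - v) (by linarith)).comp v hb
  have h4 := h2.neg.sub h3
  refine h4.congr_deriv ?_
  ring

/-- `(log (1+v) - log (1-v)) / v` is nondecreasing on `(0, 1)`, since all coefficients of its
power series are nonnegative and it is even. -/
lemma log_ratio_mono {v w : ℝ} (hv : 0 ≤ v) (hvw : v ≤ w) (hw : w < 1) :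
    w * (Real.log (1 + v) - Real.log (1 - v)) ≤ v * (Real.log (1 + w) - Real.log (1 - w)) := by
  have h1 := (Real.hasSum_log_sub_log_of_abs_lt_one (x := v)
    (by rw [abs_of_nonneg hv]; linarith)).mul_left w
  have h2 := (Real.hasSum_log_sub_log_of_abs_lt_one (x := w)
    (by rw [abs_of_nonneg (hv.trans hvw)]; linarith)).mul_left v
  refine hasSum_le (fun k => ?_) h1 h2
  have hk : v ^ (2 * k) ≤ w ^ (2 * k) := pow_le_pow_left₀ hv hvw _
  have hw0 : 0 ≤ w := hv.trans hvw
  calc w * (2 * (1 / (2 * (k : ℝ) + 1)) * v ^ (2 * k + 1))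
      = (w * v * (2 * (1 / (2 * (k : ℝ) + 1)))) * v ^ (2 * k) := by ring
    _ ≤ (w * v * (2 * (1 / (2 * (k : ℝ) + 1)))) * w ^ (2 * k) := by gcongr
    _ = v * (2 * (1 / (2 * (k : ℝ) + 1)) * w ^ (2 * k + 1)) := by ring

lemma two_mul_le_log_ratio {v : ℝ} (hv : 0 ≤ v) (h1 : v < 1) :
    2 * v ≤ Real.log (1 + v) - Real.log (1 - v) := by
  have h := (Real.hasSum_log_sub_log_of_abs_lt_one (x := v) (by rwa [abs_of_nonneg hv]))
  have := le_hasSum h 0 (fun k _ => by positivity)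
  simpa using this

lemma log_ratio_third : Real.log (1 + 1 / 3) - Real.log (1 - 1 / 3) = Real.log 2 := by
  rw [← Real.log_div (by norm_num) (by norm_num)]
  norm_num

/-- Pinsker's inequality for a coin. -/
lemma sq_le_coinDef {v : ℝ} (hv : |v| ≤ 1) : v ^ 2 ≤ coinDef v := by
  have hmono : MonotoneOn (fun v : ℝ => coinDef v - v ^ 2) (Set.Icc 0 1) := by
    refine monotoneOn_of_hasDerivWithinAt_nonneg (convex_Icc 0 1)
      (f' := fun v => (Real.log (1 + v) - Real.log (1 - v)) - 2 * v) ?_ ?_ ?_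
    · exact (continuous_coinDef.sub (continuous_pow 2)).continuousOn
    · intro x hx
      rw [interior_Icc] at hx
      have := (hasDerivAt_coinDef (by linarith [hx.1]) hx.2).sub (hasDerivAt_pow 2 x)
      exact (this.congr_deriv (by simp)).hasDerivWithinAt
    · intro x hx
      rw [interior_Icc] at hx
      have := two_mul_le_log_ratio hx.1.le hx.2
      linarith
  have := hmono (Set.left_mem_Icc.2 zero_le_one) ⟨abs_nonneg v, hv⟩ (abs_nonneg v)
  simp only [coinDef_abs, sq_abs] at this
  have h0 : coinDef 0 = 0 := by simp [coinDef]
  rw [h0] at this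
  linarith

lemma coinDef_third : coinDef (1 / 3) = 10 / 3 * Real.log 2 - 2 * Real.log 3 := by
  have h1 : Real.log (4 / 3) = 2 * Real.log 2 - Real.log 3 := by
    rw [Real.log_div (by norm_num) (by norm_num), show (4 : ℝ) = 2 ^ 2 by norm_num, Real.log_pow]
    norm_num
  have h2 : Real.log (2 / 3) = Real.log 2 - Real.log 3 :=
    Real.log_div (by norm_num) (by norm_num)
  unfold coinDef Real.negMulLog
  rw [show (1 + 1 / 3 : ℝ) = 4 / 3 by norm_num, show (1 - 1 / 3 : ℝ) = 2 / 3 by norm_num, h1, h2]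
  ring

/-- `coinDef` is convex as a function of `v ^ 2`; this is its tangent line at `v ^ 2 = 1 / 9`. -/
lemma tangent_le_coinDef {v : ℝ} (hv : |v| ≤ 1) :
    10 / 3 * Real.log 2 - 2 * Real.log 3 + 3 / 2 * Real.log 2 * (v ^ 2 - 1 / 9) ≤ coinDef v := by
  set D : ℝ → ℝ := fun v => coinDef v - 3 / 2 * Real.log 2 * v ^ 2 with hD
  have hcont : Continuous D := by
    have := continuous_coinDef
    fun_prop
  have hderiv : ∀ x : ℝ, 0 < x → x < 1 →
      HasDerivAt D ((Real.log (1 + x) - Real.log (1 - x)) - 3 * Real.log 2 * x) x := by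
    intro x h0 h1
    have := (hasDerivAt_coinDef (by linarith) h1).sub
      ((hasDerivAt_pow 2 x).const_mul (3 / 2 * Real.log 2))
    refine this.congr_deriv ?_
    simp
    ring
  have hmono : MonotoneOn D (Set.Icc (1 / 3) 1) := by
    refine monotoneOn_of_hasDerivWithinAt_nonneg (convex_Icc _ _)
      (f' := fun x => (Real.log (1 + x) - Real.log (1 - x)) - 3 * Real.log 2 * x)
      hcont.continuousOn ?_ ?_
    · intro x hx
      rw [interior_Icc] at hx
      exact (hderiv x (by linarith [hx.1]) hx.2).hasDerivWithinAt
    · intro x hx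
      rw [interior_Icc] at hx
      have := log_ratio_mono (v := 1 / 3) (by norm_num) hx.1.le hx.2
      rw [log_ratio_third] at this
      linarith
  have hanti : AntitoneOn D (Set.Icc 0 (1 / 3)) := by
    refine antitoneOn_of_hasDerivWithinAt_nonpos (convex_Icc _ _)
      (f' := fun x => (Real.log (1 + x) - Real.log (1 - x)) - 3 * Real.log 2 * x)
      hcont.continuousOn ?_ ?_
    · intro x hx
      rw [interior_Icc] at hx
      exact (hderiv x hx.1 (by linarith [hx.2])).hasDerivWithinAt
    · intro x hx
      rw [interior_Icc] at hx
      have := log_ratio_mono (w := 1 / 3) hx.1.le hx.2.le (by norm_num)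
      rw [log_ratio_third] at this
      linarith
  have key : D (1 / 3) ≤ D |v| := by
    rcases le_total |v| (1 / 3) with h | h
    · exact hanti ⟨abs_nonneg v, h⟩ ⟨by norm_num, le_rfl⟩ h
    · exact hmono ⟨le_rfl, by norm_num⟩ ⟨h, hv⟩ h
  simp only [hD, coinDef_abs, sq_abs, coinDef_third] at key
  linarith

/-- Splitting a mass `t` in proportions `(1+w)/2, (1-w)/2`. -/
lemma negMulLog_split (t w : ℝ) :
    Real.negMulLog (t * (1 + w) / 2) + Real.negMulLog (t * (1 - w) / 2)
      = Real.negMulLog t + t * Real.log 2 - t / 2 * coinDef w := by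
  have h2 : Real.negMulLog (1 / 2) = Real.log 2 / 2 := by
    unfold Real.negMulLog
    rw [one_div, Real.log_inv]
    ring
  rw [show t * (1 + w) / 2 = t * (1 / 2) * (1 + w) by ring,
    show t * (1 - w) / 2 = t * (1 / 2) * (1 - w) by ring,
    Real.negMulLog_mul (t * (1 / 2)), Real.negMulLog_mul (t * (1 / 2)),
    Real.negMulLog_mul t (1 / 2), h2]
  unfold coinDef
  ring

/-- The free energy of the colour proportions `(a, b, c)` at the critical inverse temperature:
entropy plus `2 log 2` times the sum of squares. -/
noncomputable def freeEnergy (a b c : ℝ) : ℝ :=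
  Real.negMulLog a + Real.negMulLog b + Real.negMulLog c
    + 2 * Real.log 2 * (a ^ 2 + b ^ 2 + c ^ 2)

/-- When one proportion is `(1+v)/2 ≥ 1/3`, the free energy is largest if the other two
proportions are equal. -/
lemma freeEnergy_le_slice {a b c : ℝ} (hb : 0 ≤ b) (hc : 0 ≤ c) (hs : a + b + c = 1)
    (ha : 1 / 3 ≤ a) :
    freeEnergy a b c ≤ 9 / 4 * Real.log 2 + 3 / 4 * Real.log 2 * (2 * a - 1) ^ 2
      - 1 / 2 * coinDef (2 * a - 1) := by
  have hlog : Real.log 2 < 3 / 4 := by linarith [Real.log_two_lt_d9]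
  have hlog0 : 0 < Real.log 2 := Real.log_pos (by norm_num)
  obtain ⟨t, ht⟩ : ∃ t, t = b + c := ⟨_, rfl⟩
  obtain ⟨w, hw1, hbw, hcw⟩ : ∃ w : ℝ, |w| ≤ 1 ∧ b = t * (1 + w) / 2 ∧ c = t * (1 - w) / 2 := by
    rcases (add_nonneg hb hc).eq_or_lt with h | h
    · exact ⟨0, by simp, by nlinarith, by nlinarith⟩
    · refine ⟨(b - c) / t, ?_, ?_, ?_⟩
      · rw [abs_le]
        constructor
        · rw [le_div_iff₀ (by linarith)]; linarith
        · rw [div_le_iff₀ (by linarith)]; linarith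
      · have : t ≠ 0 := by linarith
        field_simp; linarith
      · have : t ≠ 0 := by linarith
        field_simp; linarith
  have hsplit := negMulLog_split t w
  rw [← hbw, ← hcw] at hsplit
  have hsplit1 := negMulLog_split 1 (2 * a - 1)
  rw [show (1 : ℝ) * (1 + (2 * a - 1)) / 2 = a by ring,
    show (1 : ℝ) * (1 - (2 * a - 1)) / 2 = t by linarith, Real.negMulLog_one] at hsplit1
  have hp := sq_le_coinDef hw1
  have ht0 : 0 ≤ t := by linarith
  have ht1 : t ≤ 2 / 3 := by linarith
  have e1 : t / 2 * w ^ 2 ≤ t / 2 * coinDef w := by gcongr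
  have e2 : 0 ≤ t * w ^ 2 * (1 / 2 - Real.log 2 * t) := by
    apply mul_nonneg (by positivity)
    nlinarith
  have e3 : b ^ 2 + c ^ 2 = t ^ 2 / 2 + t ^ 2 * w ^ 2 / 2 := by rw [hbw, hcw]; ring
  have hat : a = 1 - t := by linarith
  have e4 : freeEnergy a b c
      = Real.log 2 - 1 / 2 * coinDef (2 * a - 1) + t * Real.log 2 - t / 2 * coinDef w
        + 2 * Real.log 2 * (a ^ 2 + (t ^ 2 / 2 + t ^ 2 * w ^ 2 / 2)) := by
    rw [← e3]
    unfold freeEnergy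
    linear_combination hsplit + hsplit1
  rw [e4]
  generalize coinDef (2 * a - 1) = X
  subst hat
  nlinarith

/-- On the slice `a = 1/2` the free energy stays below the value at the uniform proportions. -/
lemma freeEnergy_half_le {b c : ℝ} (hb : 0 ≤ b) (hc : 0 ≤ c) (hs : 1 / 2 + b + c = 1) :
    freeEnergy (1 / 2) b c ≤ 9 / 4 * Real.log 2 := by
  have := freeEnergy_le_slice hb hc hs (by norm_num)
  norm_num [coinDef] at this ⊢
  linarith

lemma freeEnergy_le_of_third_le {a b c : ℝ} (hb : 0 ≤ b) (hc : 0 ≤ c)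
    (hs : a + b + c = 1) (ha : 1 / 3 ≤ a) :
    freeEnergy a b c ≤ Real.log 3 + 2 / 3 * Real.log 2 := by
  have h1 := freeEnergy_le_slice hb hc hs ha
  have h2 := tangent_le_coinDef (v := 2 * a - 1) (by rw [abs_le]; constructor <;> linarith)
  nlinarith

/-- The value at `(1/3, 1/3, 1/3)`, which equals the one at `(2/3, 1/6, 1/6)`, is the global
maximum of the critical free energy. -/
lemma freeEnergy_le {a b c : ℝ} (ha : 0 ≤ a) (hb : 0 ≤ b) (hc : 0 ≤ c) (hs : a + b + c = 1) :
    freeEnergy a b c ≤ Real.log 3 + 2 / 3 * Real.log 2 := by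
  by_cases h1 : 1 / 3 ≤ a
  · exact freeEnergy_le_of_third_le hb hc hs h1
  by_cases h2 : 1 / 3 ≤ b
  · have := freeEnergy_le_of_third_le (a := b) ha hc (by linarith) h2
    unfold freeEnergy at *
    linarith
  · have := freeEnergy_le_of_third_le (a := c) ha hb (by linarith) (by linarith)
    unfold freeEnergy at *
    linarith

/-- The gap between the free energies at the uniform proportions and on the slice `a = 1/2`;
it is positive because `2 ^ 19 < 3 ^ 12`. -/
lemma gap_pos : 0 < Real.log 3 - 19 / 12 * Real.log 2 := by
  have h : Real.log ((2 : ℝ) ^ 19) < Real.log ((3 : ℝ) ^ 12) :=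
    Real.log_lt_log (by norm_num) (by norm_num)
  rw [Real.log_pow, Real.log_pow] at h
  push_cast at h
  linarith

lemma log_factorial_ge (m : ℕ) : -(m : ℝ) - Real.negMulLog m ≤ Real.log (m.factorial) := by
  rcases Nat.eq_zero_or_pos m with rfl | hm
  · simp
  have h := Real.pow_div_factorial_le_exp (x := m) (by positivity) m
  have hf : (0 : ℝ) < m.factorial := by exact_mod_cast m.factorial_pos
  have hm' : (0 : ℝ) < m := by exact_mod_cast hm
  have := Real.log_le_log (by positivity) h
  rw [Real.log_exp, Real.log_div (by positivity) hf.ne', Real.log_pow] at this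
  unfold Real.negMulLog
  linarith

lemma log_factorial_le (m : ℕ) :
    Real.log (m.factorial) ≤ -(m : ℝ) - Real.negMulLog m + Real.log m + 1 := by
  induction m with
  | zero => simp
  | succ m ih =>
    rcases Nat.eq_zero_or_pos m with rfl | hm
    · simp
    have hf : (0 : ℝ) < m.factorial := by exact_mod_cast m.factorial_pos
    have hm' : (0 : ℝ) < m := by exact_mod_cast hm
    rw [Nat.factorial_succ]
    push_cast
    rw [Real.log_mul (by positivity) hf.ne']
    unfold Real.negMulLog at *
    -- the induction step is `1 / (m+1) ≤ log ((m+1)/m)`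
    have h := Real.log_le_sub_one_of_pos (x := (m : ℝ) / (m + 1)) (by positivity)
    rw [Real.log_div (by positivity) (by positivity)] at h
    have h2 : ((m : ℝ) + 1) * (Real.log m - Real.log (m + 1)) ≤ -1 := by
      calc ((m : ℝ) + 1) * (Real.log m - Real.log (m + 1))
          ≤ ((m : ℝ) + 1) * ((m : ℝ) / (m + 1) - 1) := by gcongr
        _ = -1 := by field_simp; ring
    linarith

/-! ### Colour counts -/

/-- The number of vertices of colour `c`. -/
def cnt {n : ℕ} (x : Fin n → Fin 3) (c : Fin 3) : ℕ := #{v | x v = c}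

lemma sum_cnt {n : ℕ} (x : Fin n → Fin 3) : ∑ c, cnt x c = n := by
  have := Finset.card_eq_sum_card_fiberwise (f := x) (s := univ) (t := univ) (by simp)
  simpa [cnt] using this.symm

lemma cnt_le {n : ℕ} (x : Fin n → Fin 3) (c : Fin 3) : cnt x c ≤ n := by
  simpa [cnt] using Finset.card_filter_le (univ : Finset (Fin n)) (fun v => x v = c)

lemma cnt_sum_real {n : ℕ} (x : Fin n → Fin 3) :
    (cnt x 0 : ℝ) + cnt x 1 + cnt x 2 = n := by
  have := sum_cnt x
  rw [Fin.sum_univ_three] at this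
  exact_mod_cast this

/-- Ordered pairs of equal colour: those with `i < j`, those with `j < i`, and the diagonal. -/
lemma sum_cnt_sq {n : ℕ} (x : Fin n → Fin 3) : ∑ c, cnt x c ^ 2 = 2 * pottsH n x + n := by
  have h1 : #{p : Fin n × Fin n | x p.1 = x p.2} = ∑ c, cnt x c ^ 2 := by
    rw [Finset.card_eq_sum_card_fiberwise (f := fun p => x p.1) (t := univ) (by simp)]
    refine Finset.sum_congr rfl fun c _ => ?_
    rw [sq, cnt, ← Finset.card_product]
    congr 1
    ext p
    simp only [mem_filter, mem_univ, true_and, mem_product]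
    constructor
    · rintro ⟨h, h'⟩; exact ⟨h', h ▸ h'⟩
    · rintro ⟨h, h'⟩; exact ⟨h.trans h'.symm, h⟩
  have h2 : #{p : Fin n × Fin n | p.2 < p.1 ∧ x p.1 = x p.2} = pottsH n x := by
    unfold pottsH
    refine Finset.card_bij (fun p _ => p.swap) ?_ ?_ ?_
    · intro p hp
      simp only [mem_filter, mem_univ, true_and] at hp
      simp [hp.1, hp.2]
    · intro p _ q _ h
      exact Prod.swap_injective h
    · intro p hp
      simp only [mem_filter, mem_univ, true_and] at hp
      exact ⟨p.swap, by simp [hp.1, hp.2], by simp⟩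
  have h3 : #{p : Fin n × Fin n | p.1 = p.2} = n := by
    have : ({p : Fin n × Fin n | p.1 = p.2} : Finset _) = univ.image (fun v => (v, v)) := by
      ext ⟨a, b⟩
      simp
    rw [this, Finset.card_image_of_injective _ (fun a b h => (Prod.ext_iff.1 h).1)]
    simp
  have h4 : ({p : Fin n × Fin n | x p.1 = x p.2} : Finset _)
      = ({p : Fin n × Fin n | p.1 < p.2 ∧ x p.1 = x p.2} : Finset _)
        ∪ (({p : Fin n × Fin n | p.2 < p.1 ∧ x p.1 = x p.2} : Finset _)
          ∪ ({p : Fin n × Fin n | p.1 = p.2} : Finset _)) := by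
    ext p
    simp only [mem_filter, mem_univ, true_and, mem_union]
    constructor
    · intro h
      rcases lt_trichotomy p.1 p.2 with h' | h' | h'
      · exact Or.inl ⟨h', h⟩
      · exact Or.inr (Or.inr h')
      · exact Or.inr (Or.inl ⟨h', h⟩)
    · rintro (h | h | h)
      · exact h.2
      · exact h.2
      · rw [h]
  rw [← h1, h4, Finset.card_union_of_disjoint, Finset.card_union_of_disjoint, h2, h3]
  · unfold pottsH
    ring
  · rw [Finset.disjoint_filter]
    intro p _ h h'
    exact absurd h' h.1.ne'
  · rw [Finset.disjoint_union_right, Finset.disjoint_filter, Finset.disjoint_filter]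
    exact ⟨fun p _ h h' => absurd h'.1 (not_lt.2 h.1.le), fun p _ h h' => absurd h' h.1.ne⟩

/-- The sum of the squared colour counts, as a real number. -/
noncomputable def sqSum {n : ℕ} (x : Fin n → Fin 3) : ℝ :=
  (cnt x 0 : ℝ) ^ 2 + (cnt x 1 : ℝ) ^ 2 + (cnt x 2 : ℝ) ^ 2

lemma pottsH_eq {n : ℕ} (x : Fin n → Fin 3) : (pottsH n x : ℝ) = (sqSum x - n) / 2 := by
  have := sum_cnt_sq x
  rw [Fin.sum_univ_three] at this
  have h : (cnt x 0 : ℝ) ^ 2 + (cnt x 1 : ℝ) ^ 2 + (cnt x 2 : ℝ) ^ 2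
    = 2 * (pottsH n x : ℝ) + n := by exact_mod_cast this
  unfold sqSum
  linarith

lemma sqSum_ge {n : ℕ} (x : Fin n → Fin 3) : (n : ℝ) ^ 2 / 3 ≤ sqSum x := by
  rw [← cnt_sum_real x]
  unfold sqSum
  nlinarith [sq_nonneg ((cnt x 0 : ℝ) - cnt x 1), sq_nonneg ((cnt x 1 : ℝ) - cnt x 2),
    sq_nonneg ((cnt x 0 : ℝ) - cnt x 2)]

/-- The critical free energy of the colour proportions of `x`. -/
noncomputable def fe {n : ℕ} (x : Fin n → Fin 3) : ℝ :=
  freeEnergy (cnt x 0 / n) (cnt x 1 / n) (cnt x 2 / n)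

/-- The probability of `x` under independent colours with the proportions of `x`. -/
lemma prod_prop_eq {n : ℕ} (hn : 0 < n) (x : Fin n → Fin 3) :
    ∏ v, ((cnt x (x v) : ℝ) / n) =
      Real.exp (2 * Real.log 2 * sqSum x / n - n * fe x) := by
  have hn' : (0 : ℝ) < n := by exact_mod_cast hn
  have hpos : ∀ v, 0 < (cnt x (x v) : ℝ) / n := by
    intro v
    have : 0 < cnt x (x v) := Finset.card_pos.2 ⟨v, by simp⟩
    positivity
  have h1 : ∏ v, ((cnt x (x v) : ℝ) / n)
      = Real.exp (∑ v, Real.log ((cnt x (x v) : ℝ) / n)) := by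
    rw [Real.exp_sum]
    exact Finset.prod_congr rfl fun v _ => (Real.exp_log (hpos v)).symm
  have h2 : ∑ v, Real.log ((cnt x (x v) : ℝ) / n)
      = ∑ c, (cnt x c : ℝ) * Real.log ((cnt x c : ℝ) / n) := by
    rw [← Finset.sum_fiberwise_of_maps_to (g := x) (t := univ) (by simp)]
    refine Finset.sum_congr rfl fun c _ => ?_
    rw [Finset.sum_congr rfl (g := fun _ => Real.log ((cnt x c : ℝ) / n))]
    · simp [cnt]
    · intro v hv
      rw [(mem_filter.1 hv).2]
  rw [h1, h2]
  congr 1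
  unfold fe freeEnergy sqSum Real.negMulLog
  rw [Fin.sum_univ_three]
  field_simp
  ring

/-- Each colour type has total mass at most `1` under its own product measure, and there are at
most `(n+1)^3` types. -/
lemma sum_prod_prop_le {n : ℕ} (hn : 0 < n) :
    ∑ x : Fin n → Fin 3, ∏ v, ((cnt x (x v) : ℝ) / n) ≤ ((n : ℝ) + 1) ^ 3 := by
  classical
  have hn' : (0 : ℝ) < n := by exact_mod_cast hn
  set T : Finset (Fin 3 → Fin (n + 1)) := {s | ∑ c, (s c : ℕ) = n} with hT
  have h1 : ∀ x : Fin n → Fin 3, ∏ v, ((cnt x (x v) : ℝ) / n)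
      ≤ ∑ s ∈ T, ∏ v, (((s (x v) : ℕ) : ℝ) / n) := by
    intro x
    obtain ⟨s₀, hs₀⟩ : ∃ s₀ : Fin 3 → Fin (n + 1), ∀ c, (s₀ c : ℕ) = cnt x c :=
      ⟨fun c => ⟨cnt x c, Nat.lt_succ_of_le (cnt_le x c)⟩, fun _ => rfl⟩
    have hmem : s₀ ∈ T := by
      simp [hT, hs₀, sum_cnt x]
    have hnonneg : ∀ s ∈ T, 0 ≤ ∏ v, (((s (x v) : ℕ) : ℝ) / n) := fun s _ =>
      Finset.prod_nonneg fun v _ => div_nonneg (Nat.cast_nonneg _) hn'.le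
    have := Finset.single_le_sum hnonneg hmem
    simpa only [hs₀] using this
  calc ∑ x : Fin n → Fin 3, ∏ v, ((cnt x (x v) : ℝ) / n)
      ≤ ∑ x : Fin n → Fin 3, ∑ s ∈ T, ∏ v, (((s (x v) : ℕ) : ℝ) / n) :=
        Finset.sum_le_sum fun x _ => h1 x
    _ = ∑ s ∈ T, ∑ x : Fin n → Fin 3, ∏ v, (((s (x v) : ℕ) : ℝ) / n) := Finset.sum_comm
    _ = ∑ s ∈ T, 1 := by
        refine Finset.sum_congr rfl fun s hs => ?_
        have := Finset.sum_pow' (univ : Finset (Fin 3)) (fun c => ((s c : ℕ) : ℝ) / n) n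
        rw [Fintype.piFinset_univ] at this
        rw [← this, ← Finset.sum_div]
        have hs' : ∑ c, (s c : ℕ) = n := by simpa [hT] using hs
        rw [← Nat.cast_sum, hs', div_self hn'.ne', one_pow]
    _ = (#T : ℝ) := by simp
    _ ≤ ((n : ℝ) + 1) ^ 3 := by
        have : #T ≤ (n + 1) ^ 3 := by
          refine (Finset.card_le_univ T).trans ?_
          simp
        exact_mod_cast this

/-- The method of types: a set of configurations with critical free energy at most `C` has
weight at most `(n+1)^3 exp (n C)`. -/
lemma sum_weight_le {n : ℕ} (hn : 0 < n) (B : Finset (Fin n → Fin 3)) (C : ℝ)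
    (hB : ∀ x ∈ B, fe x ≤ C) :
    ∑ x ∈ B, Real.exp (2 * Real.log 2 * sqSum x / n) ≤ ((n : ℝ) + 1) ^ 3 * Real.exp (n * C) := by
  calc ∑ x ∈ B, Real.exp (2 * Real.log 2 * sqSum x / n)
      ≤ ∑ x ∈ B, (∏ v, ((cnt x (x v) : ℝ) / n)) * Real.exp (n * C) := by
        refine Finset.sum_le_sum fun x hx => ?_
        rw [prod_prop_eq hn, ← Real.exp_add, Real.exp_le_exp]
        have : (n : ℝ) * fe x ≤ n * C := by
          have := hB x hx
          gcongr
        linarith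
    _ = (∑ x ∈ B, ∏ v, ((cnt x (x v) : ℝ) / n)) * Real.exp (n * C) := by rw [Finset.sum_mul]
    _ ≤ (∑ x : Fin n → Fin 3, ∏ v, ((cnt x (x v) : ℝ) / n)) * Real.exp (n * C) := by
        refine mul_le_mul_of_nonneg_right ?_ (Real.exp_pos _).le
        exact Finset.sum_le_sum_of_subset_of_nonneg (Finset.subset_univ B)
          fun x _ _ => by positivity
    _ ≤ _ := by
        gcongr
        exact sum_prod_prop_le hn

lemma cnt_div_sum {n : ℕ} (hn : 0 < n) (x : Fin n → Fin 3) :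
    (cnt x 0 : ℝ) / n + cnt x 1 / n + cnt x 2 / n = 1 := by
  have hn' : (0 : ℝ) < n := by exact_mod_cast hn
  rw [← add_div, ← add_div, cnt_sum_real, div_self hn'.ne']

lemma fe_le {n : ℕ} (hn : 0 < n) (x : Fin n → Fin 3) :
    fe x ≤ Real.log 3 + 2 / 3 * Real.log 2 :=
  freeEnergy_le (by positivity) (by positivity) (by positivity) (cnt_div_sum hn x)

lemma fe_le_of_half {n : ℕ} (hn : 0 < n) (x : Fin n → Fin 3) (hx : 2 * cnt x 0 = n) :
    fe x ≤ 9 / 4 * Real.log 2 := by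
  have hn' : (0 : ℝ) < n := by exact_mod_cast hn
  have h : (cnt x 0 : ℝ) / n = 1 / 2 := by
    rw [div_eq_div_iff hn'.ne' two_ne_zero]
    have : (2 : ℝ) * cnt x 0 = n := by exact_mod_cast hx
    linarith
  have hs := cnt_div_sum hn x
  unfold fe
  rw [h] at hs ⊢
  exact freeEnergy_half_le (by positivity) (by positivity) hs

/-! ### Gibbs weights -/

lemma gibbs_den_pos (n : ℕ) (β : ℝ) :
    0 < ∑ y : Fin n → Fin 3, Real.exp (β * pottsH n y) :=
  Finset.sum_pos (fun _ _ => Real.exp_pos _) Finset.univ_nonempty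

lemma gibbs_pos (n : ℕ) (β : ℝ) (x : Fin n → Fin 3) : 0 < pottsGibbs n β x :=
  div_pos (Real.exp_pos _) (gibbs_den_pos n β)

lemma gibbs_sum (n : ℕ) (β : ℝ) : ∑ x, pottsGibbs n β x = 1 := by
  unfold pottsGibbs
  rw [← Finset.sum_div, div_self (gibbs_den_pos n β).ne']

lemma crit_mul_pottsH {n : ℕ} (hn : 0 < n) (x : Fin n → Fin 3) :
    4 * Real.log 2 / n * pottsH n x = 2 * Real.log 2 * sqSum x / n - 2 * Real.log 2 := by
  have hn' : (0 : ℝ) < n := by exact_mod_cast hn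
  rw [pottsH_eq]
  field_simp
  ring

/-- The excess of `H` over its balanced value `(n^2/3 - n)/2` is nonnegative. So the weight of `x`
relative to `3^n` balanced weights, which bounds the Gibbs probability, is increasing in `β` and at
most its value at `β = 4 log 2 / n`. -/
lemma gibbs_le {n : ℕ} (hn : 0 < n) {β : ℝ} (h0 : 0 ≤ β) (h1 : β ≤ 4 * Real.log 2 / n)
    (x : Fin n → Fin 3) :
    pottsGibbs n β x ≤ Real.exp (-(n * (Real.log 3 + 2 / 3 * Real.log 2)))
      * Real.exp (2 * Real.log 2 * sqSum x / n) := by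
  have hn' : (0 : ℝ) < n := by exact_mod_cast hn
  set e : ℝ := ((n : ℝ) ^ 2 / 3 - n) / 2 with he
  have hZ : Real.exp (n * Real.log 3 + β * e)
      ≤ ∑ y : Fin n → Fin 3, Real.exp (β * pottsH n y) := by
    calc Real.exp (n * Real.log 3 + β * e) = ∑ y : Fin n → Fin 3, Real.exp (β * e) := by
          rw [Finset.sum_const, Real.exp_add, Real.exp_nat_mul, Real.exp_log (by norm_num)]
          simp
      _ ≤ _ := by
          refine Finset.sum_le_sum fun y _ => ?_
          rw [Real.exp_le_exp, pottsH_eq]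
          have := sqSum_ge y
          gcongr
          rw [he]
          linarith
  have hx : 0 ≤ sqSum x - (n : ℝ) ^ 2 / 3 := by linarith [sqSum_ge x]
  unfold pottsGibbs
  calc Real.exp (β * pottsH n x) / ∑ y : Fin n → Fin 3, Real.exp (β * pottsH n y)
      ≤ Real.exp (β * pottsH n x) / Real.exp (n * Real.log 3 + β * e) := by gcongr
    _ = Real.exp (β * ((sqSum x - (n : ℝ) ^ 2 / 3) / 2) - n * Real.log 3) := by
        rw [← Real.exp_sub, pottsH_eq, he]
        congr 1
        ring
    _ ≤ Real.exp (4 * Real.log 2 / n * ((sqSum x - (n : ℝ) ^ 2 / 3) / 2) - n * Real.log 3) := by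
        gcongr
    _ = _ := by
        rw [← Real.exp_add]
        congr 1
        field_simp
        ring

/-- The bottleneck `σ₁ = n/2` is exponentially unlikely at every temperature in range. -/
lemma boundary_mass_le {n : ℕ} (hn : 0 < n) {β : ℝ} (h0 : 0 ≤ β)
    (h1 : β ≤ 4 * Real.log 2 / n) :
    ∑ x : Fin n → Fin 3 with 2 * cnt x 0 = n, pottsGibbs n β x
      ≤ ((n : ℝ) + 1) ^ 3 * Real.exp (-(n * (Real.log 3 - 19 / 12 * Real.log 2))) := by
  calc ∑ x : Fin n → Fin 3 with 2 * cnt x 0 = n, pottsGibbs n β x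
      ≤ ∑ x : Fin n → Fin 3 with 2 * cnt x 0 = n,
          Real.exp (-(n * (Real.log 3 + 2 / 3 * Real.log 2)))
            * Real.exp (2 * Real.log 2 * sqSum x / n) :=
        Finset.sum_le_sum fun x _ => gibbs_le hn h0 h1 x
    _ = Real.exp (-(n * (Real.log 3 + 2 / 3 * Real.log 2))) *
          ∑ x : Fin n → Fin 3 with 2 * cnt x 0 = n,
            Real.exp (2 * Real.log 2 * sqSum x / n) := by rw [Finset.mul_sum]
    _ ≤ Real.exp (-(n * (Real.log 3 + 2 / 3 * Real.log 2))) *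
          (((n : ℝ) + 1) ^ 3 * Real.exp (n * (9 / 4 * Real.log 2))) := by
        gcongr
        exact sum_weight_le hn _ _ fun x hx => fe_le_of_half hn x (mem_filter.1 hx).2
    _ = _ := by
        rw [mul_left_comm, ← Real.exp_add]
        congr 2
        ring

/-! ### The ordered phase -/

/-- Permuting the vertices of `x₀` produces at least a multinomial coefficient's worth of
configurations of the same type. -/
lemma factorial_le_type {n : ℕ} (x₀ : Fin n → Fin 3) :
    n.factorial ≤ (∏ c, (cnt x₀ c).factorial) * #{x : Fin n → Fin 3 | cnt x = cnt x₀} := by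
  classical
  have hcnt : ∀ g : Equiv.Perm (Fin n), cnt (x₀ ∘ g) = cnt x₀ := by
    intro g
    funext c
    exact Finset.card_equiv g (by simp)
  have h := Finset.card_le_mul_card_image (s := (univ : Finset (Equiv.Perm (Fin n))))
    (f := fun g : Equiv.Perm (Fin n) => x₀ ∘ (g : Fin n → Fin n)) (∏ c, (cnt x₀ c).factorial) ?_
  · rw [Finset.card_univ, Fintype.card_perm, Fintype.card_fin] at h
    refine h.trans (Nat.mul_le_mul_left _ (Finset.card_le_card ?_))
    intro x hx
    obtain ⟨g, _, rfl⟩ := Finset.mem_image.1 hx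
    simp [hcnt g]
  · intro y hy
    obtain ⟨g₀, _, rfl⟩ := Finset.mem_image.1 hy
    have hst := DomMulAct.stabilizer_card x₀
    have hfac : ∀ c, Fintype.card {a // x₀ a = c} = cnt x₀ c := fun c =>
      Fintype.card_subtype _
    simp only [hfac] at hst
    rw [← hst, Fintype.card_subtype]
    refine Finset.card_le_card_of_injOn (fun g => g * g₀⁻¹) ?_ ?_
    · intro g hg
      have hg' : x₀ ∘ g = x₀ ∘ g₀ := by simpa using hg
      simp only [coe_filter, mem_univ, true_and, Set.mem_ofPred_eq]
      rw [Equiv.Perm.coe_mul, ← Function.comp_assoc, hg']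
      funext v
      simp
    · intro g _ g' _ h
      exact mul_right_cancel h

lemma exists_ordered {n m : ℕ} (hnm : n = 12 * m) : ∃ x : Fin n → Fin 3,
    cnt x 0 = 8 * m ∧ cnt x 1 = 2 * m ∧ cnt x 2 = 2 * m := by
  let x : Fin n → Fin 3 := fun v =>
    if (v : ℕ) < 8 * m then 0 else if (v : ℕ) < 10 * m then 1 else 2
  have h0 : cnt x 0 = 8 * m := by
    have : ({v | x v = 0} : Finset (Fin n)) = ({v | (v : ℕ) < 8 * m} : Finset (Fin n)) := by
      ext v
      simp only [x, mem_filter, mem_univ, true_and]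
      split_ifs <;> simp_all
    rw [cnt, this, Fin.card_filter_val_lt]
    omega
  have h01 : cnt x 0 + cnt x 1 = 10 * m := by
    have : ({v | x v = 0} : Finset (Fin n)) ∪ ({v | x v = 1} : Finset (Fin n))
        = ({v | (v : ℕ) < 10 * m} : Finset (Fin n)) := by
      ext v
      simp only [x, mem_filter, mem_univ, true_and, mem_union]
      split_ifs <;> simp_all
      omega
    rw [cnt, cnt, ← Finset.card_union_of_disjoint, this, Fin.card_filter_val_lt]
    · omega
    · rw [Finset.disjoint_filter]
      intro v _ h h'
      rw [h] at h'
      exact absurd h' (by decide)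
  have hs := sum_cnt x
  rw [Fin.sum_univ_three] at hs
  exact ⟨x, h0, by omega, by omega⟩

/-- At the critical temperature the phase with a majority of colour `0` carries at least an
inverse polynomial share of the Gibbs measure. -/
lemma ordered_mass_ge {n : ℕ} (hn : 0 < n) (hdvd : 12 ∣ n) :
    1 / (Real.exp 3 * (n : ℝ) ^ 3 * ((n : ℝ) + 1) ^ 3) ≤
      ∑ x : Fin n → Fin 3 with n < 2 * cnt x 0, pottsGibbs n (4 * Real.log 2 / n) x := by
  obtain ⟨m, hnm⟩ := hdvd
  obtain ⟨x₀, hx0, hx1, hx2⟩ := exists_ordered hnm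
  have hm : 0 < m := by omega
  have hm' : (0 : ℝ) < m := by exact_mod_cast hm
  have hn' : (0 : ℝ) < n := by exact_mod_cast hn
  have hnm' : (n : ℝ) = 12 * m := by rw [hnm]; push_cast; ring
  set C : ℝ := Real.log 3 + 2 / 3 * Real.log 2 with hC
  have hZ : ∑ y : Fin n → Fin 3, Real.exp (4 * Real.log 2 / n * pottsH n y)
      ≤ Real.exp (-(2 * Real.log 2)) * (((n : ℝ) + 1) ^ 3 * Real.exp (n * C)) := by
    calc ∑ y : Fin n → Fin 3, Real.exp (4 * Real.log 2 / n * pottsH n y)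
        = Real.exp (-(2 * Real.log 2)) *
            ∑ y : Fin n → Fin 3, Real.exp (2 * Real.log 2 * sqSum y / n) := by
          rw [Finset.mul_sum]
          refine Finset.sum_congr rfl fun y _ => ?_
          rw [crit_mul_pottsH hn, ← Real.exp_add]
          congr 1
          ring
      _ ≤ _ := by
          gcongr
          exact sum_weight_le hn _ _ fun y _ => fe_le hn y
  set T : Finset (Fin n → Fin 3) := {x | cnt x = cnt x₀} with hT
  -- Stirling for the multinomial coefficient
  have hcard : Real.exp (n * (Real.log 3 - 1 / 3 * Real.log 2)) ≤
      Real.exp 3 * (n : ℝ) ^ 3 * #T := by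
    have hf := factorial_le_type x₀
    rw [Fin.prod_univ_three, hx0, hx1, hx2] at hf
    have hTpos : 0 < #T := Finset.card_pos.2 ⟨x₀, by simp [hT]⟩
    have hTpos' : (0 : ℝ) < #T := by exact_mod_cast hTpos
    have h8 : (0 : ℝ) < (8 * m).factorial := by exact_mod_cast Nat.factorial_pos _
    have h2 : (0 : ℝ) < (2 * m).factorial := by exact_mod_cast Nat.factorial_pos _
    have hf' : (n.factorial : ℝ)
        ≤ (8 * m).factorial * (2 * m).factorial * (2 * m).factorial * #T := by
      exact_mod_cast hf
    have hlog := Real.log_le_log (by exact_mod_cast Nat.factorial_pos n) hf'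
    rw [Real.log_mul (by positivity) hTpos'.ne', Real.log_mul (by positivity) h2.ne',
      Real.log_mul h8.ne' h2.ne'] at hlog
    have a1 := log_factorial_ge n
    have a2 := log_factorial_le (8 * m)
    have a3 := log_factorial_le (2 * m)
    have b1 : Real.log ((8 * m : ℕ) : ℝ) ≤ Real.log n :=
      Real.log_le_log (by positivity) (by rw [hnm']; push_cast; linarith)
    have b2 : Real.log ((2 * m : ℕ) : ℝ) ≤ Real.log n :=
      Real.log_le_log (by positivity) (by rw [hnm']; push_cast; linarith)
    have c1 : Real.log ((8 * m : ℕ) : ℝ) = 3 * Real.log 2 + Real.log m := by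
      push_cast
      rw [Real.log_mul (by norm_num) hm'.ne', show (8 : ℝ) = 2 ^ 3 by norm_num, Real.log_pow]
      norm_num
    have c2 : Real.log ((2 * m : ℕ) : ℝ) = Real.log 2 + Real.log m := by
      push_cast
      rw [Real.log_mul (by norm_num) hm'.ne']
    have c3 : Real.log (n : ℝ) = 2 * Real.log 2 + Real.log 3 + Real.log m := by
      rw [hnm', Real.log_mul (by norm_num) hm'.ne', show (12 : ℝ) = 2 ^ 2 * 3 by norm_num,
        Real.log_mul (by norm_num) (by norm_num), Real.log_pow]
      norm_num
    rw [← Real.log_le_log_iff (Real.exp_pos _) (by positivity), Real.log_exp,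
      Real.log_mul (by positivity) hTpos'.ne', Real.log_mul (by positivity) (by positivity),
      Real.log_exp, Real.log_pow]
    unfold Real.negMulLog at a1 a2 a3
    rw [c1] at a2
    rw [c2] at a3
    rw [c3] at a1
    rw [c1, c3] at b1
    rw [c2, c3] at b2
    rw [c3]
    rw [hnm'] at a1 ⊢
    push_cast at a1 a2 a3 ⊢
    nlinarith
  have hsub : T ⊆ ({x | n < 2 * cnt x 0} : Finset (Fin n → Fin 3)) := by
    intro x hx
    have hx' : cnt x = cnt x₀ := by simpa [hT] using hx
    simp only [mem_filter, mem_univ, true_and]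
    rw [hx', hx0]
    omega
  have hval : ∀ x ∈ T, Real.exp (n * Real.log 2 - 2 * Real.log 2)
      = Real.exp (4 * Real.log 2 / n * pottsH n x) := by
    intro x hx
    have hx' : cnt x = cnt x₀ := by simpa [hT] using hx
    rw [crit_mul_pottsH hn]
    congr 2
    unfold sqSum
    rw [hx', hx0, hx1, hx2, hnm']
    push_cast
    field_simp
    ring
  calc 1 / (Real.exp 3 * (n : ℝ) ^ 3 * ((n : ℝ) + 1) ^ 3)
      ≤ (#T * Real.exp (n * Real.log 2 - 2 * Real.log 2)) /
          (Real.exp (-(2 * Real.log 2)) * (((n : ℝ) + 1) ^ 3 * Real.exp (n * C))) := by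
        rw [div_le_div_iff₀ (by positivity) (by positivity), one_mul]
        have e1 : Real.exp (n * C) = Real.exp (n * (Real.log 3 - 1 / 3 * Real.log 2))
            * Real.exp (n * Real.log 2) := by
          rw [← Real.exp_add, hC]
          congr 1
          ring
        rw [e1, sub_eq_add_neg (n * Real.log 2), Real.exp_add]
        calc _ = Real.exp (n * (Real.log 3 - 1 / 3 * Real.log 2)) *
                (Real.exp (-(2 * Real.log 2)) * ((n : ℝ) + 1) ^ 3
                  * Real.exp (n * Real.log 2)) := by ring
          _ ≤ (Real.exp 3 * (n : ℝ) ^ 3 * #T) *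
                (Real.exp (-(2 * Real.log 2)) * ((n : ℝ) + 1) ^ 3
                  * Real.exp (n * Real.log 2)) := by gcongr
          _ = _ := by ring
    _ ≤ (#T * Real.exp (n * Real.log 2 - 2 * Real.log 2)) /
          ∑ y : Fin n → Fin 3, Real.exp (4 * Real.log 2 / n * pottsH n y) := by
        have := gibbs_den_pos n (4 * Real.log 2 / n)
        gcongr
    _ = ∑ x ∈ T, pottsGibbs n (4 * Real.log 2 / n) x := by
        unfold pottsGibbs
        rw [← Finset.sum_div, ← Finset.sum_congr rfl hval, Finset.sum_const, nsmul_eq_mul]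
    _ ≤ _ := Finset.sum_le_sum_of_subset_of_nonneg hsub fun x _ _ => (gibbs_pos _ _ _).le

/-! ### The cut and its flow -/

lemma cnt_comp_equiv {n : ℕ} (e : Equiv.Perm (Fin 3)) (x : Fin n → Fin 3) (c : Fin 3) :
    cnt (e ∘ x) (e c) = cnt x c := by
  simp [cnt]

lemma gibbs_comp_equiv {n : ℕ} (β : ℝ) (e : Equiv.Perm (Fin 3)) (x : Fin n → Fin 3) :
    pottsGibbs n β (e ∘ x) = pottsGibbs n β x := by
  have : pottsH n (e ∘ x) = pottsH n x := by simp [pottsH]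
  simp [pottsGibbs, this]

/-- By colour symmetry, majorities of colours `0` and `1` are equally likely and exclusive. -/
lemma majority_mass_le {n : ℕ} (β : ℝ) :
    ∑ x : Fin n → Fin 3 with n < 2 * cnt x 0, pottsGibbs n β x ≤ 1 / 2 := by
  classical
  have hsymm : ∑ x : Fin n → Fin 3 with n < 2 * cnt x 0, pottsGibbs n β x
      = ∑ x : Fin n → Fin 3 with n < 2 * cnt x 1, pottsGibbs n β x := by
    refine Finset.sum_equiv (Equiv.arrowCongr (Equiv.refl _) (Equiv.swap 0 1)) ?_ ?_
    · intro x
      have := cnt_comp_equiv (Equiv.swap 0 1) x 0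
      rw [Equiv.swap_apply_left] at this
      simp [Equiv.arrowCongr, this]
    · intro x _
      exact (gibbs_comp_equiv β (Equiv.swap 0 1) x).symm
  have hdisj : Disjoint ({x | n < 2 * cnt x 0} : Finset (Fin n → Fin 3))
      ({x | n < 2 * cnt x 1} : Finset (Fin n → Fin 3)) := by
    rw [Finset.disjoint_filter]
    intro x _ h h'
    have := sum_cnt x
    rw [Fin.sum_univ_three] at this
    omega
  have := Finset.sum_le_sum_of_subset_of_nonneg (f := pottsGibbs n β)
    (Finset.subset_univ (({x | n < 2 * cnt x 0} : Finset (Fin n → Fin 3)) ∪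
      ({x | n < 2 * cnt x 1} : Finset (Fin n → Fin 3)))) fun x _ _ => (gibbs_pos n β x).le
  rw [Finset.sum_union hdisj, gibbs_sum, ← hsymm] at this
  linarith

lemma prop_nonneg {n : ℕ} (x y : Fin n → Fin 3) : 0 ≤ pottsProp n x y := by
  unfold pottsProp
  positivity

/-- The proposal kernel is column-substochastic: `(x, v, c)` with `update x v c = y` is determined
by `v` and the old colour `x v`. -/
lemma sum_prop_le {n : ℕ} (hn : 0 < n) (y : Fin n → Fin 3) :
    ∑ x, pottsProp n x y ≤ 1 := by
  classical
  have hn' : (0 : ℝ) < n := by exact_mod_cast hn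
  unfold pottsProp
  rw [← Finset.sum_div, div_le_one (by positivity), ← Nat.cast_sum]
  have h : ∑ x : Fin n → Fin 3, #{vc : Fin n × Fin 3 | Function.update x vc.1 vc.2 = y}
      ≤ n * 3 := by
    rw [← Finset.card_sigma]
    calc _ ≤ #(univ : Finset (Fin n × Fin 3)) := by
          refine Finset.card_le_card_of_injOn (fun q => (q.2.1, q.1 q.2.1)) (by simp) ?_
          rintro ⟨x, v, c⟩ hq ⟨x', v', c'⟩ hq' h
          simp only [coe_sigma, coe_univ, coe_filter, mem_univ, true_and, Set.mem_sigma_iff,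
            Set.mem_univ, Set.mem_ofPred_eq] at hq hq'
          simp only [Prod.mk.injEq] at h
          obtain ⟨rfl, hv⟩ := h
          have hc : c = c' := by
            have h1 := congrFun hq v
            have h2 := congrFun hq' v
            simp only [Function.update_self] at h1 h2
            rw [h1, h2]
          subst hc
          have hx : x = x' := by
            funext w
            by_cases hw : w = v
            · rw [hw]; exact hv
            · have h1 := congrFun hq w
              have h2 := congrFun hq' w
              simp only [Function.update_of_ne hw] at h1 h2
              rw [h1, h2]
          subst hx
          rfl
      _ = n * 3 := by simp
  exact_mod_cast h

lemma cnt_le_of_prop_ne_zero {n : ℕ} {x y : Fin n → Fin 3} (h : pottsProp n x y ≠ 0)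
    (c : Fin 3) : cnt x c ≤ cnt y c + 1 := by
  classical
  have hne : ({vc : Fin n × Fin 3 | Function.update x vc.1 vc.2 = y} : Finset _).Nonempty := by
    by_contra hcon
    rw [Finset.not_nonempty_iff_eq_empty] at hcon
    apply h
    unfold pottsProp
    rw [hcon]
    simp
  obtain ⟨⟨v, d⟩, hv⟩ := hne
  have hv' : Function.update x v d = y := by simpa using hv
  unfold cnt
  rw [← Finset.card_singleton v]
  refine (Finset.card_le_card ?_).trans (Finset.card_union_le _ _)
  intro w hw
  by_cases hwv : w = v
  · simp [hwv]
  · have : y w = x w := by rw [← hv', Function.update_of_ne hwv]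
    have hw' : x w = c := by simpa using hw
    simp [this, hw']

/-- Leaving the majority region requires a level move landing exactly on the slice
`2 σ₁ = n`; temperature moves do not change the configuration. -/
lemma flow_term_le {n M : ℕ} (hn : 2 ∣ n) (β : Fin (M + 1) → ℝ)
    (p q : (Fin n → Fin 3) × Fin (M + 1)) (hp : n < 2 * cnt p.1 0) (hq : ¬ n < 2 * cnt q.1 0) :
    pottsGibbs n (β p.2) p.1 / (M + 1) *
        temperingChain (fun i : Fin (M + 1) => metropolis (pottsProp n) (pottsGibbs n (β i)))
          (fun i => pottsGibbs n (β i)) p q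
      ≤ if q.2 = p.2 ∧ 2 * cnt q.1 0 = n then
          pottsProp n p.1 q.1 * (pottsGibbs n (β q.2) q.1 / (M + 1)) else 0 := by
  obtain ⟨x, i⟩ := p
  obtain ⟨y, j⟩ := q
  simp only at hp hq ⊢
  have hxy : y ≠ x := by
    rintro rfl
    exact hq hp
  have hpq : ((y, j) : (Fin n → Fin 3) × Fin (M + 1)) ≠ (x, i) := fun h =>
    hxy (Prod.ext_iff.1 h).1
  have hM : (0 : ℝ) < (M : ℝ) + 1 := by positivity
  have hval : temperingChain
      (fun i : Fin (M + 1) => metropolis (pottsProp n) (pottsGibbs n (β i)))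
      (fun i => pottsGibbs n (β i)) (x, i) (y, j)
      = if j = i then 1 / 2 * (pottsProp n x y *
          min 1 (pottsGibbs n (β i) y / pottsGibbs n (β i) x)) else 0 := by
    simp [temperingChain, temperingOff, metropolis, hxy]
  rw [hval]
  by_cases hji : j = i
  · subst hji
    by_cases hQ : pottsProp n x y = 0
    · simp [hQ]
    have hb : 2 * cnt y 0 = n := by
      have := cnt_le_of_prop_ne_zero hQ 0
      omega
    rw [if_pos rfl, if_pos ⟨rfl, hb⟩]
    have hx := gibbs_pos n (β j) x
    have hy := gibbs_pos n (β j) y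
    have hQ0 := prop_nonneg x y
    have hmin : pottsGibbs n (β j) x * min 1 (pottsGibbs n (β j) y / pottsGibbs n (β j) x)
        ≤ pottsGibbs n (β j) y := by
      calc _ ≤ pottsGibbs n (β j) x * (pottsGibbs n (β j) y / pottsGibbs n (β j) x) := by
            gcongr
            exact min_le_right _ _
        _ = _ := by field_simp
    calc _ = 1 / 2 * (pottsProp n x y / (M + 1) * (pottsGibbs n (β j) x *
            min 1 (pottsGibbs n (β j) y / pottsGibbs n (β j) x))) := by ring
      _ ≤ 1 / 2 * (pottsProp n x y / (M + 1) * pottsGibbs n (β j) y) := by gcongr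
      _ ≤ 1 * (pottsProp n x y / (M + 1) * pottsGibbs n (β j) y) := by
          gcongr
          norm_num
      _ = _ := by ring
  · simp [hji]

lemma flow_le {n M : ℕ} (hn0 : 0 < n) (hn : 2 ∣ n) (β : Fin (M + 1) → ℝ)
    (A : Finset ((Fin n → Fin 3) × Fin (M + 1))) (hA : ∀ p, p ∈ A ↔ n < 2 * cnt p.1 0)
    (b : ℝ) (hb : ∀ i, ∑ x : Fin n → Fin 3 with 2 * cnt x 0 = n, pottsGibbs n (β i) x ≤ b) :
    ∑ p ∈ A, ∑ q ∈ Aᶜ, pottsGibbs n (β p.2) p.1 / (M + 1) *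
        temperingChain (fun i : Fin (M + 1) => metropolis (pottsProp n) (pottsGibbs n (β i)))
          (fun i => pottsGibbs n (β i)) p q ≤ b := by
  classical
  have hM : (0 : ℝ) < (M : ℝ) + 1 := by positivity
  set F : (Fin n → Fin 3) × Fin (M + 1) → (Fin n → Fin 3) × Fin (M + 1) → ℝ := fun p q =>
    if q.2 = p.2 ∧ 2 * cnt q.1 0 = n then
      pottsProp n p.1 q.1 * (pottsGibbs n (β q.2) q.1 / (M + 1)) else 0 with hF
  have hF0 : ∀ p q, 0 ≤ F p q := by
    intro p q
    simp only [hF]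
    split_ifs
    · exact mul_nonneg (prop_nonneg _ _) (div_nonneg (gibbs_pos _ _ _).le hM.le)
    · exact le_rfl
  calc _ ≤ ∑ p ∈ A, ∑ q ∈ Aᶜ, F p q := by
        refine Finset.sum_le_sum fun p hp => Finset.sum_le_sum fun q hq => ?_
        exact flow_term_le hn β p q ((hA p).1 hp)
          (fun h => (Finset.mem_compl.1 hq) ((hA q).2 h))
    _ ≤ ∑ p, ∑ q, F p q := by
        refine (Finset.sum_le_sum fun p _ => Finset.sum_le_sum_of_subset_of_nonneg
          (Finset.subset_univ _) fun q _ _ => hF0 p q).trans ?_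
        exact Finset.sum_le_sum_of_subset_of_nonneg (Finset.subset_univ _)
          fun p _ _ => Finset.sum_nonneg fun q _ => hF0 p q
    _ = ∑ q, ∑ p, F p q := Finset.sum_comm
    _ ≤ ∑ q : (Fin n → Fin 3) × Fin (M + 1),
          if 2 * cnt q.1 0 = n then pottsGibbs n (β q.2) q.1 / (M + 1) else 0 := by
        refine Finset.sum_le_sum fun q _ => ?_
        by_cases hq : 2 * cnt q.1 0 = n
        · rw [if_pos hq, Fintype.sum_prod_type]
          simp only [hF, hq, and_true, Finset.sum_ite_eq, Finset.mem_univ, if_true]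
          rw [← Finset.sum_mul]
          have := gibbs_pos n (β q.2) q.1
          exact mul_le_of_le_one_left (by positivity) (sum_prop_le hn0 q.1)
        · simp [hF, hq]
    _ = ∑ i : Fin (M + 1),
          (∑ x : Fin n → Fin 3 with 2 * cnt x 0 = n, pottsGibbs n (β i) x) / (M + 1) := by
        rw [Fintype.sum_prod_type, Finset.sum_comm]
        refine Finset.sum_congr rfl fun i _ => ?_
        rw [Finset.sum_div, Finset.sum_filter]
    _ ≤ ∑ i : Fin (M + 1), b / (M + 1) := by
        gcongr with i
        exact hb i
    _ = b := by
        rw [Finset.sum_const, Finset.card_univ, Fintype.card_fin, nsmul_eq_mul]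
        push_cast
        field_simp

/-! ### Conclusion -/

/-- Exponential growth absorbs the polynomial losses. -/
lemma eventually_poly_le {g : ℝ} (hg : 0 < g) (K : ℕ) :
    ∃ N : ℕ, ∀ n : ℕ, N ≤ n →
      Real.exp 3 * ((n : ℝ) + 1) ^ K ≤ Real.exp (g / 2 * n) := by
  have h := (isLittleO_pow_exp_pos_mul_atTop K (half_pos hg)).bound
    (Real.exp_pos (-(g / 2) - 3))
  obtain ⟨R, hR⟩ := Filter.eventually_atTop.1 h
  obtain ⟨N, hN⟩ := exists_nat_ge R
  refine ⟨N, fun n hn => ?_⟩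
  have hn' : (N : ℝ) ≤ n := by exact_mod_cast hn
  have := hR ((n : ℝ) + 1) (by linarith)
  rw [Real.norm_of_nonneg (by positivity), Real.norm_of_nonneg (Real.exp_pos _).le,
    ← Real.exp_add] at this
  calc Real.exp 3 * ((n : ℝ) + 1) ^ K
      ≤ Real.exp 3 * Real.exp (-(g / 2) - 3 + g / 2 * (n + 1)) := by gcongr
    _ = Real.exp (g / 2 * n) := by
        rw [← Real.exp_add]
        congr 1
        ring

/-- For every exponent `k ≥ 1` there are `c₄ > 0` and `N` such that for all
`n ≥ N` divisible by 12, every `M ≤ n^k` and every nondecreasing sequence of inverse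
temperatures `0 ≤ β₀ ≤ ⋯ ≤ β_M = 4·ln 2/n`, the conductance of the simulated tempering
chain for the 3-state mean-field Potts model on `n` vertices is at most `e^(−c₄ n)`. -/
theorem potts_tempering_small_conductance :
    ∀ k : ℕ, 1 ≤ k → ∃ c₄ : ℝ, 0 < c₄ ∧ ∃ N : ℕ, ∀ n : ℕ, N ≤ n → 12 ∣ n →
      ∀ M : ℕ, M ≤ n ^ k → ∀ β : Fin (M+1) → ℝ,
        0 ≤ β 0 → Monotone β → β (Fin.last M) = 4 * Real.log 2 / n →
          conductance
            (temperingChain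
              (fun i : Fin (M+1) => metropolis (pottsProp n) (pottsGibbs n (β i)))
              (fun i => pottsGibbs n (β i)))
            (fun p : (Fin n → Fin 3) × Fin (M+1) =>
              pottsGibbs n (β p.2) p.1 / (M + 1)) ≤ Real.exp (-(c₄ * n)) := by
  classical
  intro k hk
  set g : ℝ := Real.log 3 - 19 / 12 * Real.log 2 with hg
  have hg0 : 0 < g := gap_pos
  obtain ⟨N, hN⟩ := eventually_poly_le hg0 (k + 9)
  refine ⟨g / 2, half_pos hg0, max N 1, fun n hNn hdvd M hM β hβ0 hβ hβM => ?_⟩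
  have hn : 0 < n := lt_of_lt_of_le one_pos ((le_max_right _ _).trans hNn)
  have hn' : (0 : ℝ) < n := by exact_mod_cast hn
  have hM1 : (0 : ℝ) < (M : ℝ) + 1 := by positivity
  set A : Finset ((Fin n → Fin 3) × Fin (M + 1)) := {p | n < 2 * cnt p.1 0} with hA
  have hmemA : ∀ p, p ∈ A ↔ n < 2 * cnt p.1 0 := fun p => by simp [hA]
  set b : ℝ := ((n : ℝ) + 1) ^ 3 * Real.exp (-(n * g)) with hb
  have hflow := flow_le hn (dvd_trans (by norm_num) hdvd) β A hmemA b (fun i =>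
    boundary_mass_le hn (hβ0.trans (hβ (Fin.zero_le i))) (hβM ▸ hβ (Fin.le_last i)))
  have hmass : ∑ p ∈ A, pottsGibbs n (β p.2) p.1 / ((M : ℝ) + 1)
      = (∑ i, ∑ x : Fin n → Fin 3 with n < 2 * cnt x 0, pottsGibbs n (β i) x) / (M + 1) := by
    rw [hA, Finset.sum_filter, Fintype.sum_prod_type, Finset.sum_comm, Finset.sum_div]
    refine Finset.sum_congr rfl fun i _ => ?_
    rw [Finset.sum_div, Finset.sum_filter]
  set m : ℝ := 1 / (Real.exp 3 * (n : ℝ) ^ 3 * ((n : ℝ) + 1) ^ 3) with hm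
  have hm0 : 0 < m := by positivity
  -- only the coldest level contributes to the lower bound on the mass of the cut
  have hlow : m / (M + 1) ≤ ∑ p ∈ A, pottsGibbs n (β p.2) p.1 / ((M : ℝ) + 1) := by
    rw [hmass]
    gcongr
    refine (ordered_mass_ge hn hdvd).trans ?_
    rw [← hβM]
    exact Finset.single_le_sum (f := fun i => ∑ x : Fin n → Fin 3 with n < 2 * cnt x 0,
      pottsGibbs n (β i) x) (fun i _ => Finset.sum_nonneg fun x _ => (gibbs_pos _ _ _).le)
      (Finset.mem_univ (Fin.last M))
  have hhalf : ∑ p ∈ A, pottsGibbs n (β p.2) p.1 / ((M : ℝ) + 1) ≤ 1 / 2 := by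
    rw [hmass, div_le_iff₀ hM1]
    refine (Finset.sum_le_sum fun i _ => majority_mass_le (β i)).trans ?_
    rw [Finset.sum_const, Finset.card_univ, Fintype.card_fin, nsmul_eq_mul]
    push_cast
    linarith
  have hpos : 0 < ∑ p ∈ A, pottsGibbs n (β p.2) p.1 / ((M : ℝ) + 1) :=
    lt_of_lt_of_le (by positivity) hlow
  -- a finite chain has finitely many cuts, so the infimum is over a bounded set
  have hfin : ∀ (P : Matrix ((Fin n → Fin 3) × Fin (M + 1)) ((Fin n → Fin 3) × Fin (M + 1)) ℝ)
      (π : (Fin n → Fin 3) × Fin (M + 1) → ℝ),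
      BddBelow {r : ℝ | ∃ A : Finset ((Fin n → Fin 3) × Fin (M + 1)),
        0 < ∑ x ∈ A, π x ∧ (∑ x ∈ A, π x) ≤ 1/2 ∧
        r = (∑ x ∈ A, ∑ y ∈ Aᶜ, π x * P x y) / ∑ x ∈ A, π x} := by
    intro P π
    refine ((Set.finite_range fun A : Finset ((Fin n → Fin 3) × Fin (M + 1)) =>
      (∑ x ∈ A, ∑ y ∈ Aᶜ, π x * P x y) / ∑ x ∈ A, π x).subset ?_).bddBelow
    rintro r ⟨A, -, -, rfl⟩
    exact ⟨A, rfl⟩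
  have hMn : (M : ℝ) + 1 ≤ ((n : ℝ) + 1) ^ k := by
    have h1 : n ^ k + 1 ≤ (n + 1) ^ k := by
      have := Nat.pow_lt_pow_left (Nat.lt_succ_self n) (Nat.one_le_iff_ne_zero.1 hk)
      exact this
    exact_mod_cast (Nat.add_le_add_right hM 1).trans h1
  calc _ ≤ _ := csInf_le (hfin _ _) ⟨A, hpos, hhalf, rfl⟩
    _ ≤ b / (m / (M + 1)) := div_le_div₀ (by positivity) hflow (by positivity) hlow
    _ = Real.exp (-(n * g)) *
          (Real.exp 3 * ((M + 1) * (n : ℝ) ^ 3 * ((n : ℝ) + 1) ^ 6)) := by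
        rw [hb, hm]
        field_simp
    _ ≤ Real.exp (-(n * g)) *
          (Real.exp 3 * (((n : ℝ) + 1) ^ k * ((n : ℝ) + 1) ^ 3 * ((n : ℝ) + 1) ^ 6)) := by
        gcongr
        linarith
    _ = Real.exp (-(n * g)) * (Real.exp 3 * ((n : ℝ) + 1) ^ (k + 9)) := by ring
    _ ≤ Real.exp (-(n * g)) * Real.exp (g / 2 * n) := by
        gcongr
        exact hN n ((le_max_left _ _).trans hNn)
    _ = Real.exp (-(g / 2 * n)) := by
        rw [← Real.exp_add]
        congr 1
        ring
end

section
/- There exist a constant c > 0 and N ∈ ℕ such that for all n ≥ N divisible by 6, every M ≥ 0, and every sequence of inverse temperatures 0 ≤ β₀ ≤ β₁ ≤ … ≤ β_M = 4·ln 2/n, one has Σ_{i=0}^{M} π_{β_i}(A) ≤ c·n²·(M+1)·Σ_{i=0}^{M} π_{β_i}(Ω∖A), where A is the set of configurations x whose three color counts all satisfy σ_j(x) ≤ n/2. -/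
/-!
The left-hand side is at most `M + 1`, so it is enough to bound below the unbalanced mass at the
last temperature `β = 4 log 2 / n`: `1 ≤ 25 n² π_β(Ω ∖ A)`.

A balanced configuration has a color `j` with count `k ∈ [n/3, n/2]`; together with the count `l`
of color `j + 1` this splits `A` into at most `3 (n + 1)²` type classes. Since `k ≥ n/3`,
Chernoff's bound on `C(n-k, l)` shows that the weight of a class is at most what one gets by
giving all `2^(n-k)` colorings of the remaining vertices the least possible value of `H`, which is
(up to a common constant) the `profile` `C(n,k) exp (log 2 (2n - 3k(n-k)/n))` (`typeClass_weight_le`). At this temperature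
the profile is invariant under `k ↦ n - k`, and the configurations with `k' > n/2` vertices of
color `0` are unbalanced and have total weight at least `profile n k'`
(`profile_le_unbalanced`). Hence each class weighs at most twice the unbalanced set, the factor
two being needed only for `k = n/2`, where `k' = n/2 + 1` is used (`exists_profile_le`).
-/

open Finset

noncomputable section

/-- Number of vertices of color `j` in the configuration `x`. -/
def colorCount (n : ℕ) (x : Fin n → Fin 3) (j : Fin 3) : ℕ :=
  (Finset.univ.filter (fun i => x i = j)).card

/-- The set of configurations all of whose color counts are at most `n/2`. -/
def balancedSet (n : ℕ) : Finset (Fin n → Fin 3) :=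
  Finset.univ.filter (fun x => ∀ j : Fin 3, 2 * colorCount n x j ≤ n)

end

/-! ### Counting configurations by their color counts -/

lemma colorCount_sum (n : ℕ) (x : Fin n → Fin 3) : ∑ c, colorCount n x c = n := by
  have h := Finset.card_eq_sum_card_fiberwise (s := (Finset.univ : Finset (Fin n)))
    (t := (Finset.univ : Finset (Fin 3))) (f := x) (fun _ _ => by simp)
  simpa [colorCount] using h.symm

lemma colorCount_rot (n : ℕ) (x : Fin n → Fin 3) (j : Fin 3) :
    colorCount n x j + colorCount n x (j + 1) + colorCount n x (j + 2) = n := by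
  have h := colorCount_sum n x
  rw [Fin.sum_univ_three] at h
  fin_cases j <;> simp <;> omega

/-- Ordered pairs of equally colored vertices are the diagonal plus twice the pairs counted
by the Hamiltonian. -/
lemma two_mul_pottsH (n : ℕ) (x : Fin n → Fin 3) :
    2 * pottsH n x + n = ∑ c, colorCount n x c ^ 2 := by
  have hall : (univ.filter (fun p : Fin n × Fin n => x p.1 = x p.2)).card
      = ∑ c, colorCount n x c ^ 2 := by
    rw [Finset.card_eq_sum_card_fiberwise (t := (Finset.univ : Finset (Fin 3)))
      (f := fun p : Fin n × Fin n => x p.1) (fun _ _ => by simp)]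
    refine Finset.sum_congr rfl fun c _ => ?_
    rw [sq, colorCount, ← Finset.card_product]
    congr 1
    ext p
    simp only [mem_filter, mem_univ, true_and, mem_product]
    grind
  have hgt : (univ.filter (fun p : Fin n × Fin n => p.2 < p.1 ∧ x p.1 = x p.2)).card
      = pottsH n x := by
    unfold pottsH
    refine Finset.card_nbij' Prod.swap Prod.swap ?_ ?_ ?_ ?_ <;>
      · intro p hp
        simp at hp ⊢ <;> grind
  have hdiag : (univ.filter (fun p : Fin n × Fin n => p.1 = p.2)).card = n := by
    have h := Finset.diag_card (univ : Finset (Fin n))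
    rw [Finset.card_univ, Fintype.card_fin] at h
    conv_rhs => rw [← h]
    congr 1
    ext p
    simp [Finset.mem_diag]
  rw [← hall]
  have hsplit : univ.filter (fun p : Fin n × Fin n => x p.1 = x p.2)
      = (univ.filter (fun p : Fin n × Fin n => p.1 < p.2 ∧ x p.1 = x p.2) ∪
        univ.filter (fun p : Fin n × Fin n => p.2 < p.1 ∧ x p.1 = x p.2)) ∪
        univ.filter (fun p : Fin n × Fin n => p.1 = p.2) := by
    ext p
    simp only [mem_filter, mem_univ, true_and, mem_union]
    constructor
    · intro h
      rcases lt_trichotomy p.1 p.2 with h1 | h1 | h1 <;> simp [h1, h]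
    · rintro ((h | h) | h)
      · exact h.2
      · exact h.2
      · rw [h]
  rw [hsplit, Finset.card_union_of_disjoint, Finset.card_union_of_disjoint, hgt, hdiag]
  · unfold pottsH; ring
  · rw [Finset.disjoint_left]
    intro p hp hq
    simp only [mem_filter] at hp hq
    exact lt_asymm hp.2.1 hq.2.1
  · rw [Finset.disjoint_left]
    intro p hp hq
    simp only [mem_filter, mem_univ, true_and, mem_union] at hp hq
    rcases hp with hp | hp
    · exact hp.1.ne hq
    · exact hp.1.ne hq.symm

/-- The configurations with `k` vertices of color `j` and `l` of color `j + 1`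
(hence `n - k - l` of color `j + 2`). -/
def typeClass (n : ℕ) (j : Fin 3) (k l : ℕ) : Finset (Fin n → Fin 3) :=
  univ.filter fun x => colorCount n x j = k ∧ colorCount n x (j + 1) = l

lemma card_typeClass (n : ℕ) (j : Fin 3) (k l : ℕ) :
    (typeClass n j k l).card = n.choose k * (n - k).choose l := by
  have hcard : ((powersetCard k (univ : Finset (Fin n))).sigma
      fun S => powersetCard l Sᶜ).card = n.choose k * (n - k).choose l := by
    rw [Finset.card_sigma, Finset.sum_congr rfl (g := fun _ => (n - k).choose l)]
    · simp
    · intro S hS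
      rw [mem_powersetCard] at hS
      rw [card_powersetCard, card_compl, Fintype.card_fin, hS.2]
  rw [← hcard]
  have h1 : j + 1 ≠ j := by fin_cases j <;> decide
  have h2 : j + 2 ≠ j := by fin_cases j <;> decide
  have h3 : j + 2 ≠ j + 1 := by fin_cases j <;> decide
  have h4 : ∀ c : Fin 3, c = j ∨ c = j + 1 ∨ c = j + 2 := by
    fin_cases j <;> decide
  refine Finset.card_nbij'
    (fun x => (⟨univ.filter fun i => x i = j, univ.filter fun i => x i = j + 1⟩ :
      (_ : Finset (Fin n)) × Finset (Fin n)))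
    (fun p i => if i ∈ p.1 then j else if i ∈ p.2 then j + 1 else j + 2) ?_ ?_ ?_ ?_
  · intro x hx
    have hx := (mem_filter.mp hx).2
    simp only [colorCount] at hx
    simp only [mem_coe, mem_sigma, mem_powersetCard, subset_univ, true_and]
    refine ⟨hx.1, ?_, hx.2⟩
    intro i hi
    simp only [mem_filter, mem_univ, true_and, mem_compl] at hi ⊢
    rw [hi]; exact h1
  · rintro ⟨S, T⟩ hp
    simp only [mem_coe, mem_sigma, mem_powersetCard, subset_univ, true_and] at hp
    refine mem_filter.mpr ⟨mem_univ _, ?_⟩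
    simp only [colorCount]
    obtain ⟨hS, hTS, hT⟩ := hp
    constructor
    · rw [← hS]; congr 1; ext i
      simp only [mem_filter, mem_univ, true_and]
      split_ifs <;> simp_all
    · rw [← hT]; congr 1; ext i
      have := @hTS i
      simp only [mem_filter, mem_univ, true_and, mem_compl] at this ⊢
      split_ifs <;> simp_all
  · intro x _
    funext i
    rcases h4 (x i) with h | h | h <;> simp [h, h1, h2, h3]
  · rintro ⟨S, T⟩ hp
    simp only [mem_coe, mem_sigma, mem_powersetCard, subset_univ, true_and] at hp
    obtain ⟨hS, hTS, hT⟩ := hp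
    have hA : (univ.filter fun i => (if i ∈ S then j else if i ∈ T then j + 1 else j + 2) = j)
        = S := by
      ext i
      simp only [mem_filter, mem_univ, true_and]
      split_ifs <;> simp_all
    have hB : (univ.filter fun i =>
        (if i ∈ S then j else if i ∈ T then j + 1 else j + 2) = j + 1) = T := by
      ext i
      have := @hTS i
      simp only [mem_filter, mem_univ, true_and, mem_compl] at this ⊢
      split_ifs <;> simp_all
    simp only [hA, hB]

lemma card_colorCount_zero (n k : ℕ) :
    (univ.filter fun x : Fin n → Fin 3 => colorCount n x 0 = k).card
      = n.choose k * 2 ^ (n - k) := by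
  have hmaps : ∀ x ∈ univ.filter fun x : Fin n → Fin 3 => colorCount n x 0 = k,
      colorCount n x 1 ∈ range (n - k + 1) := by
    intro x hx
    have h := colorCount_rot n x 0
    simp only [mem_filter, mem_univ, true_and] at hx
    simp only [zero_add] at h
    rw [mem_range]; omega
  rw [Finset.card_eq_sum_card_fiberwise hmaps, ← Nat.sum_range_choose, Finset.mul_sum]
  refine Finset.sum_congr rfl fun l _ => ?_
  rw [← card_typeClass n 0 k l, typeClass, Finset.filter_filter]
  simp

/-! ### The critical one-color profile -/

/-- The weight, up to the common factor `exp (-2 log 2)`, of the configurations having `k`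
vertices of a given color at `β = 4 log 2 / n`, when the two other colors are taken to be equally
frequent: `C(n,k) 2^(n-k) exp ((2 log 2 / n) (k² + (n-k)²/2))`. Written in this form, its
invariance under `k ↦ n - k` is visible. -/
noncomputable def profile (n k : ℕ) : ℝ :=
  n.choose k * Real.exp (Real.log 2 * (2 * n - 3 * k * (n - k) / n))

lemma profile_symm {n k : ℕ} (h : k ≤ n) : profile n (n - k) = profile n k := by
  unfold profile
  rw [Nat.choose_symm h, Nat.cast_sub h]
  congr 3
  ring

lemma profile_eq {n k : ℕ} (hn : 0 < n) (h : k ≤ n) :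
    profile n k = n.choose k * 2 ^ (n - k) *
      Real.exp (2 * Real.log 2 / n * ((k : ℝ) ^ 2 + ((n : ℝ) - k) ^ 2 / 2)) := by
  have h2 : (2 : ℝ) ^ (n - k) = Real.exp (Real.log 2 * ((n : ℝ) - k)) := by
    rw [← Nat.cast_sub h, mul_comm, Real.exp_nat_mul, Real.exp_log two_pos]
  have hn' : (n : ℝ) ≠ 0 := by positivity
  rw [h2, mul_assoc, ← Real.exp_add, profile]
  congr 2
  field_simp
  ring

/-- Every profile value left of (or at) the middle is dominated by one strictly right of it:
by the reflected one, or by its right neighbour if `k = n / 2`. -/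
lemma exists_profile_le {n k : ℕ} (hn : 0 < n) (hk : 2 * k ≤ n) :
    ∃ k', k' ≤ n ∧ n < 2 * k' ∧ profile n k ≤ 2 * profile n k' := by
  have hpos : ∀ m, 0 ≤ profile n m := fun m => by unfold profile; positivity
  rcases hk.lt_or_eq with h | h
  · refine ⟨n - k, by omega, by omega, ?_⟩
    rw [profile_symm (by omega)]
    linarith [hpos k]
  · subst h
    refine ⟨k + 1, by omega, by omega, ?_⟩
    have hc := Nat.choose_succ_right_eq (2 * k) k
    have hk1 : 1 ≤ k := by omega
    have hc' : (2 * k).choose k ≤ 2 * (2 * k).choose (k + 1) := by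
      have : 2 * k - k = k := by omega
      rw [this] at hc
      nlinarith
    have hc'' : ((2 * k).choose k : ℝ) ≤ 2 * ((2 * k).choose (k + 1) : ℝ) := by
      exact_mod_cast hc'
    have he : Real.exp (Real.log 2 * (2 * ((2 * k : ℕ) : ℝ)
          - 3 * k * (((2 * k : ℕ) : ℝ) - k) / ((2 * k : ℕ) : ℝ))) ≤
        Real.exp (Real.log 2 * (2 * ((2 * k : ℕ) : ℝ)
          - 3 * ((k + 1 : ℕ) : ℝ) * (((2 * k : ℕ) : ℝ) - ((k + 1 : ℕ) : ℝ)) /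
            ((2 * k : ℕ) : ℝ))) := by
      have hL : 0 ≤ Real.log 2 := Real.log_nonneg (by norm_num)
      gcongr Real.exp (Real.log 2 * (_ - ?_ / _))
      push_cast
      nlinarith
    unfold profile
    rw [← mul_assoc]
    exact mul_le_mul hc'' he (Real.exp_pos _).le (by positivity)

/-- Chernoff's bound for a single binomial coefficient, from `cosh t ≤ exp (t² / 2)`. -/
lemma choose_le_exp {m l : ℕ} (h : l ≤ m) :
    (m.choose l : ℝ) ≤ 2 ^ m * Real.exp (-((2 * (l : ℝ) - m) ^ 2 / (2 * m))) := by
  rcases Nat.eq_zero_or_pos m with rfl | hm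
  · simp_all
  have hm' : (m : ℝ) ≠ 0 := by positivity
  -- the optimal exponential tilt
  set t : ℝ := (2 * (l : ℝ) - m) / m with ht
  have hterm : Real.exp t ^ l * Real.exp (-t) ^ (m - l) * (m.choose l : ℝ)
      ≤ (Real.exp t + Real.exp (-t)) ^ m := by
    rw [add_pow]
    exact Finset.single_le_sum
      (f := fun i => Real.exp t ^ i * Real.exp (-t) ^ (m - i) * (m.choose i : ℝ))
      (fun i _ => by positivity) (by simpa using Nat.lt_succ_of_le h)
  have hcosh : (Real.exp t + Real.exp (-t)) ^ m ≤ 2 ^ m * Real.exp (m * (t ^ 2 / 2)) := by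
    have h1 : Real.exp t + Real.exp (-t) = 2 * Real.cosh t := by
      rw [Real.cosh_eq]; ring
    rw [h1, mul_pow, Real.exp_nat_mul]
    have := Real.cosh_le_exp_half_sq t
    have := Real.cosh_pos t
    gcongr
  have hprod : Real.exp t ^ l * Real.exp (-t) ^ (m - l) = Real.exp (t * (2 * l - m)) := by
    rw [← Real.exp_nat_mul, ← Real.exp_nat_mul, ← Real.exp_add, Nat.cast_sub h]
    congr 1; ring
  rw [hprod] at hterm
  have hfin := hterm.trans hcosh
  have hsplit : (2 : ℝ) ^ m * Real.exp (m * (t ^ 2 / 2)) = Real.exp (t * (2 * l - m)) *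
      (2 ^ m * Real.exp (-((2 * (l : ℝ) - m) ^ 2 / (2 * m)))) := by
    rw [mul_left_comm, ← Real.exp_add]
    congr 2
    rw [ht]; field_simp; ring
  rw [hsplit] at hfin
  exact le_of_mul_le_mul_left hfin (Real.exp_pos _)

/-- When one color has at least a third of the vertices, Chernoff's bound beats the gain in `H`
from splitting the remaining `n - k` vertices unevenly, because `(4/3) log 2 ≤ 1`. -/
lemma typeClass_weight_le {n k l : ℕ} (hn : 0 < n) (hk : n ≤ 3 * k) (hkl : k + l ≤ n) :
    (n.choose k * (n - k).choose l : ℝ) *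
      Real.exp (2 * Real.log 2 / n * ((k : ℝ) ^ 2 + (l : ℝ) ^ 2 + ((n : ℝ) - k - l) ^ 2))
      ≤ profile n k := by
  have hkn : k ≤ n := by omega
  have hch := choose_le_exp (m := n - k) (l := l) (by omega)
  rw [Nat.cast_sub hkn] at hch
  rw [profile_eq hn hkn]
  set d : ℝ := 2 * (l : ℝ) - ((n : ℝ) - k) with hd
  have hn' : (0 : ℝ) < n := by positivity
  have hkey : Real.log 2 / n * d ^ 2 ≤ d ^ 2 / (2 * ((n : ℝ) - k)) := by
    rcases hkn.eq_or_lt with h | h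
    · have hl : l = 0 := by omega
      have : d = 0 := by rw [hd, hl, h]; simp
      simp [this]
    · have hm : (0 : ℝ) < (n : ℝ) - k := by
        have : (k : ℝ) < n := by exact_mod_cast h
        linarith
      have hL : Real.log 2 / n ≤ 1 / (2 * ((n : ℝ) - k)) := by
        rw [div_le_div_iff₀ hn' (by positivity)]
        have h1 := Real.log_two_lt_d9
        have h2 : (n : ℝ) ≤ 3 * k := by exact_mod_cast hk
        nlinarith
      calc Real.log 2 / n * d ^ 2 ≤ 1 / (2 * ((n : ℝ) - k)) * d ^ 2 := by gcongr
        _ = _ := by ring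
  calc _ ≤ (n.choose k * (2 ^ (n - k) * Real.exp (-(d ^ 2 / (2 * ((n : ℝ) - k)))))) *
        Real.exp (2 * Real.log 2 / n *
          ((k : ℝ) ^ 2 + (l : ℝ) ^ 2 + ((n : ℝ) - k - l) ^ 2)) := by gcongr
    _ = n.choose k * 2 ^ (n - k) * Real.exp (-(d ^ 2 / (2 * ((n : ℝ) - k))) +
        2 * Real.log 2 / n * ((k : ℝ) ^ 2 + (l : ℝ) ^ 2 + ((n : ℝ) - k - l) ^ 2)) := by
      rw [Real.exp_add]; ring
    _ ≤ _ := by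
      gcongr
      have : 2 * Real.log 2 / n * ((k : ℝ) ^ 2 + (l : ℝ) ^ 2 + ((n : ℝ) - k - l) ^ 2)
        = 2 * Real.log 2 / n * ((k : ℝ) ^ 2 + ((n : ℝ) - k) ^ 2 / 2)
          + Real.log 2 / n * d ^ 2 := by rw [hd]; ring
      rw [this]; linarith

/-! ### Comparing the two phases -/

lemma boltzmann_eq {n : ℕ} (hn : 0 < n) (j : Fin 3) (x : Fin n → Fin 3) :
    Real.exp (4 * Real.log 2 / n * pottsH n x) = Real.exp (-(2 * Real.log 2)) *
      Real.exp (2 * Real.log 2 / n * ((colorCount n x j : ℝ) ^ 2 +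
        (colorCount n x (j + 1) : ℝ) ^ 2 +
        ((n : ℝ) - colorCount n x j - colorCount n x (j + 1)) ^ 2)) := by
  have h3 : ((n : ℝ) - colorCount n x j - colorCount n x (j + 1))
      = colorCount n x (j + 2) := by
    have h := colorCount_rot n x j
    have h' : (colorCount n x j : ℝ) + colorCount n x (j + 1) + colorCount n x (j + 2) = n := by
      exact_mod_cast h
    linarith
  have hH : (2 * pottsH n x + n : ℝ) = (colorCount n x j : ℝ) ^ 2 +
        (colorCount n x (j + 1) : ℝ) ^ 2 + (colorCount n x (j + 2) : ℝ) ^ 2 := by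
    have h := two_mul_pottsH n x
    rw [Fin.sum_univ_three] at h
    have h' : (2 * pottsH n x + n : ℝ) = (colorCount n x 0 : ℝ) ^ 2 +
        (colorCount n x 1 : ℝ) ^ 2 + (colorCount n x 2 : ℝ) ^ 2 := by exact_mod_cast h
    fin_cases j <;> simp <;> linarith
  have hn' : (n : ℝ) ≠ 0 := by positivity
  rw [h3, ← hH, ← Real.exp_add]
  congr 1
  field_simp
  ring

lemma profile_le_unbalanced {n k : ℕ} (hn : 0 < n) (hkn : k ≤ n) (hk : n < 2 * k) :
    Real.exp (-(2 * Real.log 2)) * profile n k ≤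
      ∑ x ∈ (balancedSet n)ᶜ, Real.exp (4 * Real.log 2 / n * pottsH n x) := by
  have hsub : (univ.filter fun x : Fin n → Fin 3 => colorCount n x 0 = k) ⊆
      (balancedSet n)ᶜ := by
    intro x hx
    simp only [balancedSet, mem_compl, mem_filter, mem_univ, true_and] at hx ⊢
    intro h
    have := h 0
    omega
  refine le_trans ?_ (Finset.sum_le_sum_of_subset_of_nonneg hsub
    fun x _ _ => (Real.exp_pos _).le)
  have hL : 0 ≤ Real.log 2 := Real.log_nonneg (by norm_num)
  have hlow : ∀ x ∈ univ.filter fun x : Fin n → Fin 3 => colorCount n x 0 = k,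
      Real.exp (-(2 * Real.log 2)) *
        Real.exp (2 * Real.log 2 / n * ((k : ℝ) ^ 2 + ((n : ℝ) - k) ^ 2 / 2)) ≤
      Real.exp (4 * Real.log 2 / n * pottsH n x) := by
    intro x hx
    simp only [mem_filter, mem_univ, true_and] at hx
    rw [boltzmann_eq hn 0, hx]
    refine mul_le_mul_of_nonneg_left (Real.exp_le_exp.mpr ?_) (Real.exp_pos _).le
    refine mul_le_mul_of_nonneg_left ?_ (by positivity)
    -- for a fixed sum `n - k`, the sum of two squares is least when they are equal
    nlinarith [sq_nonneg ((n : ℝ) - k - 2 * colorCount n x (0 + 1))]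
  have h := Finset.card_nsmul_le_sum _ _ _ hlow
  rw [card_colorCount_zero, nsmul_eq_mul] at h
  refine le_trans (le_of_eq ?_) h
  rw [profile_eq hn hkn]
  push_cast
  ring

lemma typeClass_le_unbalanced {n k l : ℕ} (hn : 0 < n) (j : Fin 3) (hk : n ≤ 3 * k)
    (hk2 : 2 * k ≤ n) :
    ∑ x ∈ typeClass n j k l, Real.exp (4 * Real.log 2 / n * pottsH n x) ≤
      2 * ∑ x ∈ (balancedSet n)ᶜ, Real.exp (4 * Real.log 2 / n * pottsH n x) := by
  by_cases hkl : k + l ≤ n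
  · obtain ⟨k', hk'n, hk', hle⟩ := exists_profile_le hn hk2
    have hup := typeClass_weight_le hn hk hkl
    have hlow := profile_le_unbalanced hn hk'n hk'
    have hsum : ∑ x ∈ typeClass n j k l, Real.exp (4 * Real.log 2 / n * pottsH n x) =
        Real.exp (-(2 * Real.log 2)) * ((n.choose k * (n - k).choose l : ℝ) *
          Real.exp (2 * Real.log 2 / n *
            ((k : ℝ) ^ 2 + (l : ℝ) ^ 2 + ((n : ℝ) - k - l) ^ 2))) := by
      rw [Finset.sum_congr rfl (g := fun _ => Real.exp (-(2 * Real.log 2)) *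
          Real.exp (2 * Real.log 2 / n *
            ((k : ℝ) ^ 2 + (l : ℝ) ^ 2 + ((n : ℝ) - k - l) ^ 2)))]
      · rw [Finset.sum_const, card_typeClass, nsmul_eq_mul]
        push_cast
        ring
      · intro x hx
        simp only [typeClass, mem_filter, mem_univ, true_and] at hx
        rw [boltzmann_eq hn j, hx.1, hx.2]
    rw [hsum]
    calc _ ≤ Real.exp (-(2 * Real.log 2)) * (2 * profile n k') := 
          mul_le_mul_of_nonneg_left (hup.trans hle) (Real.exp_pos _).le
      _ ≤ _ := by linarith
  · have hempty : typeClass n j k l = ∅ := by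
      rw [← Finset.card_eq_zero, card_typeClass, Nat.choose_eq_zero_of_lt (n := n - k) (by omega),
        mul_zero]
    rw [hempty, Finset.sum_empty]
    positivity

lemma sum_biUnion_le_sum {ι α : Type*} [DecidableEq α] (s : Finset ι) (t : ι → Finset α)
    {f : α → ℝ} (hf : ∀ a, 0 ≤ f a) :
    ∑ a ∈ s.biUnion t, f a ≤ ∑ i ∈ s, ∑ a ∈ t i, f a := by
  classical
  induction s using Finset.induction_on with
  | empty => simp
  | insert i s hi ih =>
    rw [Finset.biUnion_insert, Finset.sum_insert hi]
    have h := Finset.sum_union_inter (s₁ := t i) (s₂ := s.biUnion t) (f := f)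
    have h' : 0 ≤ ∑ a ∈ t i ∩ s.biUnion t, f a := Finset.sum_nonneg fun a _ => hf a
    linarith

/-- The balanced configurations lie in at most `3 (n + 1)²` type classes, indexed by a color
with at least a third of the vertices, its count, and the count of the next color. -/
lemma balanced_le_unbalanced {n : ℕ} (hn : 0 < n) :
    ∑ x ∈ balancedSet n, Real.exp (4 * Real.log 2 / n * pottsH n x) ≤
      6 * ((n : ℝ) + 1) ^ 2 *
        ∑ x ∈ (balancedSet n)ᶜ, Real.exp (4 * Real.log 2 / n * pottsH n x) := by
  set I : Finset (Fin 3 × ℕ × ℕ) :=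
    (univ ×ˢ range (n + 1) ×ˢ range (n + 1)).filter fun q => n ≤ 3 * q.2.1 ∧ 2 * q.2.1 ≤ n
    with hI
  set U := ∑ x ∈ (balancedSet n)ᶜ, Real.exp (4 * Real.log 2 / n * pottsH n x) with hU
  have hU0 : 0 ≤ U := by positivity
  have hsub : balancedSet n ⊆ I.biUnion fun q => typeClass n q.1 q.2.1 q.2.2 := by
    intro x hx
    simp only [balancedSet, mem_filter, mem_univ, true_and] at hx
    have hmax : ∃ j, n ≤ 3 * colorCount n x j := by
      by_contra! h
      have h0 := colorCount_rot n x 0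
      have := h 0
      have := h (0 + 1)
      have := h (0 + 2)
      omega
    obtain ⟨j, hj⟩ := hmax
    have hr := colorCount_rot n x j
    rw [mem_biUnion]
    refine ⟨(j, colorCount n x j, colorCount n x (j + 1)), ?_, by simp [typeClass]⟩
    simp only [hI, mem_filter, mem_product, mem_univ, mem_range, true_and]
    exact ⟨⟨by omega, by omega⟩, hj, hx j⟩
  have hIcard : (I.card : ℝ) ≤ 3 * ((n : ℝ) + 1) ^ 2 := by
    have h := Finset.card_filter_le (univ ×ˢ range (n + 1) ×ˢ range (n + 1))
      fun q : Fin 3 × ℕ × ℕ => n ≤ 3 * q.2.1 ∧ 2 * q.2.1 ≤ n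
    rw [card_product, card_product, card_range, card_univ, Fintype.card_fin] at h
    calc (I.card : ℝ) ≤ ((3 * ((n + 1) * (n + 1)) : ℕ) : ℝ) := by exact_mod_cast h
      _ = _ := by push_cast; ring
  calc _ ≤ ∑ x ∈ I.biUnion fun q => typeClass n q.1 q.2.1 q.2.2,
        Real.exp (4 * Real.log 2 / n * pottsH n x) :=
        Finset.sum_le_sum_of_subset_of_nonneg hsub fun x _ _ => (Real.exp_pos _).le
    _ ≤ ∑ q ∈ I, ∑ x ∈ typeClass n q.1 q.2.1 q.2.2,
        Real.exp (4 * Real.log 2 / n * pottsH n x) := 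
        sum_biUnion_le_sum I _ fun x => (Real.exp_pos _).le
    _ ≤ ∑ q ∈ I, 2 * U := by
        refine Finset.sum_le_sum fun q hq => ?_
        simp only [hI, mem_filter] at hq
        exact typeClass_le_unbalanced hn q.1 hq.2.1 hq.2.2
    _ = I.card * (2 * U) := by rw [Finset.sum_const, nsmul_eq_mul]
    _ ≤ (3 * ((n : ℝ) + 1) ^ 2) * (2 * U) := by gcongr
    _ = _ := by ring

lemma pottsGibbs_nonneg (n : ℕ) (β : ℝ) (x : Fin n → Fin 3) : 0 ≤ pottsGibbs n β x := by
  unfold pottsGibbs; positivity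

lemma gibbs_add_compl (n : ℕ) (β : ℝ) (S : Finset (Fin n → Fin 3)) :
    ∑ x ∈ S, pottsGibbs n β x + ∑ x ∈ Sᶜ, pottsGibbs n β x = 1 := by
  rw [Finset.sum_add_sum_compl]
  unfold pottsGibbs
  rw [← Finset.sum_div, div_self]
  exact ne_of_gt (Finset.sum_pos (fun _ _ => Real.exp_pos _) univ_nonempty)

/-- There are `c > 0` and `N` such that for all `n ≥ N` divisible by 6,
every `M ≥ 0` and every nondecreasing sequence of inverse temperatures
`0 ≤ β₀ ≤ ⋯ ≤ β_M = 4·ln 2/n`,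
`Σ_i π_{β_i}(A) ≤ c·n²·(M+1)·Σ_i π_{β_i}(Ω∖A)` where `A` is the set of configurations
whose three color counts are all at most `n/2`. -/
theorem potts_boundary_mass_bound :
    ∃ c : ℝ, 0 < c ∧ ∃ N : ℕ, ∀ n : ℕ, N ≤ n → 6 ∣ n →
      ∀ M : ℕ, ∀ β : Fin (M+1) → ℝ,
        0 ≤ β 0 → Monotone β → β (Fin.last M) = 4 * Real.log 2 / n →
          (∑ i : Fin (M+1), ∑ x ∈ balancedSet n, pottsGibbs n (β i) x) ≤
            c * n ^ 2 * (M + 1) *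
              ∑ i : Fin (M+1), ∑ x ∈ (balancedSet n)ᶜ, pottsGibbs n (β i) x := by
  refine ⟨25, by norm_num, 1, fun n hn _ M β _ _ hβ => ?_⟩
  have hn0 : 0 < n := hn
  have hn1 : (1 : ℝ) ≤ n := by exact_mod_cast hn
  have hA : ∑ i : Fin (M+1), ∑ x ∈ balancedSet n, pottsGibbs n (β i) x ≤ M + 1 := by
    calc _ ≤ ∑ i : Fin (M+1), (1 : ℝ) := by
          refine Finset.sum_le_sum fun i _ => ?_
          have h1 := gibbs_add_compl n (β i) (balancedSet n)
          have h2 : 0 ≤ ∑ x ∈ (balancedSet n)ᶜ, pottsGibbs n (β i) x :=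
            Finset.sum_nonneg fun x _ => pottsGibbs_nonneg n _ x
          linarith
      _ = _ := by simp
  have hB : ∑ x ∈ (balancedSet n)ᶜ, pottsGibbs n (β (Fin.last M)) x ≤
      ∑ i : Fin (M+1), ∑ x ∈ (balancedSet n)ᶜ, pottsGibbs n (β i) x :=
    Finset.single_le_sum (f := fun i => ∑ x ∈ (balancedSet n)ᶜ, pottsGibbs n (β i) x)
      (fun i _ => Finset.sum_nonneg fun x _ => pottsGibbs_nonneg n _ x) (mem_univ _)
  have hC : 1 ≤ 25 * (n : ℝ) ^ 2 *
      ∑ x ∈ (balancedSet n)ᶜ, pottsGibbs n (β (Fin.last M)) x := by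
    have h1 := gibbs_add_compl n (β (Fin.last M)) (balancedSet n)
    have h2 : ∑ x ∈ balancedSet n, pottsGibbs n (β (Fin.last M)) x ≤
        6 * ((n : ℝ) + 1) ^ 2 *
          ∑ x ∈ (balancedSet n)ᶜ, pottsGibbs n (β (Fin.last M)) x := by
      rw [hβ]
      unfold pottsGibbs
      rw [← Finset.sum_div, ← Finset.sum_div, ← mul_div_assoc]
      gcongr
      exact balanced_le_unbalanced hn0
    have h3 : 0 ≤ ∑ x ∈ (balancedSet n)ᶜ, pottsGibbs n (β (Fin.last M)) x :=
      Finset.sum_nonneg fun x _ => pottsGibbs_nonneg n _ x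
    have h4 : 1 + 6 * ((n : ℝ) + 1) ^ 2 ≤ 25 * (n : ℝ) ^ 2 := by nlinarith
    nlinarith [mul_le_mul_of_nonneg_right h4 h3]
  calc _ ≤ ((M : ℝ) + 1) := hA
    _ ≤ ((M : ℝ) + 1) * (25 * (n : ℝ) ^ 2 *
      ∑ x ∈ (balancedSet n)ᶜ, pottsGibbs n (β (Fin.last M)) x) :=
        le_mul_of_one_le_right (by positivity) hC
    _ ≤ ((M : ℝ) + 1) * (25 * (n : ℝ) ^ 2 *
      ∑ i : Fin (M+1), ∑ x ∈ (balancedSet n)ᶜ, pottsGibbs n (β i) x) := by gcongr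
    _ = _ := by ring
end

section
/- There exist a constant c > 0 and N ∈ ℕ such that for all n ≥ N divisible by 12, with β_c = 4·ln 2/n, the weight ratio satisfies w_{β_c}(n/2, n/4, n/4) ≤ e^{−c n} · w_{β_c}(n/3, n/3, n/3). -/
/-!
Write `n = 12 m`. The exponential factors contribute `2 ^ m` to the ratio of the two weights, so the
ratio is `R m = (4m)!³ · 2 ^ m / ((6m)! · (3m)!²)`. The quotient `R (m+1) / R m` is a rational
function of `m` that tends to `2¹⁹ / 3¹² = 524288 / 531441 < 99 / 100` and stays below `99 / 100`
for all `m ≥ 1` (`potts_step_le`). Induction from `R 1 = 16 / 15` gives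
`R m ≤ (27 / 25) · (99 / 100) ^ m` (`potts_factorial_bound`), and the constant `27 / 25` is absorbed
by giving up half of the exponential rate once `m ≥ 16`.
-/

noncomputable section

/-- Mean-field 3-state Potts weight of a class of configurations with color counts
`σ = (σ₁, σ₂, σ₃)` at inverse temperature `β`:
`w_β(σ) = (n!/(σ₁!·σ₂!·σ₃!))·exp((β/2)(σ₁²+σ₂²+σ₃²))`. -/
noncomputable def pottsWeight (n : ℕ) (β : ℝ) (σ : ℕ × ℕ × ℕ) : ℝ :=
  ((n.factorial : ℝ) /
      ((σ.1.factorial : ℝ) * (σ.2.1.factorial : ℝ) * (σ.2.2.factorial : ℝ))) *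
    Real.exp ((β / 2) * ((σ.1 : ℝ) ^ 2 + (σ.2.1 : ℝ) ^ 2 + (σ.2.2 : ℝ) ^ 2))

end

/-- One step of the induction: `R (m+1) / R m ≤ 99 / 100` for `m ≥ 1`, with denominators cleared. -/
lemma potts_step_le (x : ℝ) (hx : 1 ≤ x) :
    ((4 * x + 1) * (4 * x + 2) * (4 * x + 3) * (4 * x + 4)) ^ 3 * 2 ≤
      99 / 100 * (((6 * x + 1) * (6 * x + 2) * (6 * x + 3) * (6 * x + 4) * (6 * x + 5)
        * (6 * x + 6)) * ((3 * x + 1) * (3 * x + 2) * (3 * x + 3)) ^ 2) := by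
  -- After shifting by `1`, the difference is a polynomial with nonnegative coefficients.
  obtain ⟨y, rfl⟩ : ∃ y, x = y + 1 := ⟨x - 1, by ring⟩
  have hy : 0 ≤ y := by linarith
  rw [← sub_nonneg]
  ring_nf
  positivity

lemma potts_factorial_bound (m : ℕ) (hm : 1 ≤ m) :
    ((4 * m).factorial : ℝ) ^ 3 * 2 ^ m ≤
      27 / 25 * (99 / 100) ^ m * (((6 * m).factorial : ℝ) * ((3 * m).factorial : ℝ) ^ 2) := by
  induction m, hm using Nat.le_induction with
  | base => norm_num [Nat.factorial]
  | succ m hm ih =>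
    have hx : (1 : ℝ) ≤ m := by exact_mod_cast hm
    have key := mul_le_mul ih (potts_step_le m hx) (by positivity) (by positivity)
    have e4 : 4 * (m + 1) = 4 * m + 1 + 1 + 1 + 1 := by ring
    have e6 : 6 * (m + 1) = 6 * m + 1 + 1 + 1 + 1 + 1 + 1 := by ring
    have e3 : 3 * (m + 1) = 3 * m + 1 + 1 + 1 := by ring
    rw [e4, e6, e3]
    simp only [Nat.factorial_succ]
    push_cast
    refine (le_of_eq ?_).trans (key.trans (le_of_eq ?_)) <;> ring

/-- there are `c > 0` and `N` such that for all `n ≥ N` divisible by 12,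
with `β_c = 4·ln 2/n`, `w_{β_c}(n/2, n/4, n/4) ≤ e^(−c n)·w_{β_c}(n/3, n/3, n/3)`. -/
theorem potts_saddle_exponentially_small :
    ∃ c : ℝ, 0 < c ∧ ∃ N : ℕ, ∀ n : ℕ, N ≤ n → 12 ∣ n →
      pottsWeight n (4 * Real.log 2 / n) (n / 2, n / 4, n / 4) ≤
        Real.exp (-(c * n)) * pottsWeight n (4 * Real.log 2 / n) (n / 3, n / 3, n / 3) := by
  refine ⟨1 / 2400, by norm_num, 192, ?_⟩
  rintro n hn ⟨m, rfl⟩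
  have hm : 16 ≤ m := by omega
  have hmR : (16 : ℝ) ≤ m := by exact_mod_cast hm
  have hm0 : (m : ℝ) ≠ 0 := by positivity
  have h2 : 12 * m / 2 = 6 * m := by omega
  have h4 : 12 * m / 4 = 3 * m := by omega
  have h3 : 12 * m / 3 = 4 * m := by omega
  simp only [pottsWeight, h2, h3, h4]
  -- The exponents are `9 m log 2` and `8 m log 2`, which differ by the factor `2 ^ m`.
  have hexp : Real.exp (4 * Real.log 2 / ((12 * m : ℕ) : ℝ) / 2 *
        (((6 * m : ℕ) : ℝ) ^ 2 + ((3 * m : ℕ) : ℝ) ^ 2 + ((3 * m : ℕ) : ℝ) ^ 2)) =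
      2 ^ m * Real.exp (4 * Real.log 2 / ((12 * m : ℕ) : ℝ) / 2 *
        (((4 * m : ℕ) : ℝ) ^ 2 + ((4 * m : ℕ) : ℝ) ^ 2 + ((4 * m : ℕ) : ℝ) ^ 2)) := by
    have h2m : (2 : ℝ) ^ m = Real.exp (m * Real.log 2) := by
      rw [Real.exp_nat_mul, Real.exp_log (by norm_num)]
    rw [h2m, ← Real.exp_add]
    congr 1
    push_cast
    field_simp
    ring
  rw [hexp]
  have hrate : (27 / 25 : ℝ) * (99 / 100) ^ m ≤
      Real.exp (-(1 / 2400 * ((12 * m : ℕ) : ℝ))) := by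
    have h1 : (99 / 100 : ℝ) ^ m ≤ Real.exp (-(m / 100)) := by
      have h : (99 / 100 : ℝ) ≤ Real.exp (-(1 / 100)) := by
        linarith [Real.add_one_le_exp (-(1 / 100) : ℝ)]
      calc (99 / 100 : ℝ) ^ m ≤ Real.exp (-(1 / 100)) ^ m := by gcongr
        _ = Real.exp (-(m / 100)) := by rw [← Real.exp_nat_mul]; congr 1; ring
    have h5 : (27 / 25 : ℝ) ≤ Real.exp (m / 200) := by
      linarith [Real.add_one_le_exp (m / 200 : ℝ)]
    calc (27 / 25 : ℝ) * (99 / 100) ^ m ≤ Real.exp (m / 200) * Real.exp (-(m / 100)) := by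
          gcongr
      _ = Real.exp (-(1 / 2400 * ((12 * m : ℕ) : ℝ))) := by
          rw [← Real.exp_add]; congr 1; push_cast; ring
  have hfac : ((4 * m).factorial : ℝ) ^ 3 * 2 ^ m ≤
      Real.exp (-(1 / 2400 * ((12 * m : ℕ) : ℝ))) *
        (((6 * m).factorial : ℝ) * ((3 * m).factorial : ℝ) ^ 2) :=
    (potts_factorial_bound m (by omega)).trans (by gcongr)
  rw [← mul_assoc, ← mul_assoc]
  refine mul_le_mul_of_nonneg_right ?_ (Real.exp_pos _).le
  have p3 : (0 : ℝ) < (3 * m).factorial := by positivity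
  have p4 : (0 : ℝ) < (4 * m).factorial := by positivity
  have p6 : (0 : ℝ) < (6 * m).factorial := by positivity
  rw [div_mul_eq_mul_div, ← mul_div_assoc, div_le_div_iff₀ (by positivity) (by positivity)]
  have := mul_le_mul_of_nonneg_left hfac (Nat.cast_nonneg (α := ℝ) (12 * m).factorial)
  refine (le_of_eq ?_).trans (this.trans (le_of_eq ?_)) <;> ring
end
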